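/- arXiv:2404.08502 — 7 statements merged into one kernel-verified Lean document; each statement's English description precedes it below -/
import Mathlib

section
/- Let Q₁, Q₂ be squarefree positive integers, Q₀ = gcd(Q₁,Q₂), and let χ₁, ψ₁ be Dirichlet characters to moduli dividing Q₁ and χ₂, ψ₂ Dirichlet characters to moduli dividing Q₂. For (a,b;c,d) ∈ SL₂(ℤ) set α((a,b;c,d)) = χ₁(a)ψ₁(b)χ₂(c)ψ₂(d), and for σ ∈ SL₂(ℤ) put w(σ) = Σ_{τ} α(τσ)·conj(α(τ)) where τ runs over a complete set of representatives of Γ₂(Q₁,Q₂)\SL₂(ℤ) (the summand α(τσ)·conj(α(τ)) depends only on the coset Γ₂(Q₁,Q₂)τ, so w(σ) is well defined). Then for every ε > 0 there is a constant c(ε) > 0 such that for all C, B ≥ 1: Σ_{0 < |c| ≤ C} |w((±1,0;c,±1))| ≤ c(ε) · C · (Q₁Q₂)^{1+ε} · Π over primes p ∣ Q_j with p ∤ Q₀ of cond(χ_j;p)⁻¹ · Π over primes p ∣ Q₀ of (max_j cond(χ_j;p))⁻¹, and Σ_{0 < |b| ≤ B} |w((±1,b;0,±1))| ≤ c(ε)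 · B · (Q₁Q₂)^{1+ε} · Π over primes p ∣ Q_j with p ∤ Q₀ of cond(ψ_j;p)⁻¹ · Π over primes p ∣ Q₀ of (max_j cond(ψ_j;p))⁻¹. -/
open scoped BigOperators

/-- Membership in `Γ₂(q₁,q₂)`: an integer matrix of determinant one with
`q₁ ∣ b` and `q₂ ∣ c`. -/
def InGamma2 (q₁ q₂ : ℕ) (γ : Matrix (Fin 2) (Fin 2) ℤ) : Prop :=
  γ.det = 1 ∧ (q₁ : ℤ) ∣ γ 0 1 ∧ (q₂ : ℤ) ∣ γ 1 0

/-- Local conductor `cond(χ;p)`: the largest power of `p` dividing the conductor of `χ`. -/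
noncomputable def localCond {m : ℕ} (χ : DirichletCharacter ℂ m) (p : ℕ) : ℕ :=
  p ^ ((DirichletCharacter.conductor χ).factorization p)

/-!
By strong approximation a coset in `Γ₂(Q₁,Q₂)\SL₂(ℤ)` is an independent choice, for every prime
`p ∣ Q₁Q₂`, of a point of `ℙ¹(𝔽_p)` for each row `i` with `p ∣ Q_i`, subject only to the two points
being distinct when `p` divides both. Hence `w(σ)` is a product over `p` of local sums. Without the
distinctness condition, the local sum is a product of two sums over `ℙ¹(𝔽_p)`, one per row. Each is
trivially `O(p)`, but for `σ = (a,0;c,d)` it is a correlation of two shifts of `χ_i`, and so `O(1)`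
when `p` divides the conductor of `χ_i` but not `c`. The excluded diagonal contributes only `O(p)`.
Together, with implied constants collected in `6 ^ ω(Q₁Q₂)`, this gives
`|w(σ)| ≤ 6 ^ ω(Q₁Q₂) * Q₁Q₂ * gcd(c, rad(Q₁Q₂)) * ∏ p, (max_i cond(χ_i;p))⁻¹`.
On average over `c` the gcd is at most the number `2 ^ ω(Q₁Q₂)` of divisors of `rad(Q₁Q₂)`, up to a
factor `2`, and `12 ^ ω(N) ≪ N ^ ε`. The matrices `(a,b;0,d)` are treated in the same way, with
`ψ_i` in place of `χ_i`.
-/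

open scoped Matrix ComplexConjugate
open UniqueFactorizationMonoid

section FiniteFieldCharacter

variable {K : Type*} [Field K]

lemma norm_monoidHom_eq_one [Finite K] (χ : K →* ℂ) {x : K} (hx : x ≠ 0) : ‖χ x‖ = 1 := by
  have := Fintype.ofFinite K
  refine Complex.norm_eq_one_of_pow_eq_one (n := Fintype.card K - 1) ?_
    (Nat.sub_pos_of_lt Fintype.one_lt_card).ne'
  rw [← map_pow, FiniteField.pow_card_sub_one_eq_one x hx, map_one]

lemma norm_monoidHom_le_one [Finite K] (χ : K →* ℂ) (x : K) : ‖χ x‖ ≤ 1 := by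
  rcases eq_or_ne x 0 with rfl | hx
  · have idem : ‖χ 0‖ * ‖χ 0‖ = ‖χ 0‖ := by rw [← norm_mul, ← map_mul, mul_zero]
    nlinarith [norm_nonneg (χ 0), sq_nonneg (‖χ 0‖ - 1)]
  · exact (norm_monoidHom_eq_one χ hx).le

lemma monoidHom_mul_conj [Finite K] (χ : K →* ℂ) {x : K} (hx : x ≠ 0) : χ x * conj (χ x) = 1 := by
  rw [Complex.mul_conj, Complex.normSq_eq_norm_sq, norm_monoidHom_eq_one χ hx]
  norm_num

lemma conj_monoidHom [Finite K] (χ : K →* ℂ) {x : K} (hx : x ≠ 0) : conj (χ x) = χ x⁻¹ := by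
  refine mul_left_cancel₀ (norm_ne_zero_iff.mp (norm_monoidHom_eq_one χ hx ▸ one_ne_zero)) ?_
  rw [monoidHom_mul_conj χ hx, ← map_mul, mul_inv_cancel₀ hx, map_one]

lemma monoidHom_zero_of_ne_one {χ : K →* ℂ} {u : K} (hu : χ u ≠ 1) : χ 0 = 0 := by
  have h : (χ u - 1) * χ 0 = 0 := by rw [sub_mul, ← map_mul, mul_zero, one_mul, sub_self]
  exact (mul_eq_zero.mp h).resolve_left (sub_ne_zero.mpr hu)

lemma sum_monoidHom_eq_zero [Fintype K] {χ : K →* ℂ} {u : K} (hu₀ : u ≠ 0) (hu : χ u ≠ 1) :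
    ∑ x, χ x = 0 := by
  have shift : χ u * ∑ x, χ x = ∑ x, χ x := by
    simp only [Finset.mul_sum, ← map_mul]
    exact Equiv.sum_comp (Equiv.mulLeft₀ u hu₀) χ
  have h : (χ u - 1) * ∑ x, χ x = 0 := by rw [sub_mul, one_mul, shift, sub_self]
  exact (mul_eq_zero.mp h).resolve_left (sub_ne_zero.mpr hu)

-- For `t ≠ 0` the summand is `χ (a + c * t⁻¹)`, and `a + c * t⁻¹` takes every value but `a`.
lemma sum_monoidHom_affine_mul_conj [Fintype K] {χ : K →* ℂ} {u : K} (hu₀ : u ≠ 0) (hu : χ u ≠ 1)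
    (a : K) {c : K} (hc : c ≠ 0) : ∑ t, χ (t * a + c) * conj (χ t) = -χ a := by
  classical
  have hχ₀ : χ 0 = 0 := monoidHom_zero_of_ne_one hu
  have summand (t : K) :
      χ (t * a + c) * conj (χ t) = χ (a + c * t⁻¹) - if t = 0 then χ a else 0 := by
    rcases eq_or_ne t 0 with rfl | ht
    · simp [hχ₀]
    · rw [conj_monoidHom χ ht, ← map_mul, if_neg ht, sub_zero]
      congr 1
      field_simp
  have reindex : ∑ t, χ (a + c * t⁻¹) = ∑ x, χ x :=
    Equiv.sum_comp (((Equiv.inv K).trans (Equiv.mulLeft₀ c hc)).trans (Equiv.addLeft a)) χ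
  rw [Finset.sum_congr rfl fun t _ ↦ summand t, Finset.sum_sub_distrib, reindex,
    sum_monoidHom_eq_zero hu₀ hu, Finset.sum_ite_eq' Finset.univ (0 : K), zero_sub]
  simp

lemma norm_sum_monoidHom_affine_le_one [Fintype K] {χ : K →* ℂ} {u : K} (hu₀ : u ≠ 0)
    (hu : χ u ≠ 1) (a : K) {c : K} (hc : c ≠ 0) : ‖∑ t, χ (t * a + c) * conj (χ t)‖ ≤ 1 := by
  rw [sum_monoidHom_affine_mul_conj hu₀ hu a hc, norm_neg]
  exact norm_monoidHom_le_one χ a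

end FiniteFieldCharacter

section ProjectiveLine

variable {K : Type*} [Field K]

open scoped Classical in
/-- The point `[v 0 : v 1]` of the projective line `ℙ¹(K)`, encoded as `OnePoint K` through the
affine coordinate `v 0 / v 1`. The value at `v = 0` is junk. -/
noncomputable def projPoint (v : Fin 2 → K) : OnePoint K :=
  if v 1 = 0 then OnePoint.infty else ↑(v 0 / v 1)

/-- The normalised homogeneous coordinates `[1 : 0]` or `[t : 1]` of a point of `ℙ¹(K)`. -/
def homogCoords (x : OnePoint K) : Fin 2 → K :=
  x.elim ![1, 0] fun t ↦ ![t, 1]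

lemma homogCoords_ne_zero (x : OnePoint K) : homogCoords x ≠ 0 := by
  induction x using OnePoint.rec with
  | infty => exact fun h ↦ one_ne_zero (congrFun h 0)
  | coe t => exact fun h ↦ one_ne_zero (congrFun h 1)

lemma projPoint_homogCoords (x : OnePoint K) : projPoint (homogCoords x) = x := by
  induction x using OnePoint.rec with
  | infty => simp [projPoint, homogCoords]
  | coe t => simp [projPoint, homogCoords]

lemma exists_smul_homogCoords_projPoint {v : Fin 2 → K} (hv : v ≠ 0) :
    ∃ t : K, t ≠ 0 ∧ v = t • homogCoords (projPoint v) := by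
  by_cases h₁ : v 1 = 0
  · have h₀ : v 0 ≠ 0 := fun h₀ ↦ hv (funext (Fin.forall_fin_two.mpr ⟨h₀, h₁⟩))
    exact ⟨v 0, h₀, funext (Fin.forall_fin_two.mpr (by simp [projPoint, homogCoords, h₁]))⟩
  · exact ⟨v 1, h₁, funext (Fin.forall_fin_two.mpr
      (by simp [projPoint, homogCoords, h₁, mul_div_cancel₀]))⟩

lemma projPoint_eq_iff {v w : Fin 2 → K} (hv : v ≠ 0) (hw : w ≠ 0) :
    projPoint v = projPoint w ↔ v 0 * w 1 = v 1 * w 0 := by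
  have zeroth_ne {u : Fin 2 → K} (hu : u ≠ 0) (h₁ : u 1 = 0) : u 0 ≠ 0 :=
    fun h₀ ↦ hu (funext (Fin.forall_fin_two.mpr ⟨h₀, h₁⟩))
  by_cases hv₁ : v 1 = 0 <;> by_cases hw₁ : w 1 = 0
  · simp [projPoint, hv₁, hw₁]
  · simp [projPoint, hv₁, hw₁, zeroth_ne hv hv₁]
  · simp [projPoint, hv₁, hw₁, zeroth_ne hw hw₁]
  · simp [projPoint, hv₁, hw₁, div_eq_div_iff, mul_comm (w 0)]

/-- Functions of homogeneous coordinates of degree zero, i.e. functions on `ℙ¹(K)`. -/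
def IsScaleInvariant {X : Type*} (F : (Fin 2 → K) → X) : Prop :=
  ∀ t : K, t ≠ 0 → ∀ v, F (t • v) = F v

lemma IsScaleInvariant.apply_homogCoords {X : Type*} {F : (Fin 2 → K) → X}
    (hF : IsScaleInvariant F) {v : Fin 2 → K} (hv : v ≠ 0) :
    F (homogCoords (projPoint v)) = F v := by
  obtain ⟨t, ht, hvt⟩ := exists_smul_homogCoords_projPoint hv
  conv_rhs => rw [hvt, hF t ht]

lemma projPoint_isScaleInvariant : IsScaleInvariant (projPoint (K := K)) := by
  intro t ht v
  by_cases hv : v 1 = 0 <;> simp [projPoint, ht, hv, mul_div_mul_left]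

lemma sum_homogCoords [Fintype K] {X : Type*} [AddCommMonoid X] (F : (Fin 2 → K) → X) :
    ∑ x, F (homogCoords x) = F ![1, 0] + ∑ t, F ![t, 1] :=
  Fintype.sum_option (fun x : OnePoint K ↦ F (homogCoords x))

lemma IsScaleInvariant.sum_homogCoords [Fintype K] {X : Type*} [AddCommMonoid X]
    {F : (Fin 2 → K) → X} (hF : IsScaleInvariant F) :
    ∑ x, F (homogCoords x) = F ![0, 1] + ∑ t, F ![1, t] := by
  classical
  have invert : ∀ t ∈ Finset.univ.erase (0 : K), F ![t, 1] = F ![1, t⁻¹] := by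
    intro t ht
    have ht₀ : t ≠ 0 := Finset.ne_of_mem_erase ht
    rw [← hF t⁻¹ (inv_ne_zero ht₀)]
    simp [ht₀]
  have reindex : ∑ t ∈ Finset.univ.erase (0 : K), F ![1, t⁻¹]
      = ∑ t ∈ Finset.univ.erase (0 : K), F ![1, t] :=
    Finset.sum_nbij' (·⁻¹) (·⁻¹) (by simp) (by simp) (by simp) (by simp) (by simp)
  rw [_root_.sum_homogCoords, ← Finset.add_sum_erase _ _ (Finset.mem_univ (0 : K)),
    Finset.sum_congr rfl invert, reindex,
    ← Finset.add_sum_erase _ (fun t ↦ F ![1, t]) (Finset.mem_univ (0 : K)), add_left_comm]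

end ProjectiveLine

section Correlation

/-- The summand of `w(σ)` contributed by one row `v` of `τ`, when `χ` and `ψ` are evaluated at the
two entries of that row. -/
noncomputable def correlation {R : Type*} [CommRing R] (χ ψ : R →* ℂ)
    (σ : Matrix (Fin 2) (Fin 2) R) (v : Fin 2 → R) : ℂ :=
  χ ((v ᵥ* σ) 0) * ψ ((v ᵥ* σ) 1) * conj (χ (v 0) * ψ (v 1))

variable {K : Type*} [Field K] (χ ψ : K →* ℂ)

lemma correlation_isScaleInvariant [Finite K] (σ : Matrix (Fin 2) (Fin 2) K) :
    IsScaleInvariant (correlation χ ψ σ) := by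
  intro t ht v
  have regroup : correlation χ ψ σ (t • v)
      = (χ t * conj (χ t)) * (ψ t * conj (ψ t)) * correlation χ ψ σ v := by
    simp only [correlation, Matrix.smul_vecMul, Pi.smul_apply, smul_eq_mul, map_mul]
    ring
  rw [regroup, monoidHom_mul_conj χ ht, monoidHom_mul_conj ψ ht, one_mul, one_mul]

lemma norm_correlation_le_one [Finite K] (σ : Matrix (Fin 2) (Fin 2) K) (v : Fin 2 → K) :
    ‖correlation χ ψ σ v‖ ≤ 1 := by
  simp only [correlation, norm_mul, RCLike.norm_conj]
  refine mul_le_one₀ (mul_le_one₀ ?_ ?_ ?_) ?_ (mul_le_one₀ ?_ ?_ ?_) <;>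
    first
    | positivity
    | exact norm_monoidHom_le_one _ _

lemma norm_sum_correlation_lower_le [Fintype K] {u : K} (hu₀ : u ≠ 0) (hu : χ u ≠ 1) (a d : K)
    {c : K} (hc : c ≠ 0) : ‖∑ x, correlation χ ψ !![a, 0; c, d] (homogCoords x)‖ ≤ 2 := by
  set F := correlation χ ψ !![a, 0; c, d]
  have affine (t : K) : F ![t, 1] = ψ d * (χ (t * a + c) * conj (χ t)) := by
    calc F ![t, 1] = χ (t * a + c) * ψ d * conj (χ t) := by simp [F, correlation]
      _ = ψ d * (χ (t * a + c) * conj (χ t)) := by ring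
  calc ‖∑ x, F (homogCoords x)‖
      ≤ ‖F ![1, 0]‖ + ‖∑ t, F ![t, 1]‖ := sum_homogCoords F ▸ norm_add_le _ _
    _ ≤ 1 + 1 * 1 := by
        gcongr
        · exact norm_correlation_le_one χ ψ _ _
        · simp only [affine, ← Finset.mul_sum, norm_mul]
          gcongr
          · exact norm_monoidHom_le_one ψ d
          · exact norm_sum_monoidHom_affine_le_one hu₀ hu a hc
    _ = 2 := by norm_num

lemma norm_sum_correlation_upper_le [Fintype K] {u : K} (hu₀ : u ≠ 0) (hu : ψ u ≠ 1) (a d : K)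
    {b : K} (hb : b ≠ 0) : ‖∑ x, correlation χ ψ !![a, b; 0, d] (homogCoords x)‖ ≤ 2 := by
  set F := correlation χ ψ !![a, b; 0, d]
  have hF_inv : IsScaleInvariant F := correlation_isScaleInvariant χ ψ _
  have affine (t : K) : F ![1, t] = χ a * (ψ (t * d + b) * conj (ψ t)) := by
    calc F ![1, t] = χ a * ψ (t * d + b) * conj (ψ t) := by simp [F, correlation, add_comm b]
      _ = χ a * (ψ (t * d + b) * conj (ψ t)) := by ring
  calc ‖∑ x, F (homogCoords x)‖
      ≤ ‖F ![0, 1]‖ + ‖∑ t, F ![1, t]‖ := hF_inv.sum_homogCoords ▸ norm_add_le _ _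
    _ ≤ 1 + 1 * 1 := by
        gcongr
        · exact norm_correlation_le_one χ ψ _ _
        · simp only [affine, ← Finset.mul_sum, norm_mul]
          gcongr
          · exact norm_monoidHom_le_one χ a
          · exact norm_sum_monoidHom_affine_le_one hu₀ hu d hb
    _ = 2 := by norm_num

end Correlation

section LocalComponent

instance (n : ℕ) (p : n.primeFactors) : Fact (p : ℕ).Prime :=
  ⟨Nat.prime_of_mem_primeFactors p.2⟩

lemma pairwise_coprime_primeFactors (n : ℕ) :
    Pairwise fun p q : n.primeFactors ↦ Nat.Coprime p q := fun p q hpq ↦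
  (Nat.coprime_primes (Nat.prime_of_mem_primeFactors p.2)
    (Nat.prime_of_mem_primeFactors q.2)).mpr (Subtype.coe_injective.ne hpq)

lemma exists_intCast_eq_primeFactors {n : ℕ} (f : (p : n.primeFactors) → ZMod (p : ℕ)) :
    ∃ x : ℤ, ∀ p : n.primeFactors, (x : ZMod (p : ℕ)) = f p := by
  set e := ZMod.prodEquivPi _ (pairwise_coprime_primeFactors n)
  obtain ⟨x, hx⟩ := ZMod.intCast_surjective (e.symm f)
  refine ⟨x, fun p ↦ ?_⟩
  rw [← e.apply_symm_apply f, ← hx, map_intCast, Pi.intCast_apply]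

/-- The Chinese remainder isomorphism `ℤ/m ≃ ∏_{p ∣ m} ℤ/p` for squarefree `m`. -/
noncomputable def zmodEquivPiPrimeFactors {m : ℕ} (hm : Squarefree m) :
    ZMod m ≃+* ((p : m.primeFactors) → ZMod (p : ℕ)) :=
  (ZMod.ringEquivCongr (by
    rw [Finset.prod_coe_sort m.primeFactors (fun p ↦ p),
      Nat.prod_primeFactors_of_squarefree hm])).trans
  (ZMod.prodEquivPi _ (pairwise_coprime_primeFactors m))

/-- The factor at `p` of a Dirichlet character to a squarefree modulus `m`, extended by `1` to the
primes that do not divide `m`. It is a character of `ℤ/p` extended by its value at `0`. -/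
noncomputable def localComponent {m : ℕ} (χ : DirichletCharacter ℂ m) (p : ℕ) : ZMod p →* ℂ :=
  open scoped Classical in
  if h : Squarefree m ∧ p ∈ m.primeFactors then
    (χ.toMonoidHom.comp (zmodEquivPiPrimeFactors h.1).symm.toMonoidHom).comp
      (MonoidHom.mulSingle (fun p : m.primeFactors ↦ ZMod (p : ℕ)) ⟨p, h.2⟩)
  else 1

variable {m : ℕ} (χ : DirichletCharacter ℂ m)

lemma localComponent_apply (hm : Squarefree m) (p : m.primeFactors) (x : ZMod (p : ℕ)) :
    localComponent χ p x = χ ((zmodEquivPiPrimeFactors hm).symm (Pi.mulSingle p x)) := by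
  rw [localComponent, dif_pos ⟨hm, p.2⟩]
  rfl

lemma localComponent_eq_one {p : ℕ} (hp : p ∉ m.primeFactors) : localComponent χ p = 1 :=
  dif_neg fun h ↦ hp h.2

lemma prod_localComponent (hm : Squarefree m) {n : ℕ} (hn : n ≠ 0) (hmn : m ∣ n) (x : ℤ) :
    χ x = ∏ p : n.primeFactors, localComponent χ p x := by
  have over_m : χ x = ∏ p : m.primeFactors, localComponent χ p x := by
    simp_rw [localComponent_apply χ hm, ← map_prod]
    rw [Finset.univ_prod_mulSingle (fun p : m.primeFactors ↦ (x : ZMod (p : ℕ)))]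
    exact congrArg χ (((zmodEquivPiPrimeFactors hm).symm_apply_eq).mpr (by ext; simp)).symm
  rw [over_m, Finset.prod_coe_sort _ (fun p ↦ localComponent χ p x),
    Finset.prod_coe_sort _ (fun p ↦ localComponent χ p x)]
  refine Finset.prod_subset (Nat.primeFactors_mono hmn hn) fun p _ hp ↦ ?_
  rw [localComponent_eq_one χ hp, MonoidHom.one_apply]

lemma conductor_dvd_div_of_localComponent_eq_one (hm : Squarefree m) {p : ℕ} (hp : p.Prime)
    (hpm : p ∣ m) (hχ : ∀ u : ZMod p, u ≠ 0 → localComponent χ p u = 1) :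
    χ.conductor ∣ m / p := by
  have : NeZero m := ⟨hm.ne_zero⟩
  have hdiv : m / p ∣ m := Nat.div_dvd_of_dvd hpm
  refine χ.conductor_dvd_of_mem_conductorSet
    ((DirichletCharacter.factorsThrough_iff_ker_unitsMap hdiv).mpr fun u hu ↦ ?_)
  obtain ⟨x, hx⟩ := ZMod.intCast_surjective (u : ZMod m)
  have x_eq_one : (x : ZMod (m / p)) = 1 := by
    have := congrArg Units.val (MonoidHom.mem_ker.mp hu)
    rwa [ZMod.unitsMap_def, Units.coe_map, MonoidHom.coe_coe, ← hx, map_intCast,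
      Units.val_one] at this
  have component_eq_one (q : m.primeFactors) : localComponent χ q x = 1 := by
    obtain ⟨q, hq⟩ := q
    have hqm : q ∣ m := Nat.dvd_of_mem_primeFactors hq
    have hq_prime : q.Prime := Nat.prime_of_mem_primeFactors hq
    have : Fact q.Prime := ⟨hq_prime⟩
    rcases eq_or_ne q p with rfl | hqp
    · have x_unit : IsUnit (ZMod.castHom hqm (ZMod q) (u : ZMod m)) := u.isUnit.map _
      rw [← hx, map_intCast] at x_unit
      exact hχ _ x_unit.ne_zero
    · have hq_div : q ∣ m / p :=
        (((Nat.coprime_primes hq_prime hp).mpr hqp).dvd_mul_left).mp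
          ((Nat.mul_div_cancel' hpm).symm ▸ hqm)
      have := congrArg (ZMod.castHom hq_div (ZMod q)) x_eq_one
      rw [map_intCast, map_one] at this
      rw [this, map_one]
  rw [MonoidHom.mem_ker, Units.ext_iff, MulChar.coe_toUnitHom, ← hx,
    prod_localComponent χ hm hm.ne_zero dvd_rfl, Finset.prod_eq_one fun q _ ↦ component_eq_one q,
    Units.val_one]

lemma exists_localComponent_ne_one (hm : Squarefree m) {p : ℕ} (hp : p.Prime)
    (hpχ : p ∣ χ.conductor) : ∃ u : ZMod p, u ≠ 0 ∧ localComponent χ p u ≠ 1 := by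
  by_contra! trivial_at
  have hpm : p ∣ m := hpχ.trans χ.conductor_dvd_level
  have hp_div : p ∣ m / p :=
    hpχ.trans (conductor_dvd_div_of_localComponent_eq_one χ hm hp hpm trivial_at)
  have hpp : p * p ∣ m := Nat.mul_div_cancel' hpm ▸ mul_dvd_mul_left p hp_div
  exact hp.not_isUnit (hm p hpp)

lemma localCond_pos {p : ℕ} (hp : p.Prime) : 0 < localCond χ p :=
  pow_pos hp.pos _

lemma localCond_eq_one {p : ℕ} (hp : ¬ p ∣ χ.conductor) : localCond χ p = 1 := by
  rw [localCond, Nat.factorization_eq_zero_of_not_dvd hp, pow_zero]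

lemma localCond_eq_self (hm : Squarefree m) {p : ℕ} (hp : p.Prime) (hpχ : p ∣ χ.conductor) :
    localCond χ p = p := by
  have : Squarefree χ.conductor := hm.squarefree_of_dvd χ.conductor_dvd_level
  rw [localCond, Nat.factorization_eq_one_of_squarefree this hp hpχ, pow_one]

lemma localCond_le_gcd {Q : ℕ} (hQ : Squarefree Q) (hmQ : m ∣ Q) {p : ℕ} (hp : p.Prime) :
    localCond χ p ≤ Q.gcd p := by
  by_cases hpχ : p ∣ χ.conductor
  · rw [localCond_eq_self χ (hQ.squarefree_of_dvd hmQ) hp hpχ, Nat.gcd_eq_right]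
    exact (hpχ.trans χ.conductor_dvd_level).trans hmQ
  · rw [localCond_eq_one χ hpχ]
    exact Nat.gcd_pos_of_pos_right Q hp.pos

end LocalComponent

section StrongApproximation

/-- A product of four elementary matrices. Over a field this reaches all of `SL₂`, so that `SL₂` is
parametrised by a free choice of four ring elements. -/
def elementaryProduct {R : Type*} [CommRing R] (s x y z : R) : Matrix (Fin 2) (Fin 2) R :=
  !![1, 0; s, 1] * !![1, x; 0, 1] * !![1, 0; y, 1] * !![1, z; 0, 1]

lemma elementaryProduct_eq {R : Type*} [CommRing R] (s x y z : R) :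
    elementaryProduct s x y z = !![1 + x * y, (1 + x * y) * z + x;
      s * (1 + x * y) + y, s * ((1 + x * y) * z + x) + (z * y + 1)] := by
  simp only [elementaryProduct, Matrix.mul_fin_two]
  ring_nf

lemma det_elementaryProduct {R : Type*} [CommRing R] (s x y z : R) :
    (elementaryProduct s x y z).det = 1 := by
  rw [elementaryProduct_eq, Matrix.det_fin_two_of]
  ring

lemma map_elementaryProduct {R S : Type*} [CommRing R] [CommRing S] (f : R →+* S) (s x y z : R) :
    f.mapMatrix (elementaryProduct s x y z) = elementaryProduct (f s) (f x) (f y) (f z) := by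
  ext i j
  fin_cases i <;> fin_cases j <;> simp [elementaryProduct_eq]

-- A row operation makes the lower left entry nonzero; it is then a pivot for the other three.
lemma exists_eq_elementaryProduct {K : Type*} [Field K] {M : Matrix (Fin 2) (Fin 2) K}
    (hM : M.det = 1) : ∃ s x y z, M = elementaryProduct s x y z := by
  obtain ⟨s, hs⟩ : ∃ s, M 1 0 - s * M 0 0 ≠ 0 := by
    by_contra! h
    have h₁₀ : M 1 0 = 0 := by simpa using h 0
    have h₀₀ : M 0 0 = 0 := by simpa [h₁₀] using h 1
    simp [Matrix.det_fin_two, h₁₀, h₀₀] at hM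
  rw [Matrix.det_fin_two] at hM
  set y := M 1 0 - s * M 0 0 with hy
  obtain ⟨x, hx⟩ : ∃ x, x * y = M 0 0 - 1 := ⟨_, div_mul_cancel₀ _ hs⟩
  obtain ⟨z, hz⟩ : ∃ z, z * y = M 1 1 - s * M 0 1 - 1 := ⟨_, div_mul_cancel₀ _ hs⟩
  have h₀₀ : 1 + x * y = M 0 0 := by rw [hx]; ring
  have h₀₁ : M 0 0 * z + x = M 0 1 :=
    mul_right_cancel₀ hs (by linear_combination M 0 0 * hz + hx + hM - M 0 1 * hy)
  have h₁₀ : s * M 0 0 + y = M 1 0 := by rw [hy]; ring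
  have h₁₁ : s * M 0 1 + (z * y + 1) = M 1 1 := by rw [hz]; ring
  refine ⟨s, x, y, z, ?_⟩
  rw [elementaryProduct_eq, h₀₀, h₀₁, h₁₀, h₁₁]
  exact Matrix.eta_fin_two M

/-- Reduction modulo `p` of integral matrices. -/
abbrev reduceMod (p : ℕ) : Matrix (Fin 2) (Fin 2) ℤ →+* Matrix (Fin 2) (Fin 2) (ZMod p) :=
  (Int.castRingHom (ZMod p)).mapMatrix

lemma det_reduceMod {τ : Matrix (Fin 2) (Fin 2) ℤ} (hτ : τ.det = 1) (p : ℕ) :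
    (reduceMod p τ).det = 1 := by
  rw [← RingHom.map_det, hτ, map_one]

lemma exists_det_one_reduceMod_eq {n : ℕ}
    (M : (p : n.primeFactors) → Matrix (Fin 2) (Fin 2) (ZMod (p : ℕ))) (hM : ∀ p, (M p).det = 1) :
    ∃ τ : Matrix (Fin 2) (Fin 2) ℤ, τ.det = 1 ∧ ∀ p : n.primeFactors, reduceMod p τ = M p := by
  choose s x y z h using fun p ↦ exists_eq_elementaryProduct (hM p)
  obtain ⟨s', hs⟩ := exists_intCast_eq_primeFactors s
  obtain ⟨x', hx⟩ := exists_intCast_eq_primeFactors x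
  obtain ⟨y', hy⟩ := exists_intCast_eq_primeFactors y
  obtain ⟨z', hz⟩ := exists_intCast_eq_primeFactors z
  refine ⟨elementaryProduct s' x' y' z', det_elementaryProduct .., fun p ↦ ?_⟩
  rw [map_elementaryProduct, h p, ← hs p, ← hx p, ← hy p, ← hz p]
  rfl

end StrongApproximation

section Cosets

/-- A complete set of representatives of `Γ₂(Q₁,Q₂)\SL₂(ℤ)`. -/
def IsGamma2Transversal (Q₁ Q₂ : ℕ) (T : Finset (Matrix (Fin 2) (Fin 2) ℤ)) : Prop :=
  (∀ τ ∈ T, τ.det = 1) ∧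
    ∀ g : Matrix (Fin 2) (Fin 2) ℤ, g.det = 1 →
      ∃! τ, τ ∈ T ∧ ∃ γ, InGamma2 Q₁ Q₂ γ ∧ g = γ * τ

variable {p : ℕ} [Fact p.Prime]

/-- The part of `v` seen by the congruence condition modulo `Q`: the point `[v 0 : v 1]` of
`ℙ¹(𝔽_p)` if `p ∣ Q`, and the placeholder `∞` otherwise. -/
noncomputable def cosetPoint (Q : ℕ) (v : Fin 2 → ZMod p) : OnePoint (ZMod p) :=
  if p ∣ Q then projPoint v else OnePoint.infty

open scoped Classical in
/-- The range of `cosetPoint`. -/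
noncomputable def cosetPoints (Q p : ℕ) [Fact p.Prime] : Finset (OnePoint (ZMod p)) :=
  if p ∣ Q then Finset.univ else {OnePoint.infty}

/-- The local invariant at `p` of the coset `Γ₂(Q₁,Q₂)M`, read off from the two rows of `M`. -/
noncomputable def localCoset (Q₁ Q₂ : ℕ) (M : Matrix (Fin 2) (Fin 2) (ZMod p)) :
    OnePoint (ZMod p) × OnePoint (ZMod p) :=
  (cosetPoint Q₁ (M 0), cosetPoint Q₂ (M 1))

open scoped Classical in
/-- The range of `localCoset` on `SL₂(𝔽_p)`: the two rows of an invertible matrix give distinct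
points. -/
noncomputable def localCosets (Q₁ Q₂ p : ℕ) [Fact p.Prime] :
    Finset (OnePoint (ZMod p) × OnePoint (ZMod p)) :=
  (cosetPoints Q₁ p ×ˢ cosetPoints Q₂ p).filter fun z ↦ p ∣ Q₁ → p ∣ Q₂ → z.1 ≠ z.2

lemma cosetPoint_mem_cosetPoints (Q : ℕ) (v : Fin 2 → ZMod p) :
    cosetPoint Q v ∈ cosetPoints Q p := by
  by_cases hpQ : p ∣ Q <;> simp [cosetPoint, cosetPoints, hpQ]

lemma cosetPoint_eq_of_mem_cosetPoints {Q : ℕ} {v : Fin 2 → ZMod p} {x : OnePoint (ZMod p)}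
    (hx : x ∈ cosetPoints Q p) (hv : p ∣ Q → projPoint v = x) : cosetPoint Q v = x := by
  by_cases hpQ : p ∣ Q
  · rw [cosetPoint, if_pos hpQ, hv hpQ]
  · rw [cosetPoints, if_neg hpQ, Finset.mem_singleton] at hx
    rw [cosetPoint, if_neg hpQ, hx]

lemma row_ne_zero_of_det_eq_one {K : Type*} [Field K] {M : Matrix (Fin 2) (Fin 2) K}
    (hM : M.det = 1) (i : Fin 2) : M i ≠ 0 := fun h ↦
  one_ne_zero (hM.symm.trans (Matrix.det_eq_zero_of_row_eq_zero i (congrFun h)))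

lemma localCoset_mem_localCosets (Q₁ Q₂ : ℕ) {M : Matrix (Fin 2) (Fin 2) (ZMod p)}
    (hM : M.det = 1) : localCoset Q₁ Q₂ M ∈ localCosets Q₁ Q₂ p := by
  simp only [localCosets, Finset.mem_filter, Finset.mem_product]
  refine ⟨⟨cosetPoint_mem_cosetPoints _ _, cosetPoint_mem_cosetPoints _ _⟩, fun h₁ h₂ ↦ ?_⟩
  simp only [localCoset, cosetPoint, if_pos h₁, if_pos h₂, ne_eq,
    projPoint_eq_iff (row_ne_zero_of_det_eq_one hM 0) (row_ne_zero_of_det_eq_one hM 1)]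
  intro h
  rw [Matrix.det_fin_two, h, sub_self] at hM
  exact zero_ne_one hM

lemma exists_det_one_projPoint_eq {K : Type*} [Field K] {x y : OnePoint K} (hxy : x ≠ y) :
    ∃ M : Matrix (Fin 2) (Fin 2) K, M.det = 1 ∧ projPoint (M 0) = x ∧ projPoint (M 1) = y := by
  set v := homogCoords x
  set w := homogCoords y
  have det_ne_zero : v 0 * w 1 - v 1 * w 0 ≠ 0 := by
    rwa [sub_ne_zero, ne_eq, ← projPoint_eq_iff (homogCoords_ne_zero x) (homogCoords_ne_zero y),
      projPoint_homogCoords, projPoint_homogCoords]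
  set δ := v 0 * w 1 - v 1 * w 0 with hδ
  refine ⟨Matrix.of ![v, δ⁻¹ • w], ?_, projPoint_homogCoords x, ?_⟩
  · calc (Matrix.of ![v, δ⁻¹ • w]).det
        = v 0 * (δ⁻¹ * w 1) - v 1 * (δ⁻¹ * w 0) := Matrix.det_fin_two _
      _ = δ⁻¹ * δ := by rw [hδ]; ring
      _ = 1 := inv_mul_cancel₀ det_ne_zero
  · exact (projPoint_isScaleInvariant _ (inv_ne_zero det_ne_zero) w).trans (projPoint_homogCoords y)

lemma exists_det_one_localCoset_eq {Q₁ Q₂ : ℕ} {z : OnePoint (ZMod p) × OnePoint (ZMod p)}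
    (hz : z ∈ localCosets Q₁ Q₂ p) :
    ∃ M : Matrix (Fin 2) (Fin 2) (ZMod p), M.det = 1 ∧ localCoset Q₁ Q₂ M = z := by
  obtain ⟨z₁, z₂⟩ := z
  obtain ⟨⟨hz₁, hz₂⟩, hne⟩ : (z₁ ∈ cosetPoints Q₁ p ∧ z₂ ∈ cosetPoints Q₂ p) ∧
      (p ∣ Q₁ → p ∣ Q₂ → z₁ ≠ z₂) := by
    simpa [localCosets] using hz
  have : Nontrivial (OnePoint (ZMod p)) := inferInstanceAs (Nontrivial (Option (ZMod p)))
  obtain ⟨x, y, hxy, hx, hy⟩ :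
      ∃ x y : OnePoint (ZMod p), x ≠ y ∧ (p ∣ Q₁ → x = z₁) ∧ (p ∣ Q₂ → y = z₂) := by
    by_cases h₁ : p ∣ Q₁
    · by_cases h₂ : p ∣ Q₂
      · exact ⟨z₁, z₂, hne h₁ h₂, fun _ ↦ rfl, fun _ ↦ rfl⟩
      · obtain ⟨y, hy⟩ := exists_ne z₁
        exact ⟨z₁, y, hy.symm, fun _ ↦ rfl, fun h ↦ absurd h h₂⟩
    · obtain ⟨x, hx⟩ := exists_ne z₂
      exact ⟨x, z₂, hx, fun h ↦ absurd h h₁, fun _ ↦ rfl⟩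
  obtain ⟨M, hM, hM₀, hM₁⟩ := exists_det_one_projPoint_eq hxy
  exact ⟨M, hM, Prod.ext (cosetPoint_eq_of_mem_cosetPoints hz₁ fun h ↦ hM₀.trans (hx h))
    (cosetPoint_eq_of_mem_cosetPoints hz₂ fun h ↦ hM₁.trans (hy h))⟩

end Cosets

section GlobalCosets

lemma natCast_dvd_iff_forall_primeFactors {Q n : ℕ} (hQ : Squarefree Q) (hn : n ≠ 0)
    (hQn : Q ∣ n) (z : ℤ) :
    (Q : ℤ) ∣ z ↔ ∀ p : n.primeFactors, (p : ℕ) ∣ Q → (z : ZMod (p : ℕ)) = 0 := by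
  simp_rw [ZMod.intCast_zmod_eq_zero_iff_dvd]
  refine ⟨fun hz p hp ↦ (Int.natCast_dvd_natCast.mpr hp).trans hz, fun h ↦ ?_⟩
  rw [← Nat.prod_primeFactors_of_squarefree hQ, Int.natCast_dvd]
  refine Finset.prod_primes_dvd _ (fun p hp ↦ (Nat.prime_of_mem_primeFactors hp).prime)
    fun p hp ↦ Int.natCast_dvd.mp ?_
  exact h ⟨p, Nat.primeFactors_mono hQn hn hp⟩ (Nat.dvd_of_mem_primeFactors hp)

lemma exists_inGamma2_mul_iff {Q₁ Q₂ : ℕ} {τ τ' : Matrix (Fin 2) (Fin 2) ℤ} (hτ : τ.det = 1)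
    (hτ' : τ'.det = 1) :
    (∃ γ, InGamma2 Q₁ Q₂ γ ∧ τ' = γ * τ) ↔
      (Q₁ : ℤ) ∣ τ' 0 0 * τ 0 1 - τ' 0 1 * τ 0 0 ∧ (Q₂ : ℤ) ∣ τ' 1 0 * τ 1 1 - τ' 1 1 * τ 1 0 := by
  have entry₀₁ : (τ' * τ.adjugate) 0 1 = -(τ' 0 0 * τ 0 1 - τ' 0 1 * τ 0 0) := by
    simp only [Matrix.adjugate_fin_two, Matrix.mul_apply, Fin.sum_univ_two, Matrix.of_apply,
      Matrix.cons_val', Matrix.cons_val_zero, Matrix.cons_val_one, Matrix.cons_val_fin_one]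
    ring
  have entry₁₀ : (τ' * τ.adjugate) 1 0 = τ' 1 0 * τ 1 1 - τ' 1 1 * τ 1 0 := by
    simp only [Matrix.adjugate_fin_two, Matrix.mul_apply, Fin.sum_univ_two, Matrix.of_apply,
      Matrix.cons_val', Matrix.cons_val_zero, Matrix.cons_val_one, Matrix.cons_val_fin_one]
    ring
  have cancel (γ : Matrix (Fin 2) (Fin 2) ℤ) : τ' = γ * τ ↔ γ = τ' * τ.adjugate := by
    constructor
    · rintro rfl
      rw [mul_assoc, Matrix.mul_adjugate, hτ, one_smul, mul_one]
    · rintro rfl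
      rw [mul_assoc, Matrix.adjugate_mul, hτ, one_smul, mul_one]
  simp_rw [cancel, exists_eq_right, InGamma2, Matrix.det_mul, hτ', Matrix.det_adjugate, hτ,
    entry₀₁, entry₁₀, dvd_neg]
  simp

lemma cosetPoint_eq_iff {p : ℕ} [Fact p.Prime] {Q : ℕ} {v w : Fin 2 → ZMod p} (hv : v ≠ 0)
    (hw : w ≠ 0) : cosetPoint Q v = cosetPoint Q w ↔ (p ∣ Q → v 0 * w 1 - v 1 * w 0 = 0) := by
  by_cases hpQ : p ∣ Q
  · simp [cosetPoint, hpQ, projPoint_eq_iff hv hw, sub_eq_zero]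
  · simp [cosetPoint, hpQ]

lemma exists_inGamma2_mul_iff_localCoset_eq {Q₁ Q₂ : ℕ} (hQ₁ : Squarefree Q₁)
    (hQ₂ : Squarefree Q₂) {τ τ' : Matrix (Fin 2) (Fin 2) ℤ} (hτ : τ.det = 1) (hτ' : τ'.det = 1) :
    (∃ γ, InGamma2 Q₁ Q₂ γ ∧ τ' = γ * τ) ↔ ∀ p : (Q₁ * Q₂).primeFactors,
      localCoset Q₁ Q₂ (reduceMod p τ') = localCoset Q₁ Q₂ (reduceMod p τ) := by
  have hn : Q₁ * Q₂ ≠ 0 := mul_ne_zero hQ₁.ne_zero hQ₂.ne_zero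
  have row_ne_zero {g : Matrix (Fin 2) (Fin 2) ℤ} (hg : g.det = 1) (p : (Q₁ * Q₂).primeFactors)
      (i : Fin 2) : reduceMod p g i ≠ 0 := row_ne_zero_of_det_eq_one (det_reduceMod hg p) i
  simp_rw [exists_inGamma2_mul_iff hτ hτ',
    natCast_dvd_iff_forall_primeFactors hQ₁ hn (dvd_mul_right _ _),
    natCast_dvd_iff_forall_primeFactors hQ₂ hn (dvd_mul_left _ _), ← forall_and, localCoset,
    Prod.mk.injEq, cosetPoint_eq_iff (row_ne_zero hτ' _ _) (row_ne_zero hτ _ _)]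
  simp

lemma sum_transversal_prod_eq {Q₁ Q₂ : ℕ} (hQ₁ : Squarefree Q₁) (hQ₂ : Squarefree Q₂)
    {T : Finset (Matrix (Fin 2) (Fin 2) ℤ)} (hT : IsGamma2Transversal Q₁ Q₂ T) {X : Type*}
    [CommSemiring X]
    (F : (p : (Q₁ * Q₂).primeFactors) → OnePoint (ZMod (p : ℕ)) × OnePoint (ZMod (p : ℕ)) → X) :
    ∑ τ ∈ T, ∏ p : (Q₁ * Q₂).primeFactors, F p (localCoset Q₁ Q₂ (reduceMod p τ))
      = ∏ p : (Q₁ * Q₂).primeFactors, ∑ z ∈ localCosets Q₁ Q₂ p, F p z := by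
  classical
  obtain ⟨det_eq, exists_unique⟩ := hT
  rw [Finset.prod_univ_sum]
  refine Finset.sum_bij
    (fun τ _ (p : (Q₁ * Q₂).primeFactors) ↦ localCoset Q₁ Q₂ (reduceMod p τ)) ?_ ?_ ?_
    fun _ _ ↦ rfl
  · exact fun τ hτ ↦ Fintype.mem_piFinset.mpr fun p ↦
      localCoset_mem_localCosets Q₁ Q₂ (det_reduceMod (det_eq τ hτ) p)
  · intro τ hτ τ' hτ' h
    refine (exists_unique τ (det_eq τ hτ)).unique ⟨hτ, ?_⟩ ⟨hτ', ?_⟩ <;>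
      rw [exists_inGamma2_mul_iff_localCoset_eq hQ₁ hQ₂ (det_eq _ ‹_›) (det_eq _ ‹_›)]
    · exact fun _ ↦ rfl
    · exact congrFun h
  · intro z hz
    choose M hM hMz using fun p : (Q₁ * Q₂).primeFactors ↦
      exists_det_one_localCoset_eq (Fintype.mem_piFinset.mp hz p)
    obtain ⟨g, hg, hgM⟩ := exists_det_one_reduceMod_eq M hM
    obtain ⟨τ, ⟨hτ, hgτ⟩, -⟩ := exists_unique g hg
    rw [exists_inGamma2_mul_iff_localCoset_eq hQ₁ hQ₂ (det_eq τ hτ) hg] at hgτ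
    exact ⟨τ, hτ, funext fun p ↦ by rw [← hgτ p, hgM p, hMz p]⟩

end GlobalCosets

section OrbitSum

variable {m₁ n₁ m₂ n₂ : ℕ} (χ₁ : DirichletCharacter ℂ m₁) (ψ₁ : DirichletCharacter ℂ n₁)
  (χ₂ : DirichletCharacter ℂ m₂) (ψ₂ : DirichletCharacter ℂ n₂)

/-- The weight `α` on integral matrices. -/
noncomputable def weight (g : Matrix (Fin 2) (Fin 2) ℤ) : ℂ :=
  χ₁ ((g 0 0 : ZMod m₁)) * ψ₁ ((g 0 1 : ZMod n₁)) * χ₂ ((g 1 0 : ZMod m₂)) * ψ₂ ((g 1 1 : ZMod n₂))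

/-- The sum `w(σ)` over a given set `T` of representatives. -/
noncomputable def orbitSum (T : Finset (Matrix (Fin 2) (Fin 2) ℤ))
    (σ : Matrix (Fin 2) (Fin 2) ℤ) : ℂ :=
  ∑ τ ∈ T, weight χ₁ ψ₁ χ₂ ψ₂ (τ * σ) * conj (weight χ₁ ψ₁ χ₂ ψ₂ τ)

/-- The factor at `p` of one row of the summand of `w(σ)`, as a function of the local coset. -/
noncomputable def rowFactor {m n : ℕ} (χ : DirichletCharacter ℂ m) (ψ : DirichletCharacter ℂ n)
    (σ : Matrix (Fin 2) (Fin 2) ℤ) (p : ℕ) [Fact p.Prime] (x : OnePoint (ZMod p)) : ℂ :=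
  correlation (localComponent χ p) (localComponent ψ p) (reduceMod p σ) (homogCoords x)

variable {m n Q : ℕ} (χ : DirichletCharacter ℂ m) (ψ : DirichletCharacter ℂ n)

lemma norm_rowFactor_le_one (σ : Matrix (Fin 2) (Fin 2) ℤ) (p : ℕ) [Fact p.Prime]
    (x : OnePoint (ZMod p)) : ‖rowFactor χ ψ σ p x‖ ≤ 1 :=
  norm_correlation_le_one _ _ _ _

lemma rowFactor_cosetPoint (hm : m ∣ Q) (hn : n ∣ Q) (σ : Matrix (Fin 2) (Fin 2) ℤ) {p : ℕ}
    [Fact p.Prime] {v : Fin 2 → ZMod p} (hv : v ≠ 0) :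
    rowFactor χ ψ σ p (cosetPoint Q v)
      = correlation (localComponent χ p) (localComponent ψ p) (reduceMod p σ) v := by
  by_cases hpQ : p ∣ Q
  · rw [rowFactor, cosetPoint, if_pos hpQ,
      (correlation_isScaleInvariant _ _ _).apply_homogCoords hv]
  · have component_eq_one {k : ℕ} (hk : k ∣ Q) (η : DirichletCharacter ℂ k) :
        localComponent η p = 1 :=
      localComponent_eq_one η fun hp ↦ hpQ ((Nat.dvd_of_mem_primeFactors hp).trans hk)
    simp [rowFactor, correlation, component_eq_one hm, component_eq_one hn]

lemma row_summand_eq_prod (hQ : Squarefree Q) (hm : m ∣ Q) (hn : n ∣ Q) {N : ℕ} (hN : N ≠ 0)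
    (hQN : Q ∣ N) (σ : Matrix (Fin 2) (Fin 2) ℤ) {τ : Matrix (Fin 2) (Fin 2) ℤ} (hτ : τ.det = 1)
    (i : Fin 2) :
    χ ((τ * σ) i 0 : ℤ) * ψ ((τ * σ) i 1 : ℤ) * conj (χ (τ i 0 : ℤ) * ψ (τ i 1 : ℤ))
      = ∏ p : N.primeFactors, rowFactor χ ψ σ p (cosetPoint Q (reduceMod p τ i)) := by
  have expand {k : ℕ} (hk : k ∣ Q) (η : DirichletCharacter ℂ k) (x : ℤ) :=
    prod_localComponent η (hQ.squarefree_of_dvd hk) hN (hk.trans hQN) x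
  simp_rw [expand hm, expand hn, map_mul, map_prod, ← Finset.prod_mul_distrib]
  refine Finset.prod_congr rfl fun p _ ↦ ?_
  rw [rowFactor_cosetPoint χ ψ hm hn σ (row_ne_zero_of_det_eq_one (det_reduceMod hτ p) i),
    correlation, ← Matrix.mul_apply_eq_vecMul, ← map_mul (reduceMod p) τ σ,
    (starRingEnd ℂ).map_mul]
  rfl

lemma orbitSum_eq_prod {Q₁ Q₂ : ℕ} (hQ₁ : Squarefree Q₁) (hQ₂ : Squarefree Q₂) (hm₁ : m₁ ∣ Q₁)
    (hn₁ : n₁ ∣ Q₁) (hm₂ : m₂ ∣ Q₂) (hn₂ : n₂ ∣ Q₂) {T : Finset (Matrix (Fin 2) (Fin 2) ℤ)}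
    (hT : IsGamma2Transversal Q₁ Q₂ T) (σ : Matrix (Fin 2) (Fin 2) ℤ) :
    orbitSum χ₁ ψ₁ χ₂ ψ₂ T σ = ∏ p : (Q₁ * Q₂).primeFactors, ∑ z ∈ localCosets Q₁ Q₂ p,
      rowFactor χ₁ ψ₁ σ p z.1 * rowFactor χ₂ ψ₂ σ p z.2 := by
  have hN : Q₁ * Q₂ ≠ 0 := mul_ne_zero hQ₁.ne_zero hQ₂.ne_zero
  rw [← sum_transversal_prod_eq hQ₁ hQ₂ hT (fun p z ↦
    rowFactor χ₁ ψ₁ σ p z.1 * rowFactor χ₂ ψ₂ σ p z.2), orbitSum]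
  refine Finset.sum_congr rfl fun τ hτ ↦ ?_
  simp only [localCoset, Finset.prod_mul_distrib,
    ← row_summand_eq_prod χ₁ ψ₁ hQ₁ hm₁ hn₁ hN (dvd_mul_right _ _) σ (hT.1 τ hτ) 0,
    ← row_summand_eq_prod χ₂ ψ₂ hQ₂ hm₂ hn₂ hN (dvd_mul_left _ _) σ (hT.1 τ hτ) 1, weight, map_mul]
  ring

end OrbitSum

section LocalBounds

variable {p : ℕ} [Fact p.Prime]

lemma card_cosetPoints_le (Q : ℕ) : (cosetPoints Q p).card ≤ 2 * Q.gcd p := by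
  have hp : p.Prime := Fact.out
  by_cases hpQ : p ∣ Q
  · rw [cosetPoints, if_pos hpQ, Nat.gcd_eq_right hpQ, Finset.card_univ]
    calc Fintype.card (Option (ZMod p)) = p + 1 := by rw [Fintype.card_option, ZMod.card]
      _ ≤ 2 * p := by linarith [hp.one_le]
  · rw [cosetPoints, if_neg hpQ, Finset.card_singleton]
    linarith [Nat.gcd_pos_of_pos_right Q hp.pos]

lemma norm_sum_le_card {ι : Type*} {f : ι → ℂ} (hf : ∀ x, ‖f x‖ ≤ 1) (s : Finset ι) :
    ‖∑ x ∈ s, f x‖ ≤ s.card := by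
  simpa using norm_sum_le_of_le s fun x _ ↦ hf x

lemma norm_sum_cosetPoints_le (Q : ℕ) {f : OnePoint (ZMod p) → ℂ} (hf : ∀ x, ‖f x‖ ≤ 1) :
    ‖∑ x ∈ cosetPoints Q p, f x‖ ≤ 2 * Q.gcd p :=
  (norm_sum_le_card hf _).trans (mod_cast card_cosetPoints_le Q)

lemma norm_sum_cosetPoints_mul_localCond_le {m Q : ℕ} (hQ : Squarefree Q) (hmQ : m ∣ Q)
    (η : DirichletCharacter ℂ m) (k : ℤ) {f : OnePoint (ZMod p) → ℂ} (hf : ∀ x, ‖f x‖ ≤ 1)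
    (hfη : p ∣ η.conductor → ¬ (p : ℤ) ∣ k → ‖∑ x, f x‖ ≤ 2) :
    ‖∑ x ∈ cosetPoints Q p, f x‖ * localCond η p ≤ 2 * Q.gcd p * k.gcd p := by
  have hp : p.Prime := Fact.out
  have one_le_gcd : (1 : ℝ) ≤ k.gcd p :=
    mod_cast Int.gcd_pos_of_ne_zero_right k (mod_cast hp.ne_zero)
  have trivial_bound := norm_sum_cosetPoints_le Q hf
  by_cases hpη : p ∣ η.conductor
  · have hpQ : p ∣ Q := (hpη.trans η.conductor_dvd_level).trans hmQ
    rw [localCond_eq_self η (hQ.squarefree_of_dvd hmQ) hp hpη]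
    by_cases hpk : (p : ℤ) ∣ k
    · have gcd_eq : k.gcd p = p := mod_cast (Int.gcd_eq_right_iff_dvd (by positivity)).mpr hpk
      rw [gcd_eq]
      gcongr
    · rw [cosetPoints, if_pos hpQ, Nat.gcd_eq_right hpQ]
      calc ‖∑ x, f x‖ * p ≤ 2 * p := by gcongr; exact hfη hpη hpk
        _ ≤ 2 * p * k.gcd p := le_mul_of_one_le_right (by positivity) one_le_gcd
  · rw [localCond_eq_one η hpη, Nat.cast_one, mul_one]
    exact trivial_bound.trans (le_mul_of_one_le_right (by positivity) one_le_gcd)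

open scoped Classical in
lemma card_product_sdiff_localCosets_mul_le (Q₁ Q₂ : ℕ) :
    ((cosetPoints Q₁ p ×ˢ cosetPoints Q₂ p) \ localCosets Q₁ Q₂ p).card
      * max (Q₁.gcd p) (Q₂.gcd p) ≤ 2 * Q₁.gcd p * Q₂.gcd p := by
  by_cases h : p ∣ Q₁ ∧ p ∣ Q₂
  · have on_diagonal : (cosetPoints Q₁ p ×ˢ cosetPoints Q₂ p) \ localCosets Q₁ Q₂ p
        ⊆ (cosetPoints Q₁ p).image fun x ↦ (x, x) := by
      rintro ⟨x, y⟩ hxy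
      obtain ⟨hx, hy, hne⟩ : x ∈ cosetPoints Q₁ p ∧ y ∈ cosetPoints Q₂ p ∧
          (x ∈ cosetPoints Q₁ p → y ∈ cosetPoints Q₂ p → x = y) := by
        simpa [localCosets, h, and_assoc] using hxy
      exact Finset.mem_image.mpr ⟨x, hx, Prod.ext rfl (hne hx hy)⟩
    have card_le := ((Finset.card_le_card on_diagonal).trans Finset.card_image_le).trans
      (card_cosetPoints_le Q₁)
    rw [Nat.gcd_eq_right h.1] at card_le
    rw [Nat.gcd_eq_right h.1, Nat.gcd_eq_right h.2, max_self]
    gcongr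
  · have no_condition : localCosets Q₁ Q₂ p = cosetPoints Q₁ p ×ˢ cosetPoints Q₂ p :=
      Finset.filter_true_of_mem fun z _ h₁ h₂ ↦ absurd ⟨h₁, h₂⟩ h
    simp [no_condition]

variable {Q₁ Q₂ : ℕ} {f₁ f₂ : OnePoint (ZMod p) → ℂ}

open scoped Classical in
lemma sum_localCosets_mul_eq_sub (f₁ f₂ : OnePoint (ZMod p) → ℂ) :
    ∑ z ∈ localCosets Q₁ Q₂ p, f₁ z.1 * f₂ z.2
      = (∑ x ∈ cosetPoints Q₁ p, f₁ x) * ∑ x ∈ cosetPoints Q₂ p, f₂ x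
        - ∑ z ∈ (cosetPoints Q₁ p ×ˢ cosetPoints Q₂ p) \ localCosets Q₁ Q₂ p, f₁ z.1 * f₂ z.2 := by
  have subset : localCosets Q₁ Q₂ p ⊆ cosetPoints Q₁ p ×ˢ cosetPoints Q₂ p :=
    Finset.filter_subset _ _
  rw [eq_sub_iff_add_eq', Finset.sum_sdiff subset, Finset.sum_mul_sum, Finset.sum_product]

lemma norm_sum_mul_sum_cosetPoints_mul_max_le (hf₁ : ∀ x, ‖f₁ x‖ ≤ 1) (hf₂ : ∀ x, ‖f₂ x‖ ≤ 1)
    {L₁ L₂ g : ℕ} (h₁ : ‖∑ x ∈ cosetPoints Q₁ p, f₁ x‖ * L₁ ≤ 2 * Q₁.gcd p * g)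
    (h₂ : ‖∑ x ∈ cosetPoints Q₂ p, f₂ x‖ * L₂ ≤ 2 * Q₂.gcd p * g) :
    ‖(∑ x ∈ cosetPoints Q₁ p, f₁ x) * ∑ x ∈ cosetPoints Q₂ p, f₂ x‖ * max (L₁ : ℝ) L₂
      ≤ 4 * Q₁.gcd p * Q₂.gcd p * g := by
  have trivial₁ := norm_sum_cosetPoints_le Q₁ hf₁
  have trivial₂ := norm_sum_cosetPoints_le Q₂ hf₂
  set S₁ := ∑ x ∈ cosetPoints Q₁ p, f₁ x
  set S₂ := ∑ x ∈ cosetPoints Q₂ p, f₂ x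
  rw [norm_mul]
  rcases max_choice (L₁ : ℝ) L₂ with h | h <;> rw [h]
  · calc ‖S₁‖ * ‖S₂‖ * L₁ = ‖S₁‖ * L₁ * ‖S₂‖ := by ring
      _ ≤ 2 * Q₁.gcd p * g * (2 * Q₂.gcd p) := by gcongr
      _ = 4 * Q₁.gcd p * Q₂.gcd p * g := by ring
  · calc ‖S₁‖ * ‖S₂‖ * L₂ = ‖S₁‖ * (‖S₂‖ * L₂) := by ring
      _ ≤ 2 * Q₁.gcd p * (2 * Q₂.gcd p * g) := by gcongr
      _ = 4 * Q₁.gcd p * Q₂.gcd p * g := by ring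

open scoped Classical in
lemma norm_sum_product_sdiff_localCosets_mul_max_le (hf₁ : ∀ x, ‖f₁ x‖ ≤ 1)
    (hf₂ : ∀ x, ‖f₂ x‖ ≤ 1) :
    ‖∑ z ∈ (cosetPoints Q₁ p ×ˢ cosetPoints Q₂ p) \ localCosets Q₁ Q₂ p, f₁ z.1 * f₂ z.2‖
      * max (Q₁.gcd p : ℝ) (Q₂.gcd p) ≤ 2 * Q₁.gcd p * Q₂.gcd p := by
  have summand_le (z : OnePoint (ZMod p) × OnePoint (ZMod p)) : ‖f₁ z.1 * f₂ z.2‖ ≤ 1 :=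
    (norm_mul_le _ _).trans (mul_le_one₀ (hf₁ _) (norm_nonneg _) (hf₂ _))
  calc _ ≤ ((cosetPoints Q₁ p ×ˢ cosetPoints Q₂ p) \ localCosets Q₁ Q₂ p).card
        * max (Q₁.gcd p : ℝ) (Q₂.gcd p) := by
        gcongr
        exact norm_sum_le_card summand_le _
    _ ≤ 2 * Q₁.gcd p * Q₂.gcd p := mod_cast card_product_sdiff_localCosets_mul_le Q₁ Q₂

lemma norm_sum_localCosets_mul_max_le (hf₁ : ∀ x, ‖f₁ x‖ ≤ 1) (hf₂ : ∀ x, ‖f₂ x‖ ≤ 1)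
    {L₁ L₂ g : ℕ} (hL₁ : L₁ ≤ Q₁.gcd p) (hL₂ : L₂ ≤ Q₂.gcd p) (hg : 1 ≤ g)
    (h₁ : ‖∑ x ∈ cosetPoints Q₁ p, f₁ x‖ * L₁ ≤ 2 * Q₁.gcd p * g)
    (h₂ : ‖∑ x ∈ cosetPoints Q₂ p, f₂ x‖ * L₂ ≤ 2 * Q₂.gcd p * g) :
    ‖∑ z ∈ localCosets Q₁ Q₂ p, f₁ z.1 * f₂ z.2‖ * max (L₁ : ℝ) L₂
      ≤ 6 * Q₁.gcd p * Q₂.gcd p * g := by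
  classical
  have product_part := norm_sum_mul_sum_cosetPoints_mul_max_le hf₁ hf₂ h₁ h₂
  have diagonal_part := norm_sum_product_sdiff_localCosets_mul_max_le
    (p := p) (Q₁ := Q₁) (Q₂ := Q₂) hf₁ hf₂
  rw [sum_localCosets_mul_eq_sub]
  set A := (∑ x ∈ cosetPoints Q₁ p, f₁ x) * ∑ x ∈ cosetPoints Q₂ p, f₂ x
  set D := ∑ z ∈ (cosetPoints Q₁ p ×ˢ cosetPoints Q₂ p) \ localCosets Q₁ Q₂ p, f₁ z.1 * f₂ z.2
  calc ‖A - D‖ * max (L₁ : ℝ) L₂ ≤ ‖A‖ * max (L₁ : ℝ) L₂ + ‖D‖ * max (L₁ : ℝ) L₂ := by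
        rw [← add_mul]
        gcongr
        exact norm_sub_le A D
    _ ≤ 4 * Q₁.gcd p * Q₂.gcd p * g + ‖D‖ * max (Q₁.gcd p : ℝ) (Q₂.gcd p) := by gcongr
    _ ≤ 4 * Q₁.gcd p * Q₂.gcd p * g + 2 * Q₁.gcd p * Q₂.gcd p * g := by
        gcongr _ + ?_
        exact diagonal_part.trans (le_mul_of_one_le_right (by positivity) (mod_cast hg))
    _ = 6 * Q₁.gcd p * Q₂.gcd p * g := by ring

end LocalBounds

section GlobalBound

variable {l₁ l₂ : ℕ}

/-- The saving in the bound for `w(σ)` due to the conductors of `η₁` and `η₂`, as one product over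
the primes dividing `N = Q₁Q₂`: a local conductor at a prime not dividing the modulus is `1`. -/
noncomputable def conductorFactor (η₁ : DirichletCharacter ℂ l₁) (η₂ : DirichletCharacter ℂ l₂)
    (N : ℕ) : ℝ :=
  ∏ p ∈ N.primeFactors, (max (localCond η₁ p) (localCond η₂ p) : ℝ)⁻¹

lemma prod_union_eq_prod_sdiff_mul {ι M : Type*} [DecidableEq ι] [CommMonoid M] (s t : Finset ι)
    (f : ι → M) :
    ∏ i ∈ s ∪ t, f i
      = (∏ i ∈ s \ (s ∩ t), f i) * (∏ i ∈ t \ (s ∩ t), f i) * ∏ i ∈ s ∩ t, f i := by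
  rw [mul_assoc, Finset.prod_sdiff Finset.inter_subset_right, Finset.sdiff_inter_self_left,
    ← Finset.prod_union Finset.sdiff_disjoint, Finset.sdiff_union_self_eq_union]

lemma conductorFactor_nonneg (η₁ : DirichletCharacter ℂ l₁) (η₂ : DirichletCharacter ℂ l₂)
    (N : ℕ) : 0 ≤ conductorFactor η₁ η₂ N :=
  Finset.prod_nonneg fun _ _ ↦ by positivity

lemma conductorFactor_mul_eq (η₁ : DirichletCharacter ℂ l₁) (η₂ : DirichletCharacter ℂ l₂)
    {Q₁ Q₂ : ℕ} (hQ₁ : Q₁ ≠ 0) (hQ₂ : Q₂ ≠ 0) (hl₁ : l₁ ∣ Q₁) (hl₂ : l₂ ∣ Q₂) :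
    conductorFactor η₁ η₂ (Q₁ * Q₂)
      = (∏ p ∈ Q₁.primeFactors \ (Q₁.gcd Q₂).primeFactors, (localCond η₁ p : ℝ)⁻¹)
        * (∏ p ∈ Q₂.primeFactors \ (Q₁.gcd Q₂).primeFactors, (localCond η₂ p : ℝ)⁻¹)
        * ∏ p ∈ (Q₁.gcd Q₂).primeFactors, (max (localCond η₁ p) (localCond η₂ p) : ℝ)⁻¹ := by
  have localCond_eq_one_of_notMem {l Q p : ℕ} (η : DirichletCharacter ℂ l) (hl : l ∣ Q)
      (hQ : Q ≠ 0) (hp : p.Prime) (hpQ : p ∉ Q.primeFactors) : localCond η p = 1 :=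
    localCond_eq_one η fun h ↦
      hpQ (Nat.mem_primeFactors.mpr ⟨hp, (h.trans η.conductor_dvd_level).trans hl, hQ⟩)
  have one_le_localCond {l p : ℕ} (η : DirichletCharacter ℂ l) (hp : p.Prime) :
      (1 : ℝ) ≤ localCond η p := mod_cast localCond_pos η hp
  rw [conductorFactor, Nat.primeFactors_mul hQ₁ hQ₂, prod_union_eq_prod_sdiff_mul,
    ← Nat.primeFactors_gcd hQ₁ hQ₂]
  congr 2
  · refine Finset.prod_congr rfl fun p hp ↦ ?_
    rw [Nat.primeFactors_gcd hQ₁ hQ₂, Finset.sdiff_inter_self_left, Finset.mem_sdiff] at hp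
    have hprime := Nat.prime_of_mem_primeFactors hp.1
    rw [localCond_eq_one_of_notMem η₂ hl₂ hQ₂ hprime hp.2, Nat.cast_one,
      max_eq_left (one_le_localCond η₁ hprime)]
  · refine Finset.prod_congr rfl fun p hp ↦ ?_
    rw [Nat.primeFactors_gcd hQ₁ hQ₂, Finset.sdiff_inter_self_right, Finset.mem_sdiff] at hp
    have hprime := Nat.prime_of_mem_primeFactors hp.1
    rw [localCond_eq_one_of_notMem η₁ hl₁ hQ₁ hprime hp.2, Nat.cast_one,
      max_eq_right (one_le_localCond η₂ hprime)]

lemma prod_primeFactors_gcd_eq_self {Q N : ℕ} (hQ : Squarefree Q) (hQN : Q ∣ N) (hN : N ≠ 0) :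
    ∏ p ∈ N.primeFactors, Q.gcd p = Q := by
  rw [← Finset.prod_subset (Nat.primeFactors_mono hQN hN)]
  · conv_rhs => rw [← Nat.prod_primeFactors_of_squarefree hQ]
    exact Finset.prod_congr rfl fun p hp ↦ Nat.gcd_eq_right (Nat.dvd_of_mem_primeFactors hp)
  · intro p hp hpQ
    have hprime := Nat.prime_of_mem_primeFactors hp
    exact ((hprime.coprime_iff_not_dvd).mpr fun h ↦
      hpQ (Nat.mem_primeFactors.mpr ⟨hprime, h, hQ.ne_zero⟩)).symm

lemma prod_primeFactors_gcd_le (k : ℤ) (N : ℕ) :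
    ∏ p ∈ N.primeFactors, k.gcd p ≤ k.gcd (radical N : ℕ) := by
  refine Nat.le_of_dvd (Int.gcd_pos_of_ne_zero_right k (mod_cast radical_ne_zero)) ?_
  refine Finset.prod_dvd_of_isRelPrime (fun p hp q hq hpq ↦ ?_) fun p hp ↦ ?_
  · rw [Function.onFun, ← Nat.coprime_iff_isRelPrime]
    have coprime : p.Coprime q := (Nat.coprime_primes (Nat.prime_of_mem_primeFactors hp)
      (Nat.prime_of_mem_primeFactors hq)).mpr hpq
    exact coprime.of_dvd (Nat.gcd_dvd_right _ _) (Nat.gcd_dvd_right _ _)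
  · refine Nat.gcd_dvd_gcd_of_dvd_right _ ?_
    simp only [Int.natAbs_natCast, Nat.radical_eq_prod_primeFactors]
    exact Finset.dvd_prod_of_mem id hp

end GlobalBound

section RowSums

variable {m n Q : ℕ} (hQ : Squarefree Q) (χ : DirichletCharacter ℂ m)
  (ψ : DirichletCharacter ℂ n) {p : ℕ} [Fact p.Prime]

include hQ

lemma norm_sum_rowFactor_lower_le (hm : m ∣ Q) (a d : ℤ) {c : ℤ} (hp : p ∣ χ.conductor)
    (hc : ¬ (p : ℤ) ∣ c) : ‖∑ x, rowFactor χ ψ !![a, 0; c, d] p x‖ ≤ 2 := by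
  obtain ⟨u, hu₀, hu⟩ := exists_localComponent_ne_one χ (hQ.squarefree_of_dvd hm) Fact.out hp
  have reduce_eq : reduceMod p !![a, 0; c, d] = !![(a : ZMod p), 0; (c : ZMod p), d] := by
    simp [← Matrix.ext_iff, Fin.forall_fin_two]
  simp_rw [rowFactor, reduce_eq]
  exact norm_sum_correlation_lower_le _ _ hu₀ hu _ _
    (mt (ZMod.intCast_zmod_eq_zero_iff_dvd c p).mp hc)

lemma norm_sum_rowFactor_upper_le (hn : n ∣ Q) (a d : ℤ) {b : ℤ} (hp : p ∣ ψ.conductor)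
    (hb : ¬ (p : ℤ) ∣ b) : ‖∑ x, rowFactor χ ψ !![a, b; 0, d] p x‖ ≤ 2 := by
  obtain ⟨u, hu₀, hu⟩ := exists_localComponent_ne_one ψ (hQ.squarefree_of_dvd hn) Fact.out hp
  have reduce_eq : reduceMod p !![a, b; 0, d] = !![(a : ZMod p), (b : ZMod p); 0, d] := by
    simp [← Matrix.ext_iff, Fin.forall_fin_two]
  simp_rw [rowFactor, reduce_eq]
  exact norm_sum_correlation_upper_le _ _ hu₀ hu _ _
    (mt (ZMod.intCast_zmod_eq_zero_iff_dvd b p).mp hb)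

end RowSums

section OrbitSumBound

variable {m₁ n₁ m₂ n₂ l₁ l₂ Q₁ Q₂ : ℕ} (hQ₁ : Squarefree Q₁) (hQ₂ : Squarefree Q₂)
  (χ₁ : DirichletCharacter ℂ m₁) (ψ₁ : DirichletCharacter ℂ n₁)
  (χ₂ : DirichletCharacter ℂ m₂) (ψ₂ : DirichletCharacter ℂ n₂)

include hQ₁ hQ₂

lemma norm_sum_localCosets_rowFactor_le (hl₁ : l₁ ∣ Q₁) (hl₂ : l₂ ∣ Q₂)
    (η₁ : DirichletCharacter ℂ l₁) (η₂ : DirichletCharacter ℂ l₂)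
    (σ : Matrix (Fin 2) (Fin 2) ℤ) (k : ℤ) {p : ℕ} [Fact p.Prime]
    (h₁ : p ∣ η₁.conductor → ¬ (p : ℤ) ∣ k → ‖∑ x, rowFactor χ₁ ψ₁ σ p x‖ ≤ 2)
    (h₂ : p ∣ η₂.conductor → ¬ (p : ℤ) ∣ k → ‖∑ x, rowFactor χ₂ ψ₂ σ p x‖ ≤ 2) :
    ‖∑ z ∈ localCosets Q₁ Q₂ p, rowFactor χ₁ ψ₁ σ p z.1 * rowFactor χ₂ ψ₂ σ p z.2‖
      ≤ 6 * Q₁.gcd p * Q₂.gcd p * k.gcd p * (max (localCond η₁ p) (localCond η₂ p) : ℝ)⁻¹ := by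
  have hp : p.Prime := Fact.out
  have max_pos : 0 < (max (localCond η₁ p) (localCond η₂ p) : ℝ) :=
    lt_max_of_lt_left (mod_cast localCond_pos η₁ hp)
  have row₁ := norm_rowFactor_le_one χ₁ ψ₁ σ p
  have row₂ := norm_rowFactor_le_one χ₂ ψ₂ σ p
  rw [← div_eq_mul_inv, le_div_iff₀ max_pos]
  exact norm_sum_localCosets_mul_max_le row₁ row₂ (localCond_le_gcd η₁ hQ₁ hl₁ hp)
    (localCond_le_gcd η₂ hQ₂ hl₂ hp) (Int.gcd_pos_of_ne_zero_right k (mod_cast hp.ne_zero))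
    (norm_sum_cosetPoints_mul_localCond_le hQ₁ hl₁ η₁ k row₁ h₁)
    (norm_sum_cosetPoints_mul_localCond_le hQ₂ hl₂ η₂ k row₂ h₂)

variable (hm₁ : m₁ ∣ Q₁) (hn₁ : n₁ ∣ Q₁) (hm₂ : m₂ ∣ Q₂) (hn₂ : n₂ ∣ Q₂)
  {T : Finset (Matrix (Fin 2) (Fin 2) ℤ)} (hT : IsGamma2Transversal Q₁ Q₂ T)

include hm₁ hn₁ hm₂ hn₂ hT

lemma norm_orbitSum_le (hl₁ : l₁ ∣ Q₁) (hl₂ : l₂ ∣ Q₂)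
    (η₁ : DirichletCharacter ℂ l₁) (η₂ : DirichletCharacter ℂ l₂)
    (σ : Matrix (Fin 2) (Fin 2) ℤ) (k : ℤ)
    (h₁ : ∀ p : (Q₁ * Q₂).primeFactors, (p : ℕ) ∣ η₁.conductor → ¬ ((p : ℕ) : ℤ) ∣ k →
      ‖∑ x, rowFactor χ₁ ψ₁ σ p x‖ ≤ 2)
    (h₂ : ∀ p : (Q₁ * Q₂).primeFactors, (p : ℕ) ∣ η₂.conductor → ¬ ((p : ℕ) : ℤ) ∣ k →
      ‖∑ x, rowFactor χ₂ ψ₂ σ p x‖ ≤ 2) :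
    ‖orbitSum χ₁ ψ₁ χ₂ ψ₂ T σ‖ ≤ 6 ^ (Q₁ * Q₂).primeFactors.card * (Q₁ * Q₂ : ℕ)
      * k.gcd (radical (Q₁ * Q₂) : ℕ) * conductorFactor η₁ η₂ (Q₁ * Q₂) := by
  set N := Q₁ * Q₂
  have hN : N ≠ 0 := mul_ne_zero hQ₁.ne_zero hQ₂.ne_zero
  set localBound : ℕ → ℝ := fun p ↦ 6 * Q₁.gcd p * Q₂.gcd p * k.gcd p
    * (max (localCond η₁ p) (localCond η₂ p) : ℝ)⁻¹
  calc ‖orbitSum χ₁ ψ₁ χ₂ ψ₂ T σ‖ ≤ ∏ p : N.primeFactors, localBound p := by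
        rw [orbitSum_eq_prod χ₁ ψ₁ χ₂ ψ₂ hQ₁ hQ₂ hm₁ hn₁ hm₂ hn₂ hT, norm_prod]
        exact Finset.prod_le_prod (fun _ _ ↦ norm_nonneg _) fun p _ ↦
          norm_sum_localCosets_rowFactor_le hQ₁ hQ₂ χ₁ ψ₁ χ₂ ψ₂ hl₁ hl₂ η₁ η₂ σ k (h₁ p) (h₂ p)
    _ = ∏ p ∈ N.primeFactors, localBound p := Finset.prod_coe_sort _ _
    _ = 6 ^ N.primeFactors.card * N * (∏ p ∈ N.primeFactors, k.gcd p : ℕ)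
          * conductorFactor η₁ η₂ N := by
        simp_rw [localBound, Finset.prod_mul_distrib, Finset.prod_const, ← Nat.cast_prod]
        rw [prod_primeFactors_gcd_eq_self hQ₁ (dvd_mul_right _ _) hN,
          prod_primeFactors_gcd_eq_self hQ₂ (dvd_mul_left _ _) hN, mul_assoc (6 ^ _),
          ← Nat.cast_mul, conductorFactor]
    _ ≤ 6 ^ N.primeFactors.card * N * k.gcd (radical N : ℕ) * conductorFactor η₁ η₂ N := by
        have := conductorFactor_nonneg η₁ η₂ N
        gcongr
        exact prod_primeFactors_gcd_le k N

lemma norm_orbitSum_lower_le (a c d : ℤ) :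
    ‖orbitSum χ₁ ψ₁ χ₂ ψ₂ T !![a, 0; c, d]‖ ≤ 6 ^ (Q₁ * Q₂).primeFactors.card * (Q₁ * Q₂ : ℕ)
      * c.gcd (radical (Q₁ * Q₂) : ℕ) * conductorFactor χ₁ χ₂ (Q₁ * Q₂) :=
  norm_orbitSum_le hQ₁ hQ₂ χ₁ ψ₁ χ₂ ψ₂ hm₁ hn₁ hm₂ hn₂ hT hm₁ hm₂ χ₁ χ₂ _ c
    (fun _ ↦ norm_sum_rowFactor_lower_le hQ₁ χ₁ ψ₁ hm₁ a d)
    fun _ ↦ norm_sum_rowFactor_lower_le hQ₂ χ₂ ψ₂ hm₂ a d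

lemma norm_orbitSum_upper_le (a b d : ℤ) :
    ‖orbitSum χ₁ ψ₁ χ₂ ψ₂ T !![a, b; 0, d]‖ ≤ 6 ^ (Q₁ * Q₂).primeFactors.card * (Q₁ * Q₂ : ℕ)
      * b.gcd (radical (Q₁ * Q₂) : ℕ) * conductorFactor ψ₁ ψ₂ (Q₁ * Q₂) :=
  norm_orbitSum_le hQ₁ hQ₂ χ₁ ψ₁ χ₂ ψ₂ hm₁ hn₁ hm₂ hn₂ hT hn₁ hn₂ ψ₁ ψ₂ _ b
    (fun _ ↦ norm_sum_rowFactor_upper_le hQ₁ χ₁ ψ₁ hn₁ a d)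
    fun _ ↦ norm_sum_rowFactor_upper_le hQ₂ χ₂ ψ₂ hn₂ a d

end OrbitSumBound

section Averaging

lemma pow_card_primeFactors_le_rpow {A ε : ℝ} (hA : 1 ≤ A) (hε : 0 < ε) :
    ∃ K : ℝ, 0 < K ∧ ∀ n : ℕ, n ≠ 0 → A ^ n.primeFactors.card ≤ K * (n : ℝ) ^ ε := by
  obtain ⟨M, hM⟩ := exists_nat_gt (A ^ (1 / ε))
  have factor_le {p : ℕ} (hp : 1 ≤ p) : A ≤ (if p < M then A else 1) * (p : ℝ) ^ ε := by
    split_ifs with hpM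
    · exact le_mul_of_one_le_right (by positivity) (Real.one_le_rpow (mod_cast hp) hε.le)
    · have root_le : A ^ (1 / ε) ≤ p := hM.le.trans (mod_cast not_lt.mp hpM)
      calc A = (A ^ (1 / ε)) ^ ε := by
            rw [← Real.rpow_mul (by positivity), one_div_mul_cancel hε.ne', Real.rpow_one]
        _ ≤ 1 * (p : ℝ) ^ ε := by rw [one_mul]; gcongr
  have small_primes_le (n : ℕ) : ∏ p ∈ n.primeFactors, (if p < M then A else 1) ≤ A ^ M := by
    rw [← Finset.prod_filter, Finset.prod_const]
    refine pow_le_pow_right₀ hA ?_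
    calc _ ≤ (Finset.range M).card := Finset.card_le_card fun p hp ↦
          Finset.mem_range.mpr (Finset.mem_filter.mp hp).2
      _ = M := Finset.card_range M
  have prod_primeFactors_le {n : ℕ} (hn : n ≠ 0) : ∏ p ∈ n.primeFactors, p ≤ n :=
    Nat.le_of_dvd (Nat.pos_of_ne_zero hn) (Nat.prod_primeFactors_dvd n)
  refine ⟨A ^ M, by positivity, fun n hn ↦ ?_⟩
  calc A ^ n.primeFactors.card = ∏ _p ∈ n.primeFactors, A := (Finset.prod_const A).symm
    _ ≤ ∏ p ∈ n.primeFactors, (if p < M then A else 1) * (p : ℝ) ^ ε :=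
        Finset.prod_le_prod (fun _ _ ↦ by positivity) fun p hp ↦
          factor_le (Nat.prime_of_mem_primeFactors hp).one_le
    _ = (∏ p ∈ n.primeFactors, if p < M then A else 1) * (∏ p ∈ n.primeFactors, p : ℕ) ^ ε := by
        rw [Finset.prod_mul_distrib, Real.finsetProd_rpow _ _ fun _ _ ↦ by positivity,
          Nat.cast_prod]
    _ ≤ A ^ M * (n : ℝ) ^ ε := by
        gcongr
        · exact small_primes_le n
        · exact prod_primeFactors_le hn

lemma card_divisors_radical (n : ℕ) :
    (radical n).divisors.card = 2 ^ n.primeFactors.card := by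
  rw [Nat.card_divisors radical_ne_zero, Nat.primeFactors_radical, ← Finset.prod_const]
  refine Finset.prod_congr rfl fun p hp ↦ ?_
  have p_dvd : p ∣ radical n := Nat.dvd_of_mem_primeFactors (by rwa [Nat.primeFactors_radical])
  rw [Nat.factorization_eq_one_of_squarefree squarefree_radical
    (Nat.prime_of_mem_primeFactors hp) p_dvd]

lemma card_multiples_mul_le (d : ℕ) {n : ℤ} (hn : 0 ≤ n) :
    (((Finset.Icc (-n) n).erase 0).filter fun c ↦ (d : ℤ) ∣ c).card * d ≤ 2 * n := by
  rcases Nat.eq_zero_or_pos d with rfl | hd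
  · simpa using hn
  have hd' : (0 : ℤ) < d := mod_cast hd
  have quotient_nonneg : 0 ≤ n / d := Int.ediv_nonneg hn hd'.le
  have subset : ((Finset.Icc (-n) n).erase 0).filter (fun c ↦ (d : ℤ) ∣ c)
      ⊆ ((Finset.Icc (-(n / d)) (n / d)).erase 0).image fun k ↦ (d : ℤ) * k := by
    intro c hc
    simp only [Finset.mem_filter, Finset.mem_erase, Finset.mem_Icc] at hc
    obtain ⟨⟨hc₀, hc₁, hc₂⟩, k, rfl⟩ := hc
    have k_le : k ≤ n / d := (Int.le_ediv_iff_mul_le hd').mpr (by linarith)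
    have neg_k_le : -k ≤ n / d := (Int.le_ediv_iff_mul_le hd').mpr (by linarith)
    refine Finset.mem_image_of_mem _ (Finset.mem_erase.mpr ⟨right_ne_zero_of_mul hc₀, ?_⟩)
    exact Finset.mem_Icc.mpr ⟨by linarith, k_le⟩
  have card_le := (Finset.card_le_card subset).trans Finset.card_image_le
  rw [Finset.card_erase_of_mem (Finset.mem_Icc.mpr ⟨by linarith, quotient_nonneg⟩),
    Int.card_Icc] at card_le
  calc _ ≤ 2 * (n / d) * d := by gcongr; omega
    _ = 2 * (n / d * d) := by ring
    _ ≤ 2 * n := by gcongr; exact Int.ediv_mul_le n hd'.ne'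

lemma sum_gcd_le {n : ℤ} (hn : 0 ≤ n) {R : ℕ} (hR : R ≠ 0) :
    ∑ c ∈ (Finset.Icc (-n) n).erase 0, (c.gcd R : ℤ) ≤ 2 * n * R.divisors.card := by
  have gcd_le (c : ℤ) : (c.gcd R : ℤ) ≤ ∑ d ∈ R.divisors, if (d : ℤ) ∣ c then (d : ℤ) else 0 := by
    have mem_divisors : c.gcd R ∈ R.divisors :=
      Nat.mem_divisors.mpr ⟨mod_cast Int.gcd_dvd_right c R, hR⟩
    refine le_of_eq_of_le ?_ (Finset.single_le_sum (fun d _ ↦ ?_) mem_divisors)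
    · rw [if_pos (Int.gcd_dvd_left c R)]
    · positivity
  calc ∑ c ∈ (Finset.Icc (-n) n).erase 0, (c.gcd R : ℤ)
      ≤ ∑ c ∈ (Finset.Icc (-n) n).erase 0, ∑ d ∈ R.divisors, if (d : ℤ) ∣ c then (d : ℤ) else 0 :=
        Finset.sum_le_sum fun c _ ↦ gcd_le c
    _ = ∑ d ∈ R.divisors,
          ((((Finset.Icc (-n) n).erase 0).filter fun c ↦ (d : ℤ) ∣ c).card * d : ℤ) := by
        rw [Finset.sum_comm]
        simp_rw [← Finset.sum_filter, Finset.sum_const, nsmul_eq_mul]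
    _ ≤ ∑ _d ∈ R.divisors, 2 * n := Finset.sum_le_sum fun d _ ↦ card_multiples_mul_le d hn
    _ = 2 * n * R.divisors.card := by rw [Finset.sum_const, nsmul_eq_mul, mul_comm]

lemma tsum_ite_abs_le_eq_sum (f : ℤ → ℝ) (C : ℝ) :
    ∑' c : ℤ, (if c ≠ 0 ∧ |(c : ℝ)| ≤ C then f c else 0)
      = ∑ c ∈ (Finset.Icc (-⌊C⌋) ⌊C⌋).erase 0, f c := by
  have mem_iff (c : ℤ) : c ∈ (Finset.Icc (-⌊C⌋) ⌊C⌋).erase 0 ↔ c ≠ 0 ∧ |(c : ℝ)| ≤ C := by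
    rw [Finset.mem_erase, Finset.mem_Icc, ← abs_le, Int.le_floor, Int.cast_abs]
  rw [tsum_eq_sum fun c hc ↦ if_neg (mt (mem_iff c).mpr hc)]
  exact Finset.sum_congr rfl fun c hc ↦ if_pos ((mem_iff c).mp hc)

lemma tsum_le_of_le_mul_gcd {f : ℤ → ℝ} {K : ℝ} (hK : 0 ≤ K) {R : ℕ} (hR : R ≠ 0)
    (hf : ∀ c, f c ≤ K * c.gcd R) {C : ℝ} (hC : 0 ≤ C) :
    ∑' c : ℤ, (if c ≠ 0 ∧ |(c : ℝ)| ≤ C then f c else 0) ≤ K * (2 * C * R.divisors.card) := by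
  rw [tsum_ite_abs_le_eq_sum]
  have gcd_sum_le := sum_gcd_le (Int.floor_nonneg.mpr hC) hR
  calc ∑ c ∈ (Finset.Icc (-⌊C⌋) ⌊C⌋).erase 0, f c
      ≤ K * ∑ c ∈ (Finset.Icc (-⌊C⌋) ⌊C⌋).erase 0, (c.gcd R : ℝ) := by
        rw [Finset.mul_sum]
        exact Finset.sum_le_sum fun c _ ↦ hf c
    _ ≤ K * (2 * ⌊C⌋ * R.divisors.card) := by gcongr; exact_mod_cast gcd_sum_le
    _ ≤ K * (2 * C * R.divisors.card) := by gcongr; exact Int.floor_le C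

lemma exists_tsum_le_of_le_mul_gcd_radical {ε : ℝ} (hε : 0 < ε) :
    ∃ cst : ℝ, 0 < cst ∧ ∀ (N : ℕ) (f : ℤ → ℝ) (M C : ℝ), N ≠ 0 → 0 ≤ M → 0 ≤ C →
      (∀ c, f c ≤ 6 ^ N.primeFactors.card * N * c.gcd (radical N : ℕ) * M) →
      ∑' c : ℤ, (if c ≠ 0 ∧ |(c : ℝ)| ≤ C then f c else 0)
        ≤ cst * C * (N : ℝ) ^ (1 + ε) * M := by
  obtain ⟨K, hK, pow_le⟩ := pow_card_primeFactors_le_rpow (by norm_num : (1 : ℝ) ≤ 12) hε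
  refine ⟨2 * K, by positivity, fun N f M C hN hM hC hf ↦ ?_⟩
  set ω := N.primeFactors.card
  have hf' (c : ℤ) : f c ≤ 6 ^ ω * N * M * c.gcd (radical N : ℕ) :=
    (hf c).trans_eq (mul_right_comm _ _ _)
  calc ∑' c : ℤ, (if c ≠ 0 ∧ |(c : ℝ)| ≤ C then f c else 0)
      ≤ 6 ^ ω * N * M * (2 * C * (radical N).divisors.card) :=
        tsum_le_of_le_mul_gcd (by positivity) radical_ne_zero hf' hC
    _ = 2 * C * N * M * 12 ^ ω := by
        rw [card_divisors_radical, show (12 : ℝ) = 6 * 2 by norm_num, mul_pow]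
        push_cast
        ring
    _ ≤ 2 * C * N * M * (K * (N : ℝ) ^ ε) := by gcongr; exact pow_le N hN
    _ = 2 * K * C * (N : ℝ) ^ (1 + ε) * M := by
        rw [Real.rpow_add (by positivity), Real.rpow_one]
        ring

end Averaging

theorem character_sum_w_bound_general {ε : ℝ} (hε : 0 < ε) :
    ∃ cst : ℝ, 0 < cst ∧
      ∀ Q₁ Q₂ : ℕ, Squarefree Q₁ → Squarefree Q₂ →
      ∀ m₁ n₁ : ℕ, m₁ ∣ Q₁ → n₁ ∣ Q₁ → ∀ m₂ n₂ : ℕ, m₂ ∣ Q₂ → n₂ ∣ Q₂ →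
      ∀ (χ₁ : DirichletCharacter ℂ m₁) (ψ₁ : DirichletCharacter ℂ n₁)
        (χ₂ : DirichletCharacter ℂ m₂) (ψ₂ : DirichletCharacter ℂ n₂)
        (T : Finset (Matrix (Fin 2) (Fin 2) ℤ)), IsGamma2Transversal Q₁ Q₂ T →
      ∀ C B : ℝ, 0 ≤ C → 0 ≤ B → ∀ a d : ℤ,
        (∑' c : ℤ, (if c ≠ 0 ∧ |(c : ℝ)| ≤ C
            then ‖orbitSum χ₁ ψ₁ χ₂ ψ₂ T !![a, 0; c, d]‖ else 0)
          ≤ cst * C * ((Q₁ : ℝ) * (Q₂ : ℝ)) ^ ((1 : ℝ) + ε)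
            * (∏ p ∈ Q₁.primeFactors \ (Q₁.gcd Q₂).primeFactors, (localCond χ₁ p : ℝ)⁻¹)
            * (∏ p ∈ Q₂.primeFactors \ (Q₁.gcd Q₂).primeFactors, (localCond χ₂ p : ℝ)⁻¹)
            * ∏ p ∈ (Q₁.gcd Q₂).primeFactors, (max (localCond χ₁ p) (localCond χ₂ p) : ℝ)⁻¹) ∧
        (∑' b : ℤ, (if b ≠ 0 ∧ |(b : ℝ)| ≤ B
            then ‖orbitSum χ₁ ψ₁ χ₂ ψ₂ T !![a, b; 0, d]‖ else 0)
          ≤ cst * B * ((Q₁ : ℝ) * (Q₂ : ℝ)) ^ ((1 : ℝ) + ε)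
            * (∏ p ∈ Q₁.primeFactors \ (Q₁.gcd Q₂).primeFactors, (localCond ψ₁ p : ℝ)⁻¹)
            * (∏ p ∈ Q₂.primeFactors \ (Q₁.gcd Q₂).primeFactors, (localCond ψ₂ p : ℝ)⁻¹)
            * ∏ p ∈ (Q₁.gcd Q₂).primeFactors, (max (localCond ψ₁ p) (localCond ψ₂ p) : ℝ)⁻¹) := by
  obtain ⟨cst, hcst, averaged⟩ := exists_tsum_le_of_le_mul_gcd_radical hε
  refine ⟨cst, hcst, fun Q₁ Q₂ hQ₁ hQ₂ m₁ n₁ hm₁ hn₁ m₂ n₂ hm₂ hn₂ χ₁ ψ₁ χ₂ ψ₂ T hT C B hC hB a d ↦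
    ?_⟩
  have hN : Q₁ * Q₂ ≠ 0 := mul_ne_zero hQ₁.ne_zero hQ₂.ne_zero
  have lower := averaged _ _ _ C hN (conductorFactor_nonneg χ₁ χ₂ _) hC fun c ↦
    norm_orbitSum_lower_le hQ₁ hQ₂ χ₁ ψ₁ χ₂ ψ₂ hm₁ hn₁ hm₂ hn₂ hT a c d
  have upper := averaged _ _ _ B hN (conductorFactor_nonneg ψ₁ ψ₂ _) hB fun b ↦
    norm_orbitSum_upper_le hQ₁ hQ₂ χ₁ ψ₁ χ₂ ψ₂ hm₁ hn₁ hm₂ hn₂ hT a b d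
  rw [conductorFactor_mul_eq _ _ hQ₁.ne_zero hQ₂.ne_zero hm₁ hm₂, Nat.cast_mul] at lower
  rw [conductorFactor_mul_eq _ _ hQ₁.ne_zero hQ₂.ne_zero hn₁ hn₂, Nat.cast_mul] at upper
  simp only [← mul_assoc] at lower upper
  exact ⟨lower, upper⟩

/-- Lemma 11.1: character sum bound for `w(σ)`.  -/
theorem character_sum_w_bound :
    ∀ ε : ℝ, 0 < ε → ∃ cst : ℝ, 0 < cst ∧
      ∀ (Q₁ Q₂ : ℕ), 0 < Q₁ → 0 < Q₂ → Squarefree Q₁ → Squarefree Q₂ →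
      ∀ (m₁ n₁ : ℕ), m₁ ∣ Q₁ → n₁ ∣ Q₁ → ∀ (m₂ n₂ : ℕ), m₂ ∣ Q₂ → n₂ ∣ Q₂ →
      ∀ (χ₁ : DirichletCharacter ℂ m₁) (ψ₁ : DirichletCharacter ℂ n₁)
        (χ₂ : DirichletCharacter ℂ m₂) (ψ₂ : DirichletCharacter ℂ n₂)
        (T : Finset (Matrix (Fin 2) (Fin 2) ℤ)),
        (∀ τ ∈ T, τ.det = 1) →
        (∀ g : Matrix (Fin 2) (Fin 2) ℤ, g.det = 1 →
          ∃! τ, τ ∈ T ∧ ∃ γ, InGamma2 Q₁ Q₂ γ ∧ g = γ * τ) →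
        -- the weight `α` and the orbital sum `w`
        ∀ C B : ℝ, 1 ≤ C → 1 ≤ B → ∀ e : ℤ, e = 1 ∨ e = -1 →
          (letI α : Matrix (Fin 2) (Fin 2) ℤ → ℂ := fun g =>
            χ₁ ((g 0 0 : ZMod m₁)) * ψ₁ ((g 0 1 : ZMod n₁))
              * χ₂ ((g 1 0 : ZMod m₂)) * ψ₂ ((g 1 1 : ZMod n₂))
          letI w : Matrix (Fin 2) (Fin 2) ℤ → ℝ := fun σ =>
            ‖∑ τ ∈ T, α (τ * σ) * (starRingEnd ℂ) (α τ)‖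
          ((∑' c : ℤ, if c ≠ 0 ∧ |(c : ℝ)| ≤ C then w !![e, 0; c, e] else 0)
              ≤ cst * C * ((Q₁ : ℝ) * (Q₂ : ℝ)) ^ ((1 : ℝ) + ε)
                * (∏ p ∈ Q₁.primeFactors \ (Nat.gcd Q₁ Q₂).primeFactors,
                    ((localCond χ₁ p : ℝ))⁻¹)
                * (∏ p ∈ Q₂.primeFactors \ (Nat.gcd Q₁ Q₂).primeFactors,
                    ((localCond χ₂ p : ℝ))⁻¹)
                * (∏ p ∈ (Nat.gcd Q₁ Q₂).primeFactors,
                    ((max (localCond χ₁ p) (localCond χ₂ p) : ℝ))⁻¹)) ∧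
          ((∑' b : ℤ, if b ≠ 0 ∧ |(b : ℝ)| ≤ B then w !![e, b; 0, e] else 0)
              ≤ cst * B * ((Q₁ : ℝ) * (Q₂ : ℝ)) ^ ((1 : ℝ) + ε)
                * (∏ p ∈ Q₁.primeFactors \ (Nat.gcd Q₁ Q₂).primeFactors,
                    ((localCond ψ₁ p : ℝ))⁻¹)
                * (∏ p ∈ Q₂.primeFactors \ (Nat.gcd Q₁ Q₂).primeFactors,
                    ((localCond ψ₂ p : ℝ))⁻¹)
                * (∏ p ∈ (Nat.gcd Q₁ Q₂).primeFactors,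
                    ((max (localCond ψ₁ p) (localCond ψ₂ p) : ℝ))⁻¹))) := by
  intro ε hε
  obtain ⟨cst, hcst, bound⟩ := character_sum_w_bound_general hε
  exact ⟨cst, hcst, fun Q₁ Q₂ _ _ hQ₁ hQ₂ m₁ n₁ hm₁ hn₁ m₂ n₂ hm₂ hn₂ χ₁ ψ₁ χ₂ ψ₂ T hdet hexists
    C B hC hB e _ ↦ bound Q₁ Q₂ hQ₁ hQ₂ m₁ n₁ hm₁ hn₁ m₂ n₂ hm₂ hn₂ χ₁ ψ₁ χ₂ ψ₂ T ⟨hdet, hexists⟩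
      C B (zero_le_one.trans hC) (zero_le_one.trans hB) e e⟩
end

section
/- Let q be a squarefree positive integer and t : ℤ/qℤ → ℂ. Then for every ε > 0 there is a constant c(ε) > 0 such that Σ_{r₁, r₂ mod q} |t(r₁) t(r₂)| · Π_{p ∣ q} ( 𝟙_{r₁ ≡ r₂ (mod p)} + p⁻¹ ) ≤ c(ε) · q^ε · Σ_{r mod q} |t(r)|². -/
open scoped BigOperators

/-!
Write `K(n) = ∏_{p ∣ q} (𝟙_{p ∣ n} + p⁻¹)`. Since `2|t(r₁)t(r₂)| ≤ |t(r₁)|² + |t(r₂)|²`, the form is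
at most `Σ |t(r)|²` times the largest row sum of the matrix `K(r₁ - r₂)`. Expanding the product over
the squarefree modulus gives `K(n) = Σ_{d ∣ q, d ∣ n} d / q`. As exactly `q / d` of the residues
modulo `q` lie in a given class modulo `d`, each divisor of `q` contributes `1` to a row sum. Hence
every row sums to the number of divisors of `q`, which is `O_ε(q^ε)`.
-/

open Finset

theorem sum_sum_mul_mul_le_of_sum_le {ι R : Type*} [CommRing R] [LinearOrder R]
    [IsStrictOrderedRing R] {s : Finset ι} {K : ι → ι → R} {M : R}
    (hK : ∀ i ∈ s, ∀ j ∈ s, 0 ≤ K i j) (hrow : ∀ i ∈ s, ∑ j ∈ s, K i j ≤ M)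
    (hcol : ∀ j ∈ s, ∑ i ∈ s, K i j ≤ M) (x : ι → R) :
    ∑ i ∈ s, ∑ j ∈ s, x i * x j * K i j ≤ M * ∑ i ∈ s, x i ^ 2 := by
  have sum_sq_mul_le {L : ι → ι → R} (hL : ∀ i ∈ s, ∑ j ∈ s, L i j ≤ M) :
      ∑ i ∈ s, ∑ j ∈ s, x i ^ 2 * L i j ≤ M * ∑ i ∈ s, x i ^ 2 := by
    simp_rw [← mul_sum]
    rw [mul_comm M, sum_mul]
    exact sum_le_sum fun i hi => mul_le_mul_of_nonneg_left (hL i hi) (sq_nonneg _)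
  refine le_of_mul_le_mul_left ?_ (two_pos : (0 : R) < 2)
  calc 2 * ∑ i ∈ s, ∑ j ∈ s, x i * x j * K i j
      = ∑ i ∈ s, ∑ j ∈ s, 2 * x i * x j * K i j := by simp_rw [mul_sum, mul_assoc]
    _ ≤ ∑ i ∈ s, ∑ j ∈ s, (x i ^ 2 + x j ^ 2) * K i j :=
        sum_le_sum fun i hi => sum_le_sum fun j hj =>
          mul_le_mul_of_nonneg_right (two_mul_le_add_sq _ _) (hK i hi j hj)
    _ = ∑ i ∈ s, ∑ j ∈ s, x i ^ 2 * K i j + ∑ i ∈ s, ∑ j ∈ s, x j ^ 2 * K i j := by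
        simp_rw [add_mul, sum_add_distrib]
    _ = ∑ i ∈ s, ∑ j ∈ s, x i ^ 2 * K i j + ∑ j ∈ s, ∑ i ∈ s, x j ^ 2 * K i j := by
        rw [sum_comm (f := fun i j => x j ^ 2 * K i j)]
    _ ≤ M * ∑ i ∈ s, x i ^ 2 + M * ∑ i ∈ s, x i ^ 2 :=
        add_le_add (sum_sq_mul_le hrow) (sum_sq_mul_le hcol)
    _ = 2 * (M * ∑ i ∈ s, x i ^ 2) := (two_mul _).symm

section Bernoulli

variable {K : Type*} [Field K] [LinearOrder K] [IsStrictOrderedRing K]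

theorem natCast_add_one_le_div_mul_pow {b : K} (hb : 1 < b) (k : ℕ) :
    (k : K) + 1 ≤ b / (b - 1) * b ^ k := by
  have one_le_pow : 1 ≤ b ^ k := one_le_pow₀ hb.le
  have bernoulli : 1 + (k : K) * (b - 1) ≤ b ^ k := by
    simpa using one_add_mul_le_pow (a := b - 1) (by linarith) k
  rw [div_mul_eq_mul_div, le_div_iff₀ (sub_pos.mpr hb)]
  calc (k + 1) * (b - 1) ≤ (1 + k * (b - 1)) + (b - 1) * 1 := by linarith
    _ ≤ b ^ k + (b - 1) * b ^ k := by gcongr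
    _ = b * b ^ k := by ring

theorem natCast_add_one_le_pow {b : K} (hb : 2 ≤ b) (k : ℕ) : (k : K) + 1 ≤ b ^ k :=
  calc (k : K) + 1 ≤ 2 ^ k := mod_cast k.lt_two_pow_self
    _ ≤ b ^ k := by gcongr

end Bernoulli

theorem natCast_rpow_eq_prod_primeFactors {n : ℕ} (hn : n ≠ 0) (ε : ℝ) :
    (n : ℝ) ^ ε = ∏ p ∈ n.primeFactors, ((p : ℝ) ^ ε) ^ n.factorization p := by
  conv_lhs =>
    rw [← Nat.prod_factorization_pow_eq_self hn, Nat.prod_factorization_eq_prod_primeFactors]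
  rw [Nat.cast_prod, ← Real.finsetProd_rpow _ _ fun _ _ => by positivity]
  refine prod_congr rfl fun p _ => ?_
  rw [Nat.cast_pow, Real.rpow_pow_comm p.cast_nonneg]

theorem exists_card_divisors_le_mul_rpow {ε : ℝ} (hε : 0 < ε) :
    ∃ c : ℝ, 0 < c ∧ ∀ n : ℕ, n ≠ 0 → (#n.divisors : ℝ) ≤ c * (n : ℝ) ^ ε := by
  -- Only the primes below `2 ^ (1 / ε)` cost more than the factor `1`.
  obtain ⟨N, hN⟩ := exists_nat_ge ((2 : ℝ) ^ ε⁻¹)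
  set b : ℝ := 2 ^ ε
  have one_lt_b : 1 < b := Real.one_lt_rpow one_lt_two hε
  set C : ℝ := b / (b - 1)
  have one_le_C : 1 ≤ C := (one_le_div (by linarith)).mpr (by linarith)
  have local_bound {p : ℕ} (hp : p.Prime) (k : ℕ) :
      (k : ℝ) + 1 ≤ (if p < N then C else 1) * ((p : ℝ) ^ ε) ^ k := by
    split_ifs with h
    · have b_le : b ≤ (p : ℝ) ^ ε := Real.rpow_le_rpow two_pos.le (mod_cast hp.two_le) hε.le
      exact (natCast_add_one_le_div_mul_pow one_lt_b k).trans (by gcongr)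
    · rw [one_mul]
      have root_le : (2 : ℝ) ^ ε⁻¹ ≤ p := hN.trans (mod_cast not_lt.mp h)
      exact natCast_add_one_le_pow
        ((Real.rpow_inv_le_iff_of_pos two_pos.le p.cast_nonneg hε).mp root_le) k
  refine ⟨C ^ N, by positivity, fun n hn => ?_⟩
  have small_primes : ∏ p ∈ n.primeFactors, (if p < N then C else 1) ≤ C ^ N := by
    rw [← prod_filter, prod_const]
    refine pow_le_pow_right₀ one_le_C ?_
    calc #{p ∈ n.primeFactors | p < N} ≤ #(range N) :=
          card_le_card fun p hp => mem_range.mpr (mem_filter.mp hp).2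
      _ = N := card_range N
  calc (#n.divisors : ℝ) = ∏ p ∈ n.primeFactors, ((n.factorization p : ℝ) + 1) := by
        exact_mod_cast Nat.card_divisors hn
    _ ≤ ∏ p ∈ n.primeFactors, (if p < N then C else 1) * ((p : ℝ) ^ ε) ^ n.factorization p :=
        prod_le_prod (fun _ _ => by positivity)
          fun p hp => local_bound (Nat.prime_of_mem_primeFactors hp) _
    _ = (∏ p ∈ n.primeFactors, (if p < N then C else 1)) * (n : ℝ) ^ ε := by
        rw [prod_mul_distrib, natCast_rpow_eq_prod_primeFactors hn]
    _ ≤ C ^ N * (n : ℝ) ^ ε := by gcongr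

/-- The weight `∏_{p ∣ q} (𝟙_{p ∣ n} + p⁻¹)`; its value at `n = r₁ - r₂` measures how close
`(r₁, r₂)` is to the diagonal modulo `q`. -/
noncomputable def diagonalWeight (q : ℕ) (n : ℤ) : ℝ :=
  ∏ p ∈ q.primeFactors, ((if (p : ℤ) ∣ n then (1 : ℝ) else 0) + (p : ℝ)⁻¹)

/-- The arithmetic function `d ↦ d · 𝟙_{d ∣ n}`, whose divisor sum expands `diagonalWeight`. -/
def selfIfDvd (n : ℤ) : ArithmeticFunction ℝ where
  toFun d := if (d : ℤ) ∣ n then d else 0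
  map_zero' := by simp

theorem selfIfDvd_apply (n : ℤ) (d : ℕ) : selfIfDvd n d = if (d : ℤ) ∣ n then (d : ℝ) else 0 :=
  rfl

theorem isMultiplicative_selfIfDvd (n : ℤ) : (selfIfDvd n).IsMultiplicative := by
  refine ⟨by simp [selfIfDvd_apply], fun {d e} hde => ?_⟩
  have dvd_iff : (d * e : ℤ) ∣ n ↔ (d : ℤ) ∣ n ∧ (e : ℤ) ∣ n :=
    ⟨fun h => ⟨dvd_of_mul_right_dvd h, dvd_of_mul_left_dvd h⟩,
      fun h => (Nat.isCoprime_iff_coprime.mpr hde).mul_dvd h.1 h.2⟩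
  simp only [selfIfDvd_apply, Nat.cast_mul, dvd_iff, ite_zero_mul_ite_zero]

theorem diagonalWeight_nonneg (q : ℕ) (n : ℤ) : 0 ≤ diagonalWeight q n :=
  prod_nonneg fun p _ => by positivity

theorem diagonalWeight_sub_comm (q : ℕ) (m n : ℤ) :
    diagonalWeight q (m - n) = diagonalWeight q (n - m) := by
  simp only [diagonalWeight, dvd_sub_comm]

theorem diagonalWeight_eq_sum_divisors {q : ℕ} (hq : Squarefree q) (n : ℤ) :
    diagonalWeight q n = ∑ d ∈ q.divisors, if (d : ℤ) ∣ n then (d : ℝ) / q else 0 := by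
  have factor : ∀ p ∈ q.primeFactors,
      (if (p : ℤ) ∣ n then (1 : ℝ) else 0) + (p : ℝ)⁻¹ = (p : ℝ)⁻¹ * (1 + selfIfDvd n p) := by
    intro p hp
    have hp0 : (p : ℝ) ≠ 0 := mod_cast (Nat.prime_of_mem_primeFactors hp).ne_zero
    rw [selfIfDvd_apply]
    split_ifs <;> field_simp <;> ring
  have prod_inv : ∏ p ∈ q.primeFactors, (p : ℝ)⁻¹ = (q : ℝ)⁻¹ := by
    rw [prod_inv_distrib, ← Nat.cast_prod, Nat.prod_primeFactors_of_squarefree hq]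
  calc diagonalWeight q n
      = (q : ℝ)⁻¹ * ∑ d ∈ q.divisors, selfIfDvd n d := by
        rw [diagonalWeight, prod_congr rfl factor, prod_mul_distrib, prod_inv,
          (isMultiplicative_selfIfDvd n).prodPrimeFactors_one_add_of_squarefree hq]
    _ = ∑ d ∈ q.divisors, if (d : ℤ) ∣ n then (d : ℝ) / q else 0 := by
        simp_rw [mul_sum, selfIfDvd_apply, mul_ite, mul_zero, inv_mul_eq_div]

theorem card_range_filter_dvd_sub {q d : ℕ} (hd : d ∣ q) (r : ℤ) :
    #{s ∈ range q | (d : ℤ) ∣ r - (s : ℕ)} = q / d := by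
  rcases d.eq_zero_or_pos with rfl | hd_pos
  · simp [zero_dvd_iff.mp hd]
  have emod_nonneg : 0 ≤ r % d := Int.emod_nonneg r (mod_cast hd_pos.ne')
  have dvd_iff (s : ℕ) : (d : ℤ) ∣ r - s ↔ s ≡ (r % d).toNat [MOD d] := by
    rw [← Int.natCast_modEq_iff, Int.toNat_of_nonneg emod_nonneg, ← Int.modEq_iff_dvd]
    simp [Int.ModEq]
  simp_rw [dvd_iff]
  rw [← Nat.count_eq_card_filter_range, Nat.count_modEq_card q hd_pos, Nat.mod_eq_zero_of_dvd hd]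
  simp

theorem sum_range_diagonalWeight_sub {q : ℕ} (hq : Squarefree q) (r : ℤ) :
    ∑ s ∈ range q, diagonalWeight q (r - (s : ℕ)) = #q.divisors := by
  have class_sum : ∀ d ∈ q.divisors,
      ∑ s ∈ range q, (if (d : ℤ) ∣ r - (s : ℕ) then (d : ℝ) / q else 0) = 1 := by
    intro d hd
    have hdq : d ∣ q := Nat.dvd_of_mem_divisors hd
    have hd0 : (d : ℝ) ≠ 0 := mod_cast ne_zero_of_dvd_ne_zero hq.ne_zero hdq
    have hq0 : (q : ℝ) ≠ 0 := mod_cast hq.ne_zero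
    rw [← sum_filter, sum_const, card_range_filter_dvd_sub hdq, nsmul_eq_mul,
      Nat.cast_div hdq hd0]
    field_simp
  simp_rw [diagonalWeight_eq_sum_divisors hq]
  rw [sum_comm, sum_congr rfl class_sum, sum_const, nsmul_one]

theorem sum_sum_norm_mul_mul_diagonalWeight_le {A : Type*} [NonUnitalSeminormedRing A] {q : ℕ}
    (hq : Squarefree q) (t : ℕ → A) :
    ∑ r₁ ∈ range q, ∑ r₂ ∈ range q, ‖t r₁ * t r₂‖ * diagonalWeight q ((r₁ : ℤ) - (r₂ : ℤ))
      ≤ #q.divisors * ∑ r ∈ range q, ‖t r‖ ^ 2 := by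
  have col_sum (r₂ : ℕ) :
      ∑ r₁ ∈ range q, diagonalWeight q ((r₁ : ℤ) - (r₂ : ℤ)) = #q.divisors := by
    simp_rw [diagonalWeight_sub_comm q _ (r₂ : ℤ)]
    exact sum_range_diagonalWeight_sub hq r₂
  calc ∑ r₁ ∈ range q, ∑ r₂ ∈ range q, ‖t r₁ * t r₂‖ * diagonalWeight q ((r₁ : ℤ) - (r₂ : ℤ))
      ≤ ∑ r₁ ∈ range q, ∑ r₂ ∈ range q,
          ‖t r₁‖ * ‖t r₂‖ * diagonalWeight q ((r₁ : ℤ) - (r₂ : ℤ)) := by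
        gcongr
        · exact diagonalWeight_nonneg _ _
        · exact norm_mul_le _ _
    _ ≤ #q.divisors * ∑ r ∈ range q, ‖t r‖ ^ 2 :=
        sum_sum_mul_mul_le_of_sum_le (K := fun r₁ r₂ : ℕ => diagonalWeight q ((r₁ : ℤ) - (r₂ : ℤ)))
          (fun _ _ _ _ => diagonalWeight_nonneg _ _)
          (fun r₁ _ => (sum_range_diagonalWeight_sub hq r₁).le) (fun r₂ _ => (col_sum r₂).le)
          fun r => ‖t r‖

theorem balanced_diagonal_bound_general {ε : ℝ} (hε : 0 < ε) :
    ∃ c : ℝ, 0 < c ∧ ∀ q : ℕ, Squarefree q →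
      ∀ (A : Type*) [NonUnitalSeminormedRing A] (t : ZMod q → A),
        ∑ r₁ ∈ range q, ∑ r₂ ∈ range q,
            ‖t (r₁ : ZMod q) * t (r₂ : ZMod q)‖ * diagonalWeight q ((r₁ : ℤ) - (r₂ : ℤ))
          ≤ c * (q : ℝ) ^ ε * ∑ r ∈ range q, ‖t (r : ZMod q)‖ ^ 2 := by
  obtain ⟨c, hc, card_divisors_le⟩ := exists_card_divisors_le_mul_rpow hε
  refine ⟨c, hc, fun q hq A _ t => ?_⟩
  calc _ ≤ #q.divisors * ∑ r ∈ range q, ‖t (r : ZMod q)‖ ^ 2 :=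
        sum_sum_norm_mul_mul_diagonalWeight_le hq fun r => t (r : ZMod q)
    _ ≤ c * (q : ℝ) ^ ε * ∑ r ∈ range q, ‖t (r : ZMod q)‖ ^ 2 := by
        gcongr
        exact card_divisors_le q hq.ne_zero

/-- For squarefree `q` and `t : ℤ/qℤ → ℂ`, for every `ε > 0` there is
`c(ε) > 0` such that
`Σ_{r₁,r₂ mod q} |t(r₁)t(r₂)| Π_{p∣q} (𝟙_{r₁≡r₂ (p)} + p⁻¹) ≤ c(ε) q^ε Σ_{r mod q} |t(r)|²`. -/
theorem balanced_diagonal_bound :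
    ∀ ε : ℝ, 0 < ε → ∃ c : ℝ, 0 < c ∧
      ∀ (q : ℕ), 0 < q → Squarefree q → ∀ t : ZMod q → ℂ,
        (∑ r₁ ∈ Finset.range q, ∑ r₂ ∈ Finset.range q,
            ‖t (r₁ : ZMod q) * t (r₂ : ZMod q)‖ *
              ∏ p ∈ q.primeFactors,
                ((if ((p : ℤ)) ∣ ((r₁ : ℤ) - (r₂ : ℤ)) then (1 : ℝ) else 0) + (p : ℝ)⁻¹))
          ≤ c * (q : ℝ) ^ (ε : ℝ) *
            ∑ r ∈ Finset.range q, ‖t (r : ZMod q)‖ ^ 2 := by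
  intro ε hε
  obtain ⟨c, hc, bound⟩ := balanced_diagonal_bound_general hε
  exact ⟨c, hc, fun q _ hq t => bound q hq ℂ t⟩
end

section
/- For a positive integer q, let ℙ¹_q denote the set {(x,y) ∈ (ℤ/qℤ)² : gcd(x,y,q) = 1} modulo the equivalence (x₁,y₁) ∼ (x₂,y₂) iff (x₁,y₁) = (λx₂, λy₂) for some λ ∈ (ℤ/qℤ)^×. Then |ℙ¹_q| = q · Π_{p ∣ q} (1 + p⁻¹). For positive integers q₁, q₂ with q₀ = gcd(q₁,q₂), define π_{q₁,q₂} : SL₂(ℤ) → ℙ¹_{q₁} × ℙ¹_{q₂} by (a,b;c,d) ↦ ([a:b] mod q₁, [c:d] mod q₂). Then: (i) π_{q₁,q₂} is invariant under left multiplication by Γ₂(q₁,q₂) and induces a bijection from Γ₂(q₁,q₂)\SL₂(ℤ) onto the image of π_{q₁,q₂}; (ii) the image of π_{q₁,q₂} equals the set of pairs ([a:b],[c:d]) with gcd(ad − bc, q₀) = 1 (a condition independent of the choice of representatives); (iii) π_{q₁,q₂} is surjective if and only if q₀ = 1. -/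
open scoped BigOperators

/-- Pairs `(x,y) ∈ (ℤ/qℤ)²` with `gcd(x,y,q) = 1`, i.e. generating the unit ideal. -/
def CoprimePair (q : ℕ) := {v : ZMod q × ZMod q // IsCoprime v.1 v.2}

/-- The equivalence `(x₁,y₁) ∼ (x₂,y₂)` iff `(x₁,y₁) = (λx₂, λy₂)` for a unit `λ`. -/
def projSetoid (q : ℕ) : Setoid (CoprimePair q) where
  r v w := ∃ u : (ZMod q)ˣ, v.1.1 = (u : ZMod q) * w.1.1 ∧ v.1.2 = (u : ZMod q) * w.1.2
  iseqv := by
    constructor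
    · intro v; exact ⟨1, by simp, by simp⟩
    · rintro v w ⟨u, h1, h2⟩
      refine ⟨u⁻¹, ?_, ?_⟩
      · rw [h1, ← mul_assoc, ← Units.val_mul, inv_mul_cancel, Units.val_one, one_mul]
      · rw [h2, ← mul_assoc, ← Units.val_mul, inv_mul_cancel, Units.val_one, one_mul]
    · rintro a b c ⟨u, h1, h2⟩ ⟨u', h1', h2'⟩
      exact ⟨u * u', by rw [h1, h1', ← mul_assoc, Units.val_mul],
        by rw [h2, h2', ← mul_assoc, Units.val_mul]⟩

/-- The projective line `ℙ¹_q`. -/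
def ProjLine (q : ℕ) := Quotient (projSetoid q)

/-- The map `π_{q₁,q₂} : SL₂(ℤ) → ℙ¹_{q₁} × ℙ¹_{q₂}`, `(a,b;c,d) ↦ ([a:b], [c:d])`. -/
def piMap (q₁ q₂ : ℕ) (g : Matrix.SpecialLinearGroup (Fin 2) ℤ) :
    ProjLine q₁ × ProjLine q₂ :=
  have hdet : g.1 0 0 * g.1 1 1 - g.1 0 1 * g.1 1 0 = 1 := by
    have h := g.2; rwa [Matrix.det_fin_two] at h
  (Quotient.mk (projSetoid q₁)
    ⟨(((g.1 0 0 : ℤ) : ZMod q₁), ((g.1 0 1 : ℤ) : ZMod q₁)), by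
      refine ⟨((g.1 1 1 : ℤ) : ZMod q₁), -((g.1 1 0 : ℤ) : ZMod q₁), ?_⟩
      have h2 : ((g.1 0 0 * g.1 1 1 - g.1 0 1 * g.1 1 0 : ℤ) : ZMod q₁) = 1 := by
        rw [hdet]; norm_num
      push_cast at h2
      linear_combination h2⟩,
   Quotient.mk (projSetoid q₂)
    ⟨(((g.1 1 0 : ℤ) : ZMod q₂), ((g.1 1 1 : ℤ) : ZMod q₂)), by
      refine ⟨-((g.1 0 1 : ℤ) : ZMod q₂), ((g.1 0 0 : ℤ) : ZMod q₂), ?_⟩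
      have h2 : ((g.1 0 0 * g.1 1 1 - g.1 0 1 * g.1 1 0 : ℤ) : ZMod q₂) = 1 := by
        rw [hdet]; norm_num
      push_cast at h2
      linear_combination h2⟩)

/-- Membership in `Γ₂(q₁,q₂)` for `g ∈ SL₂(ℤ)`: `q₁ ∣ b` and `q₂ ∣ c`. -/
def InGamma2SL (q₁ q₂ : ℕ) (γ : Matrix.SpecialLinearGroup (Fin 2) ℤ) : Prop :=
  (q₁ : ℤ) ∣ γ.1 0 1 ∧ (q₂ : ℤ) ∣ γ.1 1 0

/-!
Everything rests on unimodular pairs, those generating the unit ideal. Units act freely on them, so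
`|ℙ¹_q|` is their number divided by `φ(q)`. The Chinese remainder theorem reduces the count to a
finite local ring `R` with maximal ideal `𝔪`, where it is `|R|² - |𝔪|²`.

Two unimodular pairs are proportional by a unit iff their cross determinant vanishes; for the rows
of `g₁` and `g₂` these determinants are the off-diagonal entries of `g₂ g₁⁻¹`, whence the fibres.

For the image, right multiplication by `SL₂(ℤ)` reduces `([a:b], [c:d])` to the case
`(a, b) = (1, 0)`, where `d` is a unit modulo `gcd(q₁, q₂)`. Since `ℤ/N` has stable range one, `c`
and `d` have integer lifts `C` and `D` with `q₁ C` coprime to `D`, and a Bézout identity for these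
completes `(C, D)` to a matrix with upper right entry divisible by `q₁`.
-/

section StableRange

lemma exists_isUnit_add_mul_of_isCoprime {R : Type*} [CommRing R] [Finite (MaximalSpectrum R)]
    {a b : R} (hab : IsCoprime a b) : ∃ m : R, IsUnit (a + m * b) := by
  classical
  have hcoprime : Pairwise (Function.onFun IsCoprime (MaximalSpectrum.asIdeal (R := R))) :=
    fun M N hMN ↦ Ideal.isCoprime_of_isMaximal fun h ↦ hMN (MaximalSpectrum.ext h)
  -- `a + m * b` avoids a maximal ideal `M` if `m ≡ 1` when `a ∈ M` (so `b ∉ M`) and `m ≡ 0`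
  -- otherwise.
  obtain ⟨m, hm⟩ := Ideal.exists_forall_sub_mem_ideal hcoprime
    fun M ↦ if a ∈ M.asIdeal then 1 else 0
  refine ⟨m, by_contra fun hunit ↦ ?_⟩
  obtain ⟨M, hM, hmem⟩ := exists_max_ideal_of_mem_nonunits hunit
  specialize hm ⟨M, hM⟩
  by_cases ha : a ∈ M
  · rw [if_pos ha] at hm
    have hb : b ∈ M := by
      convert M.sub_mem (M.sub_mem hmem ha) (M.mul_mem_right b hm) using 1
      ring
    obtain ⟨s, t, hst⟩ := hab
    exact hM.ne_top <| M.eq_top_iff_one.2 <|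
      hst ▸ M.add_mem (M.mul_mem_left s ha) (M.mul_mem_left t hb)
  · rw [if_neg ha, sub_zero] at hm
    exact ha ((M.add_mem_iff_left (M.mul_mem_right b hm)).1 hmem)

lemma isCoprime_intCast_iff_isUnit_gcd {R : Type*} [CommRing R] {x y : ℤ} :
    IsCoprime (x : R) (y : R) ↔ IsUnit (Int.gcd x y : R) := by
  constructor
  · intro h
    exact h.isUnit_of_dvd' (by simpa using map_dvd (Int.castRingHom R) (Int.gcd_dvd_left x y))
      (by simpa using map_dvd (Int.castRingHom R) (Int.gcd_dvd_right x y))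
  · rintro ⟨u, hu⟩
    have hbezout : (Int.gcd x y : R) = x * Int.gcdA x y + y * Int.gcdB x y := by
      exact_mod_cast congrArg (Int.cast : ℤ → R) (Int.gcd_eq_gcd_ab x y)
    refine ⟨↑u⁻¹ * Int.gcdA x y, ↑u⁻¹ * Int.gcdB x y, ?_⟩
    linear_combination u.inv_mul - (↑u⁻¹ : R) * (hu.trans hbezout)

lemma isCoprime_intCast_zmod_iff {n : ℕ} {x y : ℤ} :
    IsCoprime (x : ZMod n) (y : ZMod n) ↔ (Int.gcd x y).Coprime n := by
  rw [isCoprime_intCast_iff_isUnit_gcd, ZMod.isUnit_iff_coprime]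

lemma exists_lift_isCoprime_mul {q m : ℕ} [NeZero q] [NeZero m] {c d : ℤ}
    (hcd : IsCoprime (c : ZMod q) (d : ZMod q)) (hd : IsUnit (d : ZMod (m.gcd q))) :
    ∃ C D : ℤ, (C : ZMod q) = c ∧ (D : ZMod q) = d ∧ IsCoprime (m * C) D := by
  obtain ⟨C, hC, hC0⟩ : ∃ C : ℤ, (C : ZMod q) = c ∧ C ≠ 0 := by
    by_cases hc : c = 0
    · exact ⟨q, by simp [hc], mod_cast NeZero.ne q⟩
    · exact ⟨c, rfl, hc⟩
  set N := (m * C).natAbs with hN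
  have : NeZero N := ⟨by simp [hN, hC0, NeZero.ne]⟩
  have hdq : IsCoprime (d : ZMod N) ((q : ℤ) : ZMod N) := by
    rw [← hC, isCoprime_intCast_zmod_iff] at hcd
    rw [ZMod.coe_int_isUnit_iff_isCoprime, Int.isCoprime_iff_gcd_eq_one] at hd
    rw [isCoprime_intCast_zmod_iff, hN, Int.natAbs_mul]
    refine Nat.Coprime.mul_right ?_ ?_
    · simpa [Nat.Coprime, Int.gcd, Nat.gcd_comm, Nat.gcd_left_comm] using hd
    · simpa [Nat.Coprime, Int.gcd, Nat.gcd_comm, Nat.gcd_left_comm] using hcd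
  obtain ⟨t, ht⟩ := exists_isUnit_add_mul_of_isCoprime hdq
  obtain ⟨t, rfl⟩ := ZMod.intCast_surjective t
  refine ⟨C, d + t * q, hC, by simp, ?_⟩
  rw [← IsCoprime.abs_left_iff, Int.abs_eq_natAbs, ← hN, ← ZMod.coe_int_isUnit_iff_isCoprime]
  exact_mod_cast ht

end StableRange

open scoped MatrixGroups

section SL2

lemma exists_SL2_first_row {q : ℕ} [NeZero q] {a b : ℤ}
    (hab : IsCoprime (a : ZMod q) (b : ZMod q)) :
    ∃ g : SL(2, ℤ), (g 0 0 : ZMod q) = a ∧ (g 0 1 : ZMod q) = b := by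
  obtain ⟨A, B, hA, hB, hAB⟩ := exists_lift_isCoprime_mul (m := 1) hab (by
    rw [Nat.gcd_one_left]; exact isUnit_of_subsingleton _)
  rw [Nat.cast_one, one_mul] at hAB
  obtain ⟨g, rfl, rfl⟩ := hAB.exists_SL2_row 0
  exact ⟨g, hA, hB⟩

lemma exists_SL2_second_row {q₁ q₂ : ℕ} [NeZero q₁] [NeZero q₂] {c d : ℤ}
    (hcd : IsCoprime (c : ZMod q₂) (d : ZMod q₂)) (hd : IsUnit (d : ZMod (q₁.gcd q₂))) :
    ∃ g : SL(2, ℤ), (g 0 1 : ZMod q₁) = 0 ∧ (g 1 0 : ZMod q₂) = c ∧ (g 1 1 : ZMod q₂) = d := by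
  obtain ⟨C, D, hC, hD, y, x, hyx⟩ := exists_lift_isCoprime_mul hcd hd
  refine ⟨⟨!![x, -(q₁ * y); C, D], ?_⟩, ?_, hC, hD⟩
  · rw [Matrix.det_fin_two_of]
    linear_combination hyx
  · simp

lemma intCast_det_eq_one (R : Type*) [CommRing R] (g : SL(2, ℤ)) :
    (g 0 0 : R) * g 1 1 - g 0 1 * g 1 0 = 1 := by
  have h := g.det_coe
  rw [Matrix.det_fin_two] at h
  exact_mod_cast congrArg (Int.cast : ℤ → R) h

lemma mul_inv_apply_zero_one {R : Type*} [CommRing R] (g h : SL(2, R)) :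
    (g * h⁻¹) 0 1 = h 0 0 * g 0 1 - h 0 1 * g 0 0 := by
  simp only [Matrix.SpecialLinearGroup.coe_mul, Matrix.SpecialLinearGroup.coe_inv,
    Matrix.adjugate_fin_two, Matrix.mul_apply, Fin.sum_univ_two, Matrix.of_apply,
    Matrix.cons_val_zero, Matrix.cons_val_one]
  ring

lemma mul_inv_apply_one_zero {R : Type*} [CommRing R] (g h : SL(2, R)) :
    (g * h⁻¹) 1 0 = h 1 1 * g 1 0 - h 1 0 * g 1 1 := by
  simp only [Matrix.SpecialLinearGroup.coe_mul, Matrix.SpecialLinearGroup.coe_inv,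
    Matrix.adjugate_fin_two, Matrix.mul_apply, Fin.sum_univ_two, Matrix.of_apply,
    Matrix.cons_val_zero, Matrix.cons_val_one]
  ring

lemma exists_SL2_rows {q₁ q₂ : ℕ} [NeZero q₁] [NeZero q₂] {a b c d : ℤ}
    (hab : IsCoprime (a : ZMod q₁) (b : ZMod q₁)) (hcd : IsCoprime (c : ZMod q₂) (d : ZMod q₂))
    (hdet : IsUnit ((a * d - b * c : ℤ) : ZMod (q₁.gcd q₂))) :
    ∃ g : SL(2, ℤ), (g 0 0 * b : ZMod q₁) = g 0 1 * a ∧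
      (g 1 0 : ZMod q₂) = c ∧ (g 1 1 : ZMod q₂) = d := by
  obtain ⟨h, ha, hb⟩ := exists_SL2_first_row hab
  -- Right multiplication by `h⁻¹` sends `(a, b)` to `(1, 0)` modulo `q₁`, and `(c, d)` to the
  -- following pair.
  have hcd' : IsCoprime ((c * h 1 1 - d * h 1 0 : ℤ) : ZMod q₂)
      ((h 0 0 * d - h 0 1 * c : ℤ) : ZMod q₂) := by
    obtain ⟨s, t, hst⟩ := hcd
    refine ⟨s * h 0 0 + t * h 0 1, s * h 1 0 + t * h 1 1, ?_⟩
    push_cast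
    linear_combination hst + (s * c + t * d) * intCast_det_eq_one (ZMod q₂) h
  have hd' : IsUnit ((h 0 0 * d - h 0 1 * c : ℤ) : ZMod (q₁.gcd q₂)) := by
    have ha' := congrArg (ZMod.castHom (Nat.gcd_dvd_left q₁ q₂) (ZMod (q₁.gcd q₂))) ha
    have hb' := congrArg (ZMod.castHom (Nat.gcd_dvd_left q₁ q₂) (ZMod (q₁.gcd q₂))) hb
    simp only [map_intCast] at ha' hb'
    push_cast at hdet ⊢
    rwa [ha', hb']
  obtain ⟨k, hk, hkc, hkd⟩ := exists_SL2_second_row hcd' hd'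
  refine ⟨k * h, ?_, ?_, ?_⟩ <;>
    simp only [Matrix.SpecialLinearGroup.coe_mul, Matrix.mul_apply, Fin.sum_univ_two] <;> push_cast
  · linear_combination (k 0 0 : ZMod q₁) * (b * ha - a * hb) +
      (h 1 0 * b - h 1 1 * a : ZMod q₁) * hk
  · rw [hkc, hkd]
    push_cast
    linear_combination (c : ZMod q₂) * intCast_det_eq_one (ZMod q₂) h
  · rw [hkc, hkd]
    push_cast
    linear_combination (d : ZMod q₂) * intCast_det_eq_one (ZMod q₂) h

end SL2

section UnimodularPair

/-- Pairs generating the unit ideal of an arbitrary commutative ring `R`, so that products of rings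
and finite local rings can be counted; `CoprimePair q` is `UnimodularPair (ZMod q)`. -/
abbrev UnimodularPair (R : Type*) [CommRing R] := {v : R × R // IsCoprime v.1 v.2}

variable {R S : Type*} [CommRing R] [CommRing S]

instance : MulAction Rˣ (UnimodularPair R) where
  smul u v := ⟨u • v.1, (isCoprime_group_smul u _ _).2 v.2⟩
  one_smul _ := Subtype.ext (one_smul _ _)
  mul_smul u u' v := Subtype.ext (mul_smul u u' v.1)

lemma UnimodularPair.stabilizer_eq_bot (v : UnimodularPair R) :
    MulAction.stabilizer Rˣ v = ⊥ := by
  rw [eq_bot_iff]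
  intro u hu
  obtain ⟨s, t, hst⟩ := v.2
  have hfix : u • v.1 = v.1 := congrArg Subtype.val hu
  have h₁ : (u : R) * v.1.1 = v.1.1 := congrArg Prod.fst hfix
  have h₂ : (u : R) * v.1.2 = v.1.2 := congrArg Prod.snd hfix
  refine Units.ext ?_
  rw [Units.val_one]
  linear_combination s * h₁ + t * h₂ - (u - 1 : R) * hst

lemma isCoprime_prod_iff {x y : R × S} :
    IsCoprime x y ↔ IsCoprime x.1 y.1 ∧ IsCoprime x.2 y.2 := by
  constructor
  · exact fun h ↦ ⟨h.map (RingHom.fst R S), h.map (RingHom.snd R S)⟩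
  · rintro ⟨⟨s, t, h⟩, s', t', h'⟩
    exact ⟨(s, s'), (t, t'), Prod.ext h h'⟩

lemma card_unimodularPair_prod : Nat.card (UnimodularPair (R × S)) =
    Nat.card (UnimodularPair R) * Nat.card (UnimodularPair S) := by
  rw [← Nat.card_prod]
  exact Nat.card_congr <| ((Equiv.prodProdProdComm R S R S).subtypeEquiv
    fun _ ↦ isCoprime_prod_iff).trans Equiv.subtypeProdEquivProd

lemma card_unimodularPair_congr (e : R ≃+* S) :
    Nat.card (UnimodularPair R) = Nat.card (UnimodularPair S) :=
  Nat.card_congr <| (e.toEquiv.prodCongr e.toEquiv).subtypeEquiv fun v ↦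
    ⟨fun h ↦ h.map (e : R →+* S), fun h ↦ by simpa using h.map (e.symm : S →+* R)⟩

lemma card_units_add_card_nonunits (M : Type*) [Monoid M] [Finite M] :
    Nat.card Mˣ + Nat.card (nonunits M) = Nat.card M := by
  classical
  rw [Nat.card_congr (Equiv.ofInjective _ (Units.val_injective (α := M))), ← Nat.card_sum]
  exact Nat.card_congr (Equiv.sumCompl (IsUnit : M → Prop))

lemma isCoprime_iff_isUnit_or_isUnit [IsLocalRing R] {x y : R} :
    IsCoprime x y ↔ IsUnit x ∨ IsUnit y := by
  constructor
  · rintro ⟨s, t, hst⟩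
    exact (IsLocalRing.isUnit_or_isUnit_of_add_one hst).imp
      isUnit_of_mul_isUnit_right isUnit_of_mul_isUnit_right
  · rintro (⟨u, rfl⟩ | ⟨u, rfl⟩)
    · exact ⟨↑u⁻¹, 0, by simp⟩
    · exact ⟨0, ↑u⁻¹, by simp⟩

lemma card_unimodularPair_add_sq [IsLocalRing R] [Finite R] :
    Nat.card (UnimodularPair R) + Nat.card (nonunits R) ^ 2 = Nat.card R ^ 2 := by
  classical
  have hcompl : {v : R × R // ¬ IsCoprime v.1 v.2} ≃ nonunits R × nonunits R :=
    (Equiv.subtypeEquivRight fun v ↦ by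
      rw [isCoprime_iff_isUnit_or_isUnit, not_or]; rfl).trans Equiv.subtypeProdEquivProd
  rw [sq, sq, ← Nat.card_prod, ← Nat.card_prod, ← Nat.card_congr hcompl, ← Nat.card_sum]
  exact Nat.card_congr (Equiv.sumCompl _)

end UnimodularPair

section Cardinality

lemma isLocalRing_zmod_prime_pow {p : ℕ} [Fact p.Prime] (k : ℕ) :
    IsLocalRing (ZMod (p ^ (k + 1))) := by
  have : Fact (1 < p ^ (k + 1)) := ⟨Nat.one_lt_pow k.succ_ne_zero (Fact.out : p.Prime).one_lt⟩
  exact .of_surjective' (PadicInt.toZModPow (p := p) (k + 1)) (ZMod.ringHom_surjective _)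

lemma card_units_zmod (q : ℕ) [NeZero q] : Nat.card (ZMod q)ˣ = q.totient := by
  rw [Nat.card_eq_fintype_card, ZMod.card_units_eq_totient]

lemma card_nonunits_zmod_prime_pow {p : ℕ} [hp : Fact p.Prime] (k : ℕ) :
    Nat.card (nonunits (ZMod (p ^ (k + 1)))) = p ^ k := by
  have h := card_units_add_card_nonunits (ZMod (p ^ (k + 1)))
  rw [card_units_zmod, Nat.card_zmod, Nat.totient_prime_pow_succ hp.out] at h
  have hsplit : p ^ k * (p - 1) + p ^ k = p ^ (k + 1) := by
    rw [← Nat.mul_succ, Nat.succ_eq_add_one, Nat.sub_add_cancel hp.out.one_le, pow_succ]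
  omega

lemma card_unimodularPair_zmod {q : ℕ} (hq : q ≠ 0) :
    (Nat.card (UnimodularPair (ZMod q)) : ℚ) =
      q ^ 2 * ∏ p ∈ q.primeFactors, (1 - ((p : ℚ) ^ 2)⁻¹) := by
  induction q using Nat.recOnPosPrimePosCoprime with
  | zero => contradiction
  | one =>
    have h : IsCoprime (0 : ZMod 1) 0 := ⟨0, 0, Subsingleton.elim _ _⟩
    have : Unique (UnimodularPair (ZMod 1)) := ⟨⟨⟨0, h⟩⟩, fun _ ↦ Subsingleton.elim _ _⟩
    simp
  | prime_pow p n hp hn =>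
    obtain ⟨k, rfl⟩ := Nat.exists_eq_succ_of_ne_zero hn.ne'
    have : Fact p.Prime := ⟨hp⟩
    have := isLocalRing_zmod_prime_pow (p := p) k
    have h := card_unimodularPair_add_sq (R := ZMod (p ^ (k + 1)))
    rw [card_nonunits_zmod_prime_pow, Nat.card_zmod] at h
    rw [Nat.primeFactors_prime_pow k.succ_ne_zero hp, Finset.prod_singleton]
    have hp0 : (p : ℚ) ≠ 0 := mod_cast hp.ne_zero
    have hcard : (Nat.card (UnimodularPair (ZMod (p ^ (k + 1)))) : ℚ) + (p ^ k) ^ 2 =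
        (p ^ (k + 1)) ^ 2 := mod_cast h
    rw [eq_sub_of_add_eq hcard]
    push_cast
    field_simp
    ring
  | coprime m n hm hn hmn ihm ihn =>
    rw [card_unimodularPair_congr (ZMod.chineseRemainder hmn), card_unimodularPair_prod,
      Nat.cast_mul, ihm (by omega), ihn (by omega), hmn.primeFactors_mul,
      Finset.prod_union hmn.disjoint_primeFactors]
    push_cast
    ring

lemma card_unimodularPair_eq_mul_card_units (q : ℕ) :
    Nat.card (UnimodularPair (ZMod q)) = Nat.card (ProjLine q) * Nat.card (ZMod q)ˣ := by
  have hsetoid : projSetoid q = MulAction.orbitRel (ZMod q)ˣ (UnimodularPair (ZMod q)) := by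
    ext v w
    constructor
    · rintro ⟨u, h₁, h₂⟩
      exact ⟨u, Subtype.ext (Prod.ext h₁.symm h₂.symm)⟩
    · rintro ⟨u, rfl⟩
      exact ⟨u, rfl, rfl⟩
  rw [ProjLine, hsetoid, ← Nat.card_prod]
  exact Nat.card_congr (MulAction.selfEquivOrbitsQuotientProd UnimodularPair.stabilizer_eq_bot)

lemma card_projLine {q : ℕ} (hq : q ≠ 0) :
    (Nat.card (ProjLine q) : ℚ) = q * ∏ p ∈ q.primeFactors, (1 + (p : ℚ)⁻¹) := by
  have : NeZero q := ⟨hq⟩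
  have hφ : (q.totient : ℚ) ≠ 0 := mod_cast (Nat.totient_pos.2 (Nat.pos_of_ne_zero hq)).ne'
  refine mul_right_cancel₀ hφ ?_
  calc (Nat.card (ProjLine q) : ℚ) * q.totient
      = Nat.card (UnimodularPair (ZMod q)) := by
        rw [card_unimodularPair_eq_mul_card_units, card_units_zmod, Nat.cast_mul]
    _ = q ^ 2 * ∏ p ∈ q.primeFactors, (1 + (p : ℚ)⁻¹) * (1 - (p : ℚ)⁻¹) := by
        rw [card_unimodularPair_zmod hq]
        congr! 2
        ring
    _ = q * (∏ p ∈ q.primeFactors, (1 + (p : ℚ)⁻¹)) * q.totient := by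
        rw [Nat.totient_eq_mul_prod_factors, Finset.prod_mul_distrib]
        ring

end Cardinality

section PiMap

lemma UnimodularPair.exists_units_mul_eq_iff {R : Type*} [CommRing R] {v w : UnimodularPair R} :
    (∃ u : Rˣ, v.1.1 = u * w.1.1 ∧ v.1.2 = u * w.1.2) ↔ v.1.1 * w.1.2 = v.1.2 * w.1.1 := by
  constructor
  · rintro ⟨u, h₁, h₂⟩
    rw [h₁, h₂]
    ring
  · intro h
    obtain ⟨⟨a, b⟩, s, t, hst⟩ := v
    obtain ⟨⟨c, d⟩, s', t', hst'⟩ := w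
    dsimp only at h hst hst' ⊢
    have hc : a = (s' * a + t' * b) * c := by linear_combination t' * h - a * hst'
    have hd : b = (s' * a + t' * b) * d := by linear_combination -s' * h - b * hst'
    have hunit : (s' * a + t' * b) * (s * c + t * d) = 1 := by
      linear_combination hst - s * hc - t * hd
    exact ⟨Units.mkOfMulEqOne _ _ hunit, hc, hd⟩

lemma ProjLine.mk_eq_mk_iff {q : ℕ} {v w : CoprimePair q} :
    Quotient.mk (projSetoid q) v = Quotient.mk (projSetoid q) w ↔
      v.1.1 * w.1.2 = v.1.2 * w.1.1 :=
  Quotient.eq.trans UnimodularPair.exists_units_mul_eq_iff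

variable {q₁ q₂ : ℕ}

lemma piMap_eq_mk_iff {g : SL(2, ℤ)} {v : CoprimePair q₁} {w : CoprimePair q₂} :
    piMap q₁ q₂ g = (Quotient.mk (projSetoid q₁) v, Quotient.mk (projSetoid q₂) w) ↔
      g 0 0 * v.1.2 = g 0 1 * v.1.1 ∧ g 1 0 * w.1.2 = g 1 1 * w.1.1 :=
  Prod.ext_iff.trans (and_congr ProjLine.mk_eq_mk_iff ProjLine.mk_eq_mk_iff)

lemma piMap_eq_piMap_iff {g₁ g₂ : SL(2, ℤ)} :
    piMap q₁ q₂ g₁ = piMap q₁ q₂ g₂ ↔ InGamma2SL q₁ q₂ (g₂ * g₁⁻¹) := by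
  rw [InGamma2SL, mul_inv_apply_zero_one, mul_inv_apply_one_zero,
    ← ZMod.intCast_zmod_eq_zero_iff_dvd, ← ZMod.intCast_zmod_eq_zero_iff_dvd]
  push_cast
  rw [sub_eq_zero, sub_eq_zero]
  exact piMap_eq_mk_iff.trans (and_congr_right' eq_comm)

lemma piMap_eq_piMap_iff_exists {g₁ g₂ : SL(2, ℤ)} :
    piMap q₁ q₂ g₁ = piMap q₁ q₂ g₂ ↔ ∃ γ, InGamma2SL q₁ q₂ γ ∧ g₂ = γ * g₁ := by
  rw [piMap_eq_piMap_iff]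
  constructor
  · exact fun h ↦ ⟨_, h, by group⟩
  · rintro ⟨γ, hγ, rfl⟩
    rwa [mul_inv_cancel_right]

/-- The determinant `ad - bc` of the matrix with rows `v = (a, b)` modulo `q₁` and `w = (c, d)`
modulo `q₂`, which is only defined modulo `gcd(q₁, q₂)`. -/
def rowDet (v : CoprimePair q₁) (w : CoprimePair q₂) : ZMod (q₁.gcd q₂) :=
  ZMod.castHom (Nat.gcd_dvd_left q₁ q₂) (ZMod (q₁.gcd q₂)) v.1.1 *
      ZMod.castHom (Nat.gcd_dvd_right q₁ q₂) (ZMod (q₁.gcd q₂)) w.1.2 -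
    ZMod.castHom (Nat.gcd_dvd_left q₁ q₂) (ZMod (q₁.gcd q₂)) v.1.2 *
      ZMod.castHom (Nat.gcd_dvd_right q₁ q₂) (ZMod (q₁.gcd q₂)) w.1.1

lemma isUnit_rowDet_of_piMap_eq {g : SL(2, ℤ)} {v : CoprimePair q₁} {w : CoprimePair q₂}
    (h : piMap q₁ q₂ g = (Quotient.mk (projSetoid q₁) v, Quotient.mk (projSetoid q₂) w)) :
    IsUnit (rowDet v w) := by
  obtain ⟨u, ha, hb⟩ := Quotient.exact (congrArg Prod.fst h)
  obtain ⟨u', hc, hd⟩ := Quotient.exact (congrArg Prod.snd h)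
  let φ₁ := ZMod.castHom (Nat.gcd_dvd_left q₁ q₂) (ZMod (q₁.gcd q₂))
  let φ₂ := ZMod.castHom (Nat.gcd_dvd_right q₁ q₂) (ZMod (q₁.gcd q₂))
  refine IsUnit.of_mul_eq_one (φ₁ u * φ₂ u') ?_
  have ha' := congrArg φ₁ ha
  have hb' := congrArg φ₁ hb
  have hc' := congrArg φ₂ hc
  have hd' := congrArg φ₂ hd
  simp only [map_mul, map_intCast] at ha' hb' hc' hd'
  have hdet := intCast_det_eq_one (ZMod (q₁.gcd q₂)) g
  rw [ha', hb', hc', hd'] at hdet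
  rw [← hdet, rowDet]
  ring

lemma exists_piMap_eq_of_isUnit_rowDet [NeZero q₁] [NeZero q₂] {v : CoprimePair q₁}
    {w : CoprimePair q₂} (h : IsUnit (rowDet v w)) : ∃ g, piMap q₁ q₂ g =
      (Quotient.mk (projSetoid q₁) v, Quotient.mk (projSetoid q₂) w) := by
  simp only [piMap_eq_mk_iff]
  obtain ⟨⟨a, b⟩, hab⟩ := v
  obtain ⟨⟨c, d⟩, hcd⟩ := w
  obtain ⟨a, rfl⟩ := ZMod.intCast_surjective a
  obtain ⟨b, rfl⟩ := ZMod.intCast_surjective b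
  obtain ⟨c, rfl⟩ := ZMod.intCast_surjective c
  obtain ⟨d, rfl⟩ := ZMod.intCast_surjective d
  have hdet : IsUnit ((a * d - b * c : ℤ) : ZMod (q₁.gcd q₂)) := by
    simpa [rowDet] using h
  obtain ⟨g, hrow, hc, hd⟩ := exists_SL2_rows hab hcd hdet
  exact ⟨g, hrow, by rw [hc, hd, mul_comm]⟩

lemma mem_range_piMap_iff [NeZero q₁] [NeZero q₂] {v : CoprimePair q₁} {w : CoprimePair q₂} :
    (Quotient.mk (projSetoid q₁) v, Quotient.mk (projSetoid q₂) w) ∈ Set.range (piMap q₁ q₂) ↔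
      IsUnit (rowDet v w) :=
  ⟨fun ⟨_, h⟩ ↦ isUnit_rowDet_of_piMap_eq h, exists_piMap_eq_of_isUnit_rowDet⟩

lemma range_piMap [NeZero q₁] [NeZero q₂] : Set.range (piMap q₁ q₂) =
    {x | ∃ (v : CoprimePair q₁) (w : CoprimePair q₂),
      x = (Quotient.mk (projSetoid q₁) v, Quotient.mk (projSetoid q₂) w) ∧
        IsUnit (rowDet v w)} := by
  ext x
  constructor
  · rintro ⟨g, rfl⟩
    exact ⟨_, _, rfl, isUnit_rowDet_of_piMap_eq rfl⟩
  · rintro ⟨v, w, rfl, h⟩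
    exact mem_range_piMap_iff.2 h

lemma surjective_piMap_iff [NeZero q₁] [NeZero q₂] :
    Function.Surjective (piMap q₁ q₂) ↔ q₁.gcd q₂ = 1 := by
  rw [← ZMod.subsingleton_iff]
  constructor
  · intro h
    let v : CoprimePair q₁ := ⟨(1, 0), isCoprime_one_left⟩
    let w : CoprimePair q₂ := ⟨(1, 0), isCoprime_one_left⟩
    have hdet : IsUnit (rowDet v w) := mem_range_piMap_iff.1 (h _)
    simp only [rowDet, v, w, map_zero, mul_zero, zero_mul, sub_zero, isUnit_zero_iff] at hdet
    exact subsingleton_of_zero_eq_one hdet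
  · rintro h ⟨⟨v⟩, ⟨w⟩⟩
    exact mem_range_piMap_iff.2 (isUnit_of_subsingleton _)

end PiMap

/-- the projective-line parametrization of `Γ₂(q₁,q₂)\SL₂(ℤ)`. -/
theorem projective_line_parametrization (q₁ q₂ : ℕ) (hq₁ : 0 < q₁) (hq₂ : 0 < q₂) :
    -- cardinality of `ℙ¹_q`
    (∀ q : ℕ, 0 < q →
      (Nat.card (ProjLine q) : ℝ) = (q : ℝ) * ∏ p ∈ q.primeFactors, (1 + (p : ℝ)⁻¹)) ∧
    -- (i) invariance under `Γ₂(q₁,q₂)` and injectivity on cosets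
    (∀ γ : Matrix.SpecialLinearGroup (Fin 2) ℤ, InGamma2SL q₁ q₂ γ →
      ∀ g, piMap q₁ q₂ (γ * g) = piMap q₁ q₂ g) ∧
    (∀ g₁ g₂ : Matrix.SpecialLinearGroup (Fin 2) ℤ,
      piMap q₁ q₂ g₁ = piMap q₁ q₂ g₂ ↔
        ∃ γ : Matrix.SpecialLinearGroup (Fin 2) ℤ, InGamma2SL q₁ q₂ γ ∧ g₂ = γ * g₁) ∧
    -- (ii) characterization of the image by `gcd(ad − bc, q₀) = 1`
    (Set.range (piMap q₁ q₂) =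
      {x : ProjLine q₁ × ProjLine q₂ |
        ∃ (v : CoprimePair q₁) (w : CoprimePair q₂),
          x = (Quotient.mk (projSetoid q₁) v, Quotient.mk (projSetoid q₂) w) ∧
          IsUnit (ZMod.castHom (Nat.gcd_dvd_left q₁ q₂) (ZMod (Nat.gcd q₁ q₂)) v.1.1 *
                    ZMod.castHom (Nat.gcd_dvd_right q₁ q₂) (ZMod (Nat.gcd q₁ q₂)) w.1.2 -
                  ZMod.castHom (Nat.gcd_dvd_left q₁ q₂) (ZMod (Nat.gcd q₁ q₂)) v.1.2 *
                    ZMod.castHom (Nat.gcd_dvd_right q₁ q₂) (ZMod (Nat.gcd q₁ q₂)) w.1.1)}) ∧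
    -- (iii) surjectivity iff `gcd(q₁,q₂) = 1`
    (Function.Surjective (piMap q₁ q₂) ↔ Nat.gcd q₁ q₂ = 1) := by
  have : NeZero q₁ := ⟨hq₁.ne'⟩
  have : NeZero q₂ := ⟨hq₂.ne'⟩
  refine ⟨fun q hq ↦ ?_, fun γ hγ g ↦ ?_, fun _ _ ↦ piMap_eq_piMap_iff_exists, range_piMap,
    surjective_piMap_iff⟩
  · simpa using congrArg (Rat.cast : ℚ → ℝ) (card_projLine hq.ne')
  · exact (piMap_eq_piMap_iff_exists.2 ⟨γ, hγ, rfl⟩).symm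
end

section
/- Let q₁, q₂ be positive integers, q = q₁q₂, Γ = Γ₂(q₁,q₂), and let T be a complete set of representatives of Γ\SL₂(ℤ). Let h, k be positive integers with gcd(h, kq) = 1. Let T_h^{(q₁)} = { (a, b q₁; 0, d) : a, d ∈ ℤ_{>0}, ad = h, 0 ≤ b < d }, let M_{2,h,k}(ℤ) = { (a,b;c,d) ∈ M₂(ℤ) : ad − bc = hk, gcd(a,c,k) = 1, gcd(b,d,k) = 1 }, and let T_{1,k} be a complete set of representatives of SL₂(ℤ)\M_{2,1,k}(ℤ). Then (as sets of matrix products) M_{2,h,k}(ℤ) = Γ · T · T_h^{(q₁)} · T_{1,k} = Γ · T_h^{(q₁)} · T · T_{1,k}; moreover Γ · T · T_h^{(q₁)} = Γ · T_h^{(q₁)} · T. -/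
open scoped Pointwise

/-- `Γ₂(q₁,q₂)` as a set of integer matrices: determinant one, `q₁ ∣ b`, `q₂ ∣ c`. -/
def Gamma2Set (q₁ q₂ : ℕ) : Set (Matrix (Fin 2) (Fin 2) ℤ) :=
  {γ | γ.det = 1 ∧ (q₁ : ℤ) ∣ γ 0 1 ∧ (q₂ : ℤ) ∣ γ 1 0}

/-- `M_{2,h,k}(ℤ)`: integer matrices with `ad − bc = hk`, `gcd(a,c,k) = 1`, `gcd(b,d,k) = 1`. -/
def M2hk (h k : ℤ) : Set (Matrix (Fin 2) (Fin 2) ℤ) :=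
  {m | m.det = h * k ∧ Nat.gcd (Int.gcd (m 0 0) (m 1 0)) k.natAbs = 1 ∧
        Nat.gcd (Int.gcd (m 0 1) (m 1 1)) k.natAbs = 1}

/-- The Hecke set `T_h^{(q₁)} = {(a, b q₁; 0, d) : a,d > 0, ad = h, 0 ≤ b < d}`. -/
def HeckeSet (q₁ : ℕ) (h : ℤ) : Set (Matrix (Fin 2) (Fin 2) ℤ) :=
  {m | ∃ a d b : ℤ, 0 < a ∧ 0 < d ∧ a * d = h ∧ 0 ≤ b ∧ b < d ∧
        m = !![a, b * (q₁ : ℤ); 0, d]}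

/-!
Everything is a consequence of the Hermite normal form. If `h` is prime to `q`, an upper triangular
matrix `(a, b; 0, d)` of determinant `h` can be sheared so that `q ∣ b`, hence matrices of
determinant `h` form `SL₂(ℤ) · T_h^{(q₁)}`; this gives `Γ · T · T_h^{(q₁)}`. Let `Δ` consist of
the matrices of determinant `h` satisfying the congruences that define `Γ`. Multiplying by the
adjugate of a Hecke matrix shows `Δ = Γ · T_h^{(q₁)}`, and transposing the normal form for `q₂`
shows that matrices of determinant `h` also form `Δ · SL₂(ℤ) = Δ · Γ · T = Δ · T`; this gives
`Γ · T_h^{(q₁)} · T`. Finally, the gcd conditions make the first diagonal entry of the triangular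
form of a matrix in `M_{2,h,k}(ℤ)` prime to `k`, so it divides `h`, and the triangular matrix
splits into factors of determinants `h` and `k`.
-/

open Matrix

section DetSet

variable {n R : Type*} [Fintype n] [DecidableEq n] [CommRing R]

/-- The set of matrices of determinant `r`; `detSet 1` plays the role of `SL₂(ℤ)`, kept inside the
monoid of all matrices so that pointwise products of sets make sense. -/
def detSet (r : R) : Set (Matrix n n R) :=
  {A | A.det = r}

lemma mul_mem_detSet {r s : R} {A B : Matrix n n R} (hA : A ∈ detSet r) (hB : B ∈ detSet s) :
    A * B ∈ detSet (r * s) :=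
  (det_mul A B).trans (congrArg₂ (· * ·) hA hB)

lemma transpose_mem_detSet {r : R} {A : Matrix n n R} (hA : A ∈ detSet r) : Aᵀ ∈ detSet r :=
  (det_transpose A).trans hA

lemma detSet_mul_detSet_one (r : R) : (detSet r * detSet 1 : Set (Matrix n n R)) = detSet r := by
  refine Set.Subset.antisymm ?_ (Set.subset_mul_left _ det_one)
  rintro _ ⟨A, hA, B, hB, rfl⟩
  simpa only [mul_one] using mul_mem_detSet hA hB

end DetSet

section UnimodularMod

variable {m n R : Type*} [Fintype m] [Fintype n] [CommRing R]

/-- The coordinates of `v` together with `k` generate the unit ideal; for the columns of an integer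
matrix this is the condition `gcd(a, c, k) = 1`. -/
def IsUnimodularMod (k : R) (v : n → R) : Prop :=
  ∃ w : n → R, IsCoprime (w ⬝ᵥ v) k

lemma IsUnimodularMod.of_mulVec {k : R} {A : Matrix m n R} {v : n → R}
    (hv : IsUnimodularMod k (A *ᵥ v)) : IsUnimodularMod k v := by
  obtain ⟨w, hw⟩ := hv
  exact ⟨w ᵥ* A, by rwa [← dotProduct_mulVec]⟩

lemma IsUnimodularMod.smul {k r : R} {v : n → R} (hr : IsCoprime r k) (hv : IsUnimodularMod k v) :
    IsUnimodularMod k (r • v) := by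
  obtain ⟨w, hw⟩ := hv
  exact ⟨w, by simpa only [dotProduct_smul, smul_eq_mul] using hr.mul_left hw⟩

lemma IsUnimodularMod.mulVec [DecidableEq n] {k : R} {A : Matrix n n R} {v : n → R}
    (hA : IsCoprime A.det k) (hv : IsUnimodularMod k v) : IsUnimodularMod k (A *ᵥ v) := by
  have hadj : A.adjugate *ᵥ (A *ᵥ v) = A.det • v := by
    rw [mulVec_mulVec, adjugate_mul, smul_mulVec, one_mulVec]
  exact .of_mulVec (A := A.adjugate) (hadj ▸ hv.smul hA)

lemma isUnimodularMod_fin_two_iff {k : ℤ} {v : Fin 2 → ℤ} :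
    IsUnimodularMod k v ↔ Nat.gcd (Int.gcd (v 0) (v 1)) k.natAbs = 1 := by
  have hgcd : Nat.gcd (Int.gcd (v 0) (v 1)) k.natAbs = 1 ↔
      IsCoprime (Int.gcd (v 0) (v 1) : ℤ) k := by
    rw [Int.isCoprime_iff_gcd_eq_one]
    rfl
  rw [hgcd]
  constructor
  · rintro ⟨w, hw⟩
    refine hw.of_isCoprime_of_dvd_left ?_
    rw [dotProduct, Fin.sum_univ_two]
    exact dvd_add ((Int.gcd_dvd_left _ _).mul_left _) ((Int.gcd_dvd_right _ _).mul_left _)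
  · intro h
    refine ⟨![Int.gcdA (v 0) (v 1), Int.gcdB (v 0) (v 1)], ?_⟩
    rw [Int.gcd_eq_gcd_ab] at h
    simpa only [dotProduct, Fin.sum_univ_two, cons_val_zero, cons_val_one, mul_comm] using h

end UnimodularMod

section HeckeSet

lemma exists_eq_det_one_mul_upperTriangular {m : Matrix (Fin 2) (Fin 2) ℤ} (hm : m.det ≠ 0) :
    ∃ p ∈ detSet 1, ∃ a b d : ℤ, 0 < a ∧ m = p * !![a, b; 0, d] := by
  let IsReducible (A : FixedDetMatrix (Fin 2) ℤ m.det) : Prop :=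
    ∃ p ∈ detSet 1, ∃ a b d : ℤ, 0 < a ∧ A.1 = p * !![a, b; 0, d]
  have smul_reducible (g : SpecialLinearGroup (Fin 2) ℤ) (B) :
      IsReducible B → IsReducible (g • B) := by
    rintro ⟨p, hp, a, b, d, ha, hB⟩
    refine ⟨g * p, mul_mem_detSet g.2 hp, a, b, d, ha, ?_⟩
    rw [FixedDetMatrices.smul_coe, hB, mul_assoc]
  suffices IsReducible ⟨m, rfl⟩ from this
  induction (⟨m, rfl⟩ : FixedDetMatrix (Fin 2) ℤ m.det) using FixedDetMatrices.induction_on hm with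
  | h0 A hA ha _ _ =>
    refine ⟨1, det_one, A.1 0 0, A.1 0 1, A.1 1 1, ha, ?_⟩
    rw [one_mul, ← hA, ← eta_fin_two]
  | hS B hB => exact smul_reducible _ B hB
  | hT B hB => exact smul_reducible _ B hB

lemma exists_eq_mul_add_mul_of_isCoprime {d q : ℤ} (hd : 0 < d) (hcop : IsCoprime d q) (b : ℤ) :
    ∃ r t : ℤ, 0 ≤ r ∧ r < d ∧ b = r * q + t * d := by
  obtain ⟨u, v, huv⟩ := hcop
  refine ⟨b * v % d, b * u + b * v / d * q, Int.emod_nonneg _ hd.ne', Int.emod_lt_of_pos _ hd, ?_⟩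
  linear_combination -b * huv - q * Int.emod_add_mul_ediv (b * v) d

lemma HeckeSet_subset_detSet {q : ℕ} {h : ℤ} : HeckeSet q h ⊆ detSet h := by
  rintro _ ⟨a, d, b, -, -, had, -, -, rfl⟩
  rw [detSet, Set.mem_ofPred_eq, det_fin_two_of, had, mul_zero, sub_zero]

lemma detSet_one_mul_HeckeSet {q : ℕ} {h : ℤ} (hh : 0 < h) (hcop : IsCoprime h q) :
    detSet 1 * HeckeSet q h = detSet h := by
  refine Set.Subset.antisymm ?_ fun m (hm : m.det = h) => ?_
  · rintro _ ⟨p, hp, s, hs, rfl⟩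
    simpa only [one_mul] using mul_mem_detSet hp (HeckeSet_subset_detSet hs)
  obtain ⟨p, hp, a, b, d, ha, rfl⟩ := exists_eq_det_one_mul_upperTriangular (hm ▸ hh.ne')
  have had : a * d = h := by
    rw [← hm, det_mul, hp, det_fin_two_of, one_mul, mul_zero, sub_zero]
  have hd : 0 < d := pos_of_mul_pos_right (had ▸ hh) ha.le
  obtain ⟨r, t, hr, hrd, rfl⟩ :=
    exists_eq_mul_add_mul_of_isCoprime hd (had ▸ hcop).of_mul_left_right b
  have hshear : !![1, t; 0, 1] ∈ detSet 1 := by simp [detSet]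
  refine ⟨p * !![1, t; 0, 1], ?_, !![a, r * q; 0, d], ⟨a, d, r, ha, hd, had, hr, hrd, rfl⟩, ?_⟩
  · simpa only [one_mul] using mul_mem_detSet hp hshear
  · simp [mul_assoc]

end HeckeSet

section Delta2Set

variable {q₁ q₂ : ℕ} {h h' : ℤ}

/-- The integer matrices of determinant `h` satisfying the congruences `q₁ ∣ b` and `q₂ ∣ c` of
`Γ₂(q₁,q₂)`, so that `Delta2Set q₁ q₂ 1` is definitionally `Gamma2Set q₁ q₂`. -/
def Delta2Set (q₁ q₂ : ℕ) (h : ℤ) : Set (Matrix (Fin 2) (Fin 2) ℤ) :=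
  {m | m.det = h ∧ (q₁ : ℤ) ∣ m 0 1 ∧ (q₂ : ℤ) ∣ m 1 0}

lemma one_mem_Gamma2Set : 1 ∈ Gamma2Set q₁ q₂ :=
  ⟨det_one, dvd_zero _, dvd_zero _⟩

lemma HeckeSet_subset_Delta2Set : HeckeSet q₁ h ⊆ Delta2Set q₁ q₂ h := by
  intro m hm
  refine ⟨HeckeSet_subset_detSet hm, ?_⟩
  obtain ⟨a, d, b, -, -, -, -, -, rfl⟩ := hm
  exact ⟨dvd_mul_left _ b, dvd_zero _⟩

lemma transpose_mem_Delta2Set {m : Matrix (Fin 2) (Fin 2) ℤ} (hm : m ∈ Delta2Set q₁ q₂ h) :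
    mᵀ ∈ Delta2Set q₂ q₁ h :=
  ⟨transpose_mem_detSet hm.1, hm.2.2, hm.2.1⟩

lemma adjugate_mem_Delta2Set {m : Matrix (Fin 2) (Fin 2) ℤ} (hm : m ∈ Delta2Set q₁ q₂ h) :
    m.adjugate ∈ Delta2Set q₁ q₂ h := by
  obtain ⟨hdet, hb, hc⟩ := hm
  refine ⟨by simp [det_adjugate, hdet], ?_, ?_⟩
  · simpa [adjugate_fin_two] using hb
  · simpa [adjugate_fin_two] using hc

lemma mul_mem_Delta2Set {m m' : Matrix (Fin 2) (Fin 2) ℤ} (hm : m ∈ Delta2Set q₁ q₂ h)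
    (hm' : m' ∈ Delta2Set q₁ q₂ h') : m * m' ∈ Delta2Set q₁ q₂ (h * h') := by
  obtain ⟨hdet, hb, hc⟩ := hm
  obtain ⟨hdet', hb', hc'⟩ := hm'
  refine ⟨mul_mem_detSet hdet hdet', ?_, ?_⟩ <;> rw [mul_apply, Fin.sum_univ_two]
  · exact dvd_add (hb'.mul_left _) (hb.mul_right _)
  · exact dvd_add (hc.mul_right _) (hc'.mul_left _)

lemma Delta2Set_mul_Gamma2Set : Delta2Set q₁ q₂ h * Gamma2Set q₁ q₂ = Delta2Set q₁ q₂ h := by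
  refine Set.Subset.antisymm ?_ (Set.subset_mul_left _ one_mem_Gamma2Set)
  rintro _ ⟨m, hm, γ, hγ, rfl⟩
  simpa only [mul_one] using mul_mem_Delta2Set (h' := 1) hm hγ

lemma mem_Gamma2Set_of_mul_mem_Delta2Set (h₁ : IsCoprime h q₁) (h₂ : IsCoprime h q₂)
    {p s : Matrix (Fin 2) (Fin 2) ℤ} (hp : p ∈ detSet 1) (hs : s ∈ Delta2Set q₁ q₂ h)
    (hps : p * s ∈ Delta2Set q₁ q₂ h) : p ∈ Gamma2Set q₁ q₂ := by
  have hsmul : h • p = p * s * s.adjugate := by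
    rw [mul_assoc, mul_adjugate, hs.1, mul_smul_comm, mul_one]
  obtain ⟨-, hb, hc⟩ := hsmul ▸ mul_mem_Delta2Set hps (adjugate_mem_Delta2Set hs)
  exact ⟨hp, h₁.symm.dvd_of_dvd_mul_left hb, h₂.symm.dvd_of_dvd_mul_left hc⟩

lemma Gamma2Set_mul_HeckeSet (hh : 0 < h) (h₁ : IsCoprime h q₁) (h₂ : IsCoprime h q₂) :
    Gamma2Set q₁ q₂ * HeckeSet q₁ h = Delta2Set q₁ q₂ h := by
  refine Set.Subset.antisymm ?_ fun m hm => ?_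
  · rintro _ ⟨γ, hγ, s, hs, rfl⟩
    simpa only [one_mul] using mul_mem_Delta2Set (h := 1) hγ (HeckeSet_subset_Delta2Set hs)
  · obtain ⟨p, hp, s, hs, rfl⟩ := (detSet_one_mul_HeckeSet hh h₁).ge hm.1
    exact ⟨p, mem_Gamma2Set_of_mul_mem_Delta2Set h₁ h₂ hp (HeckeSet_subset_Delta2Set hs) hm,
      s, hs, rfl⟩

lemma Delta2Set_mul_detSet_one (hh : 0 < h) (h₂ : IsCoprime h q₂) :
    Delta2Set q₁ q₂ h * detSet 1 = detSet h := by
  refine Set.Subset.antisymm ?_ fun m hm => ?_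
  · rintro _ ⟨s, hs, p, hp, rfl⟩
    simpa only [mul_one] using mul_mem_detSet hs.1 hp
  · obtain ⟨p, hp, s, hs, hps : p * s = mᵀ⟩ :=
      (detSet_one_mul_HeckeSet hh h₂).ge (transpose_mem_detSet hm)
    refine ⟨sᵀ, transpose_mem_Delta2Set (HeckeSet_subset_Delta2Set hs), pᵀ,
      transpose_mem_detSet hp, ?_⟩
    change sᵀ * pᵀ = m
    rw [← transpose_mul, hps, transpose_transpose]

end Delta2Set

section M2hk

lemma exists_upperTriangular_factorization {R : Type*} [CommRing R] [IsDomain R] {a b d h k : R}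
    (hh : h ≠ 0) (had : a * d = h * k) (hak : IsCoprime a k) :
    ∃ n ∈ detSet h, ∃ σ ∈ detSet k, !![a, b; 0, d] = n * σ := by
  obtain ⟨e, rfl⟩ : a ∣ h := hak.dvd_of_dvd_mul_right ⟨d, had.symm⟩
  obtain rfl : d = e * k := mul_left_cancel₀ (left_ne_zero_of_mul hh) (had.trans (mul_assoc a e k))
  obtain ⟨u, v, huv⟩ := hak
  refine ⟨!![a, v * b; 0, e], by simp [detSet], !![1, u * b; 0, k], by simp [detSet], ?_⟩
  have hb : a * (u * b) + v * b * k = b := by linear_combination b * huv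
  simp [hb]

variable {h h' k : ℤ}

lemma mem_M2hk_iff {m : Matrix (Fin 2) (Fin 2) ℤ} :
    m ∈ M2hk h k ↔ m ∈ detSet (h * k) ∧ ∀ j, IsUnimodularMod k (m.col j) := by
  simp only [M2hk, detSet, Set.mem_ofPred_eq, Fin.forall_fin_two, isUnimodularMod_fin_two_iff,
    col_apply]

lemma mul_mem_M2hk (hcop : IsCoprime h k) {A B : Matrix (Fin 2) (Fin 2) ℤ} (hA : A ∈ detSet h)
    (hB : B ∈ M2hk h' k) : A * B ∈ M2hk (h * h') k := by
  rw [mem_M2hk_iff] at hB ⊢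
  obtain ⟨hdet, hcol⟩ := hB
  refine ⟨mul_assoc h h' k ▸ mul_mem_detSet hA hdet, fun j => ?_⟩
  exact (hcol j).mulVec (hA.symm ▸ hcop)

lemma mem_M2hk_of_mul_mem {A B : Matrix (Fin 2) (Fin 2) ℤ} (hB : B ∈ detSet (h' * k))
    (hAB : A * B ∈ M2hk h k) : B ∈ M2hk h' k :=
  mem_M2hk_iff.mpr ⟨hB, fun j => .of_mulVec (A := A) ((mem_M2hk_iff.mp hAB).2 j)⟩

lemma detSet_mul_M2hk_one (hh : h ≠ 0) (hk : k ≠ 0) (hcop : IsCoprime h k) :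
    detSet h * M2hk 1 k = M2hk h k := by
  refine Set.Subset.antisymm ?_ fun m hm => ?_
  · rintro _ ⟨n, hn, σ, hσ, rfl⟩
    simpa only [mul_one] using mul_mem_M2hk hcop hn hσ
  obtain ⟨hdet : m.det = h * k, hcol⟩ := mem_M2hk_iff.mp hm
  obtain ⟨p, hp, a, b, d, -, rfl⟩ :=
    exists_eq_det_one_mul_upperTriangular (hdet ▸ mul_ne_zero hh hk)
  have had : a * d = h * k := by
    rw [← hdet, det_mul, hp, det_fin_two_of, one_mul, mul_zero, sub_zero]
  have hak : IsCoprime a k := by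
    obtain ⟨w, hw⟩ := IsUnimodularMod.of_mulVec (A := p) (v := !![a, b; 0, d].col 0) (hcol 0)
    exact hw.of_isCoprime_of_dvd_left (by simp [dotProduct])
  obtain ⟨n, hn, σ, hσ, hnσ⟩ := exists_upperTriangular_factorization (b := b) hh had hak
  rw [hnσ, ← mul_assoc] at hm ⊢
  refine Set.mul_mem_mul ?_ (mem_M2hk_of_mul_mem (by rwa [one_mul]) hm)
  simpa only [one_mul] using mul_mem_detSet hp hn

end M2hk

section Representatives

lemma mul_eq_of_exists_representative {M : Type*} [Mul M] {S T U : Set M} (hsub : S * T ⊆ U)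
    (hrep : ∀ u ∈ U, ∃ t, t ∈ T ∧ ∃ s ∈ S, u = s * t) : S * T = U := by
  refine hsub.antisymm fun u hu => ?_
  obtain ⟨t, ht, s, hs, rfl⟩ := hrep u hu
  exact Set.mul_mem_mul hs ht

lemma Gamma2Set_mul_eq_detSet_one {q₁ q₂ : ℕ} {T : Set (Matrix (Fin 2) (Fin 2) ℤ)}
    (hTdet : ∀ τ ∈ T, τ.det = 1)
    (hTrep : ∀ g : Matrix (Fin 2) (Fin 2) ℤ, g.det = 1 →
      ∃ τ, τ ∈ T ∧ ∃ γ ∈ Gamma2Set q₁ q₂, g = γ * τ) :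
    Gamma2Set q₁ q₂ * T = detSet 1 := by
  refine mul_eq_of_exists_representative ?_ hTrep
  rintro _ ⟨γ, hγ, τ, hτ, rfl⟩
  simpa only [mul_one] using mul_mem_detSet hγ.1 (hTdet τ hτ)

lemma detSet_one_mul_eq_M2hk_one {k : ℤ} {T1k : Set (Matrix (Fin 2) (Fin 2) ℤ)}
    (hT1k : T1k ⊆ M2hk 1 k)
    (hT1krep : ∀ m ∈ M2hk 1 k,
      ∃ σ, σ ∈ T1k ∧ ∃ γ : Matrix (Fin 2) (Fin 2) ℤ, γ.det = 1 ∧ m = γ * σ) :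
    detSet 1 * T1k = M2hk 1 k := by
  refine mul_eq_of_exists_representative ?_ hT1krep
  rintro _ ⟨γ, hγ, σ, hσ, rfl⟩
  simpa only [mul_one] using mul_mem_M2hk isCoprime_one_left hγ (hT1k hσ)

end Representatives

section Factorization

variable {q₁ q₂ : ℕ} {h k : ℤ} {T T1k : Set (Matrix (Fin 2) (Fin 2) ℤ)}

lemma Gamma2Set_mul_mul_HeckeSet (hh : 0 < h) (h₁ : IsCoprime h q₁)
    (hT : Gamma2Set q₁ q₂ * T = detSet 1) :
    Gamma2Set q₁ q₂ * T * HeckeSet q₁ h = detSet h := by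
  rw [hT, detSet_one_mul_HeckeSet hh h₁]

lemma Gamma2Set_mul_HeckeSet_mul (hh : 0 < h) (h₁ : IsCoprime h q₁) (h₂ : IsCoprime h q₂)
    (hT : Gamma2Set q₁ q₂ * T = detSet 1) :
    Gamma2Set q₁ q₂ * HeckeSet q₁ h * T = detSet h := by
  rw [Gamma2Set_mul_HeckeSet hh h₁ h₂, ← Delta2Set_mul_Gamma2Set, mul_assoc, hT,
    Delta2Set_mul_detSet_one hh h₂]

lemma detSet_mul_eq_M2hk (hh : h ≠ 0) (hk : k ≠ 0) (hcop : IsCoprime h k)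
    (hT1k : detSet 1 * T1k = M2hk 1 k) : detSet h * T1k = M2hk h k := by
  rw [← detSet_mul_detSet_one, mul_assoc, hT1k, detSet_mul_M2hk_one hh hk hcop]

theorem M2hk_factorization_general (hh : 0 < h) (hk : k ≠ 0)
    (hcop : Int.gcd h (k * (q₁ * q₂ : ℕ)) = 1) (hT : Gamma2Set q₁ q₂ * T = detSet 1)
    (hT1k : detSet 1 * T1k = M2hk 1 k) :
    M2hk h k = Gamma2Set q₁ q₂ * T * HeckeSet q₁ h * T1k ∧
    M2hk h k = Gamma2Set q₁ q₂ * HeckeSet q₁ h * T * T1k ∧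
    Gamma2Set q₁ q₂ * T * HeckeSet q₁ h = Gamma2Set q₁ q₂ * HeckeSet q₁ h * T := by
  rw [← Int.isCoprime_iff_gcd_eq_one, Nat.cast_mul] at hcop
  obtain ⟨hhk, h₁, h₂⟩ : IsCoprime h k ∧ IsCoprime h q₁ ∧ IsCoprime h q₂ := by
    simpa only [IsCoprime.mul_right_iff] using hcop
  rw [Gamma2Set_mul_mul_HeckeSet hh h₁ hT, Gamma2Set_mul_HeckeSet_mul hh h₁ h₂ hT,
    detSet_mul_eq_M2hk hh.ne' hk hhk hT1k]
  exact ⟨rfl, rfl, rfl⟩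

end Factorization

/-- equation (12.2): factorisation of `M_{2,h,k}(ℤ)`.  With `Γ = Γ₂(q₁,q₂)`,
`T` a complete set of representatives of `Γ\SL₂(ℤ)` and `T_{1,k}` one of
`SL₂(ℤ)\M_{2,1,k}(ℤ)`, and `gcd(h, kq) = 1`:
`M_{2,h,k}(ℤ) = Γ·T·T_h^{(q₁)}·T_{1,k} = Γ·T_h^{(q₁)}·T·T_{1,k}`, and
`Γ·T·T_h^{(q₁)} = Γ·T_h^{(q₁)}·T`. -/
theorem M2hk_factorization (q₁ q₂ : ℕ) (hq₁ : 0 < q₁) (hq₂ : 0 < q₂)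
    (h k : ℤ) (hh : 0 < h) (hk : 0 < k)
    (hcop : Int.gcd h (k * (q₁ * q₂ : ℕ)) = 1)
    (T : Set (Matrix (Fin 2) (Fin 2) ℤ))
    (hTdet : ∀ τ ∈ T, τ.det = 1)
    (hTrep : ∀ g : Matrix (Fin 2) (Fin 2) ℤ, g.det = 1 →
      ∃! τ, τ ∈ T ∧ ∃ γ ∈ Gamma2Set q₁ q₂, g = γ * τ)
    (T1k : Set (Matrix (Fin 2) (Fin 2) ℤ))
    (hT1k : T1k ⊆ M2hk 1 k)
    (hT1krep : ∀ m ∈ M2hk 1 k,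
      ∃! σ, σ ∈ T1k ∧ ∃ γ : Matrix (Fin 2) (Fin 2) ℤ, γ.det = 1 ∧ m = γ * σ) :
    M2hk h k = Gamma2Set q₁ q₂ * T * HeckeSet q₁ h * T1k ∧
    M2hk h k = Gamma2Set q₁ q₂ * HeckeSet q₁ h * T * T1k ∧
    Gamma2Set q₁ q₂ * T * HeckeSet q₁ h = Gamma2Set q₁ q₂ * HeckeSet q₁ h * T := by
  exact M2hk_factorization_general hh hk.ne' hcop
    (Gamma2Set_mul_eq_detSet_one hTdet fun g hg => (hTrep g hg).exists)
    (detSet_one_mul_eq_M2hk_one hT1k fun m hm => (hT1krep m hm).exists)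
end

section
/- There is an absolute constant c > 0 such that for all K > 1 and all real t, x, φ, ρ, ϑ with a[e^t]·n[x] = k[φ]·a[e^{−ρ}]·k[ϑ] in SL₂(ℝ): if |ρ| ≤ 1/K then |t| ≤ c/K and |x| ≤ c/K; and conversely, if |t| ≤ 1/K and |x| ≤ 1/K then |ρ| ≤ c/K. -/
open Real

/-- `n[x] = (1, x; 0, 1)`. -/
noncomputable def nMat (x : ℝ) : Matrix (Fin 2) (Fin 2) ℝ := !![1, x; 0, 1]

/-- `a[y] = diag(√y, 1/√y)`. -/
noncomputable def aMat (y : ℝ) : Matrix (Fin 2) (Fin 2) ℝ :=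
  !![Real.sqrt y, 0; 0, (Real.sqrt y)⁻¹]

/-- `k[θ] = (cos θ, sin θ; −sin θ, cos θ)`. -/
noncomputable def kMat (θ : ℝ) : Matrix (Fin 2) (Fin 2) ℝ :=
  !![Real.cos θ, Real.sin θ; -Real.sin θ, Real.cos θ]

/-!
Rotations are orthogonal, so both sides of `a[e^t] n[x] = k[φ] a[e^{-ρ}] k[ϑ]` have the same
squared Frobenius norm, that is, `cosh ρ = cosh t + e^t x² / 2`. Geometrically, `|ρ|` is the
hyperbolic distance by which `a[e^t] n[x]` moves the base point `i`. Dropping the term in `x` gives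
`|t| ≤ |ρ|`; bounding `cosh t` below by `1` and `e^{-t}` above by `e^{|ρ|}` gives
`x² ≤ 2 e^{|ρ|} (cosh |ρ| - 1) = (e^{|ρ|} - 1)²`; and the triangle inequality, which here is an
inequality for `cosh (|t| + |x|)`, gives `|ρ| ≤ |t| + |x|`.
-/

section FrobeniusNorm

open scoped Matrix

lemma trace_conjTranspose_mul_self_unitary_mul_mul_unitary {m n R : Type*} [Fintype m]
    [Fintype n] [DecidableEq m] [DecidableEq n] [CommRing R] [StarRing R]
    {U : Matrix m m R} {V : Matrix n n R} (hU : U ∈ Matrix.unitaryGroup m R)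
    (hV : V ∈ Matrix.unitaryGroup n R) (A : Matrix m n R) :
    ((U * A * V)ᴴ * (U * A * V)).trace = (Aᴴ * A).trace := by
  have hU' : Uᴴ * U = 1 := Matrix.mem_unitaryGroup_iff'.mp hU
  have hV' : V * Vᴴ = 1 := Matrix.mem_unitaryGroup_iff.mp hV
  calc ((U * A * V)ᴴ * (U * A * V)).trace
      = (Vᴴ * (Aᴴ * (Uᴴ * U) * A * V)).trace := by
        simp only [Matrix.conjTranspose_mul, Matrix.mul_assoc]
    _ = (Aᴴ * (Uᴴ * U) * A * (V * Vᴴ)).trace := by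
        rw [Matrix.trace_mul_comm, Matrix.mul_assoc _ V]
    _ = (Aᴴ * A).trace := by rw [hU', hV', Matrix.mul_one, Matrix.mul_one]

lemma kMat_mem_unitaryGroup (θ : ℝ) : kMat θ ∈ Matrix.unitaryGroup (Fin 2) ℝ := by
  rw [Matrix.mem_unitaryGroup_iff, Matrix.star_eq_conjTranspose,
    Matrix.conjTranspose_eq_transpose_of_trivial]
  ext i j
  fin_cases i <;> fin_cases j <;>
    simp [kMat, Matrix.mul_apply, Fin.sum_univ_two, ← sq, mul_comm]

lemma nMat_zero : nMat 0 = 1 := Matrix.one_fin_two.symm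

lemma trace_conjTranspose_mul_self_aMat_mul_nMat {y : ℝ} (hy : 0 ≤ y) (x : ℝ) :
    ((aMat y * nMat x)ᴴ * (aMat y * nMat x)).trace = y + y⁻¹ + y * x ^ 2 := by
  have product : aMat y * nMat x = !![√y, √y * x; 0, (√y)⁻¹] := by simp [aMat, nMat]
  calc ((aMat y * nMat x)ᴴ * (aMat y * nMat x)).trace
      = √y ^ 2 + ((√y * x) ^ 2 + ((√y)⁻¹) ^ 2) := by
        simp [product, Matrix.trace_fin_two, Matrix.mul_apply, Fin.sum_univ_two, ← sq]
    _ = y + y⁻¹ + y * x ^ 2 := by rw [mul_pow, inv_pow, sq_sqrt hy]; ring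

lemma trace_conjTranspose_mul_self_aMat {y : ℝ} (hy : 0 ≤ y) :
    ((aMat y)ᴴ * aMat y).trace = y + y⁻¹ := by
  simpa [nMat_zero] using trace_conjTranspose_mul_self_aMat_mul_nMat hy 0

lemma cosh_eq_of_aMat_mul_nMat_eq {t x φ ρ ϑ : ℝ}
    (h : aMat (exp t) * nMat x = kMat φ * aMat (exp (-ρ)) * kMat ϑ) :
    cosh ρ = cosh t + exp t * (x ^ 2 / 2) := by
  have trace_eq : exp t + (exp t)⁻¹ + exp t * x ^ 2 = exp (-ρ) + (exp (-ρ))⁻¹ := by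
    rw [← trace_conjTranspose_mul_self_aMat_mul_nMat (exp_nonneg t), h,
      trace_conjTranspose_mul_self_unitary_mul_mul_unitary (kMat_mem_unitaryGroup φ)
        (kMat_mem_unitaryGroup ϑ),
      trace_conjTranspose_mul_self_aMat (exp_nonneg _)]
  rw [← exp_neg, ← exp_neg, neg_neg] at trace_eq
  rw [cosh_eq, cosh_eq]
  linarith

end FrobeniusNorm

lemma one_add_sq_div_two_le_cosh (x : ℝ) : 1 + x ^ 2 / 2 ≤ cosh x := by
  have half_le : (x / 2) ^ 2 ≤ sinh (x / 2) ^ 2 := by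
    rw [sq_le_sq, abs_sinh]
    exact self_le_sinh_iff.mpr (abs_nonneg _)
  calc 1 + x ^ 2 / 2 = 1 + 2 * (x / 2) ^ 2 := by ring
    _ ≤ 1 + 2 * sinh (x / 2) ^ 2 := by gcongr
    _ = cosh (2 * (x / 2)) := by rw [cosh_two_mul, cosh_sq]; ring
    _ = cosh x := by rw [mul_div_cancel₀ x two_ne_zero]

lemma cosh_add_exp_mul_cosh_sub_one_le_cosh_add {a b : ℝ} (ha : 0 ≤ a) (hb : 0 ≤ b) :
    cosh a + exp a * (cosh b - 1) ≤ cosh (a + b) := by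
  have gap : cosh (a + b) - (cosh a + exp a * (cosh b - 1)) = sinh a * (1 - exp (-b)) := by
    rw [cosh_add, ← cosh_add_sinh a, ← cosh_sub_sinh b]
    ring
  have gap_nonneg : 0 ≤ sinh a * (1 - exp (-b)) :=
    mul_nonneg (sinh_nonneg_iff.mpr ha) (sub_nonneg.mpr (exp_le_one_iff.mpr (neg_nonpos.mpr hb)))
  linarith

lemma two_mul_exp_mul_cosh_sub_one (r : ℝ) : 2 * exp r * (cosh r - 1) = (exp r - 1) ^ 2 := by
  have exp_mul_exp_neg : exp r * exp (-r) = 1 := by rw [← exp_add, add_neg_cancel, exp_zero]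
  rw [cosh_eq]
  linear_combination exp_mul_exp_neg

section SizeBounds

variable {t x ρ : ℝ}

lemma abs_le_abs_of_cosh_add_le (h : cosh t + exp t * (x ^ 2 / 2) ≤ cosh ρ) : |t| ≤ |ρ| := by
  refine cosh_le_cosh.mp (le_trans ?_ h)
  exact le_add_of_nonneg_right (by positivity)

lemma abs_le_exp_abs_sub_one_of_cosh_add_le (h : cosh t + exp t * (x ^ 2 / 2) ≤ cosh ρ) :
    |x| ≤ exp |ρ| - 1 := by
  have exp_neg_le : exp (-t) ≤ exp |ρ| :=
    exp_le_exp.mpr ((neg_le_abs t).trans (abs_le_abs_of_cosh_add_le h))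
  have exp_mul_sq_le : exp t * x ^ 2 ≤ 2 * (cosh ρ - 1) := by linarith [one_le_cosh t]
  refine abs_le_of_sq_le_sq ?_ (sub_nonneg.mpr (one_le_exp (abs_nonneg ρ)))
  calc x ^ 2 = exp (-t) * (exp t * x ^ 2) := by
        rw [← mul_assoc, ← exp_add, neg_add_cancel, exp_zero, one_mul]
    _ ≤ exp |ρ| * (2 * (cosh ρ - 1)) := by gcongr
    _ = 2 * exp |ρ| * (cosh |ρ| - 1) := by rw [cosh_abs]; ring
    _ = (exp |ρ| - 1) ^ 2 := two_mul_exp_mul_cosh_sub_one _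

lemma abs_le_abs_add_abs_of_cosh_le (h : cosh ρ ≤ cosh t + exp t * (x ^ 2 / 2)) :
    |ρ| ≤ |t| + |x| := by
  have sq_le : x ^ 2 / 2 ≤ cosh |x| - 1 := by
    rw [cosh_abs]
    linarith [one_add_sq_div_two_le_cosh x]
  rw [← abs_of_nonneg (show 0 ≤ |t| + |x| by positivity), ← cosh_le_cosh]
  calc cosh ρ ≤ cosh t + exp t * (x ^ 2 / 2) := h
    _ ≤ cosh |t| + exp |t| * (cosh |x| - 1) := by
        rw [cosh_abs t]
        gcongr
        exact le_abs_self t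
    _ ≤ cosh (|t| + |x|) :=
        cosh_add_exp_mul_cosh_sub_one_le_cosh_add (abs_nonneg t) (abs_nonneg x)

end SizeBounds

/-- There is an absolute constant `c > 0` such that for all `K > 1` and all
real `t, x, φ, ρ, ϑ` with `a[e^t]·n[x] = k[φ]·a[e^{−ρ}]·k[ϑ]`: if `|ρ| ≤ 1/K` then `|t| ≤ c/K`
and `|x| ≤ c/K`; conversely, if `|t| ≤ 1/K` and `|x| ≤ 1/K` then `|ρ| ≤ c/K`. -/
theorem iwasawa_cartan_size_comparison :
    ∃ c : ℝ, 0 < c ∧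
      ∀ K t x φ ρ ϑ : ℝ, 1 < K →
        aMat (Real.exp t) * nMat x = kMat φ * aMat (Real.exp (-ρ)) * kMat ϑ →
        ((|ρ| ≤ 1 / K → |t| ≤ c / K ∧ |x| ≤ c / K) ∧
          (|t| ≤ 1 / K → |x| ≤ 1 / K → |ρ| ≤ c / K)) := by
  refine ⟨2, two_pos, fun K t x φ ρ ϑ hK h ↦ ?_⟩
  have cosh_eq_add := cosh_eq_of_aMat_mul_nMat_eq h
  have inv_le_one : 1 / K ≤ 1 := (div_le_one (by linarith)).mpr hK.le
  have two_div : 2 / K = 2 * (1 / K) := by ring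
  rw [two_div]
  refine ⟨fun hρ ↦ ⟨?_, ?_⟩, fun ht hx ↦ ?_⟩
  · linarith [abs_le_abs_of_cosh_add_le cosh_eq_add.ge, abs_nonneg ρ]
  · have exp_sub_one_le : exp |ρ| - 1 ≤ 2 * |ρ| := by
      rw [← abs_abs ρ] at hρ
      simpa only [abs_abs] using le_of_abs_le (abs_exp_sub_one_le (hρ.trans inv_le_one))
    linarith [abs_le_exp_abs_sub_one_of_cosh_add_le cosh_eq_add.ge]
  · linarith [abs_le_abs_add_abs_of_cosh_le cosh_eq_add.le]
end

section
/- For real α > 0 and a natural number n, define the generalized Laguerre polynomial L_n^{(α)}(x) = (x^{−α} e^{x} / n!) · (d/dx)^n ( e^{−x} x^{n+α} ) for x > 0. Then ∫₀^∞ x^{α−1} e^{−x} L_n^{(α)}(x)² dx = Σ_{i=0}^{n} Γ(i+α)/Γ(i+1); in particular, if α ≥ 1 then this integral is at most (n+1) · Γ(n+α)/Γ(n+1). -/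
open Real MeasureTheory

/-- The generalized Laguerre polynomial
`L_n^{(α)}(x) = (x^{−α} e^{x} / n!) · (d/dx)^n ( e^{−x} x^{n+α} )`. -/
noncomputable def laguerre (α : ℝ) (n : ℕ) (x : ℝ) : ℝ :=
  x ^ (-α) * Real.exp x / (n.factorial : ℝ) *
    iteratedDeriv n (fun y : ℝ => Real.exp (-y) * y ^ ((n : ℝ) + α)) x

/-!
With `T a p = X p' + a p - X p` one has `d/dx (x^a e^{-x} p) = x^{a-1} e^{-x} (T a p)`, so
Rodrigues' formula reads `n! L_n^{(a)} = T (a + 1) (T (a + 2) (⋯ (T (a + n) 1)))`. The recurrence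
of `Γ` amounts to the integration by parts `∫ x^{α-1} e^{-x} (T α p) q = -∫ x^α e^{-x} p q'`, so
`L_n^{(α-1)}` is orthogonal for the weight `x^{α-1} e^{-x}` to all polynomials of degree less than
`n`. Since `L_{n+1}^{(α)} = L_n^{(α)} + L_{n+1}^{(α-1)}`, passing from `n` to `n + 1` changes the
integral of the square by that of `L_{n+1}^{(α-1)} (L_n^{(α)} + L_{n+1}^{(α)})`, in which only the
leading coefficient of the second factor counts; it contributes `Γ(n + 1 + α) / (n + 1)!`.
-/

open Polynomial

lemma iterate_derivative_eq_C_of_natDegree_le {R : Type*} [Semiring R] {p : R[X]} {n : ℕ}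
    (hp : p.natDegree ≤ n) : derivative^[n] p = C (n.factorial * p.coeff n) := by
  have hdeg : (derivative^[n] p).natDegree ≤ 0 :=
    (natDegree_iterate_derivative p n).trans (Nat.sub_eq_zero_of_le hp).le
  rw [eq_C_of_natDegree_le_zero hdeg, coeff_iterate_derivative, zero_add, Nat.descFactorial_self,
    nsmul_eq_mul]

section Rodrigues

variable {R : Type*} [CommRing R]

/-- The operator `p ↦ X p' + a p - X p`, which is differentiation conjugated by the weight
`x ^ a * exp (-x)` and then multiplied by `x`; see `hasDerivAt_weight_mul_eval`. -/
noncomputable def rodriguesOperator (a : R) (p : R[X]) : R[X] :=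
  X * derivative p + C a * p - X * p

/-- The polynomial `n! L_n^{(a)}`; scaling by `n!` makes sense of it over any commutative ring. -/
noncomputable def scaledLaguerre : ℕ → R → R[X]
  | 0, _ => 1
  | n + 1, a => rodriguesOperator (a + 1) (scaledLaguerre n (a + 1))

lemma rodriguesOperator_add (a : R) (p q : R[X]) :
    rodriguesOperator a (p + q) = rodriguesOperator a p + rodriguesOperator a q := by
  simp only [rodriguesOperator, derivative_add]
  ring

lemma rodriguesOperator_C_mul (a c : R) (p : R[X]) :
    rodriguesOperator a (C c * p) = C c * rodriguesOperator a p := by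
  simp only [rodriguesOperator, derivative_C_mul]
  ring

lemma rodriguesOperator_mul (a : R) (p q : R[X]) :
    rodriguesOperator a (p * q) = rodriguesOperator a p * q + X * (p * derivative q) := by
  simp only [rodriguesOperator, derivative_mul]
  ring

lemma rodriguesOperator_add_one (a : R) (p : R[X]) :
    rodriguesOperator (a + 1) p = rodriguesOperator a p + p := by
  simp only [rodriguesOperator, C_add, C_1]
  ring

lemma coeff_rodriguesOperator_succ (a : R) (p : R[X]) (n : ℕ) :
    (rodriguesOperator a p).coeff (n + 1) = (n + 1 + a) * p.coeff (n + 1) - p.coeff n := by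
  simp only [rodriguesOperator, coeff_sub, coeff_add, coeff_X_mul, coeff_C_mul, coeff_derivative]
  ring

lemma natDegree_scaledLaguerre_le (n : ℕ) (a : R) : (scaledLaguerre n a).natDegree ≤ n := by
  induction n generalizing a with
  | zero => simp [scaledLaguerre]
  | succ n ih =>
    refine natDegree_le_iff_coeff_eq_zero.2 fun k hk => ?_
    obtain ⟨m, rfl⟩ := Nat.exists_eq_succ_of_ne_zero (Nat.ne_zero_of_lt hk)
    have hm : n < m := Nat.lt_of_succ_lt_succ hk
    rw [scaledLaguerre, Nat.succ_eq_add_one, coeff_rodriguesOperator_succ,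
      coeff_eq_zero_of_natDegree_lt ((ih _).trans_lt hm),
      coeff_eq_zero_of_natDegree_lt ((ih _).trans_lt (hm.trans m.lt_succ_self)), mul_zero, sub_zero]

lemma coeff_scaledLaguerre_self (n : ℕ) (a : R) : (scaledLaguerre n a).coeff n = (-1) ^ n := by
  induction n generalizing a with
  | zero => simp [scaledLaguerre]
  | succ n ih =>
    rw [scaledLaguerre, coeff_rodriguesOperator_succ, ih, coeff_eq_zero_of_natDegree_lt
      ((natDegree_scaledLaguerre_le n _).trans_lt n.lt_succ_self)]
    ring

lemma scaledLaguerre_succ_add_one (n : ℕ) (a : R) :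
    scaledLaguerre (n + 1) (a + 1) =
      C ((n : R) + 1) * scaledLaguerre n (a + 1) + scaledLaguerre (n + 1) a := by
  induction n generalizing a with
  | zero => simp [scaledLaguerre, rodriguesOperator_add_one (a + 1), add_comm (1 : R[X])]
  | succ n ih =>
    calc scaledLaguerre (n + 2) (a + 1)
        = rodriguesOperator (a + 1 + 1) (scaledLaguerre (n + 1) (a + 1 + 1)) := rfl
      _ = C ((n : R) + 1) * scaledLaguerre (n + 1) (a + 1) +
            rodriguesOperator (a + 1 + 1) (scaledLaguerre (n + 1) (a + 1)) := by
          rw [ih, rodriguesOperator_add, rodriguesOperator_C_mul, ← scaledLaguerre]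
      _ = C ((n : R) + 1) * scaledLaguerre (n + 1) (a + 1) +
            (scaledLaguerre (n + 2) a + scaledLaguerre (n + 1) (a + 1)) := by
          rw [rodriguesOperator_add_one, ← scaledLaguerre]
      _ = C (((n + 1 : ℕ) : R) + 1) * scaledLaguerre (n + 1) (a + 1) +
            scaledLaguerre (n + 2) a := by
          simp only [Nat.cast_succ, C_add, C_1]
          ring

end Rodrigues

lemma hasDerivAt_weight_mul_eval (a : ℝ) (p : ℝ[X]) {x : ℝ} (hx : 0 < x) :
    HasDerivAt (fun y => exp (-y) * y ^ (a + 1) * p.eval y)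
      (exp (-x) * x ^ a * (rodriguesOperator (a + 1) p).eval x) x := by
  have hexp : HasDerivAt (fun y => exp (-y)) (-exp (-x)) x := by
    simpa using (hasDerivAt_neg x).exp
  have hrpow : HasDerivAt (fun y => y ^ (a + 1)) ((a + 1) * x ^ a) x := by
    simpa using hasDerivAt_rpow_const (p := a + 1) (Or.inl hx.ne')
  refine ((hexp.mul hrpow).mul (p.hasDerivAt x)).congr_deriv ?_
  simp only [rodriguesOperator, eval_sub, eval_add, eval_mul, eval_X, eval_C,
    rpow_add_one hx.ne', Pi.mul_apply]
  ring

lemma iteratedDeriv_exp_neg_mul_rpow (n : ℕ) (a : ℝ) {x : ℝ} (hx : 0 < x) :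
    iteratedDeriv n (fun y => exp (-y) * y ^ ((n : ℝ) + a)) x =
      exp (-x) * x ^ a * (scaledLaguerre n a).eval x := by
  induction n generalizing a x with
  | zero => simp [scaledLaguerre]
  | succ n ih =>
    have hn : iteratedDeriv n (fun y => exp (-y) * y ^ (((n + 1 : ℕ) : ℝ) + a)) =ᶠ[nhds x]
        fun y => exp (-y) * y ^ (a + 1) * (scaledLaguerre n (a + 1)).eval y := by
      filter_upwards [Ioi_mem_nhds hx] with y hy
      rw [← ih (a + 1) hy, Nat.cast_succ, add_assoc, add_comm 1 a]
    rw [iteratedDeriv_succ, hn.deriv_eq, (hasDerivAt_weight_mul_eval a _ hx).deriv, scaledLaguerre]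

lemma laguerre_eq_eval_scaledLaguerre (α : ℝ) (n : ℕ) {x : ℝ} (hx : 0 < x) :
    laguerre α n x = (scaledLaguerre n α).eval x / n.factorial := by
  have hrpow : x ^ α ≠ 0 := (rpow_pos_of_pos hx α).ne'
  rw [laguerre, iteratedDeriv_exp_neg_mul_rpow n α hx, rpow_neg hx.le, exp_neg]
  field_simp

/-- The moment functional `p ↦ ∫ x in Ioi 0, x ^ (α - 1) * exp (-x) * p x`, given by its moments
`Γ (α + k)` so that it is linear for every `α`; for `0 < α` it is the integral, by
`integral_weight_mul_eval`. -/
noncomputable def gammaMoment (α : ℝ) : ℝ[X] →ₗ[ℝ] ℝ :=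
  Polynomial.lsum fun k => LinearMap.mulRight ℝ (Gamma (α + k))

lemma gammaMoment_monomial (α : ℝ) (k : ℕ) (c : ℝ) :
    gammaMoment α (monomial k c) = c * Gamma (α + k) := by
  simp [gammaMoment, lsum_apply, sum_monomial_index]

lemma gammaMoment_C (α c : ℝ) : gammaMoment α (C c) = c * Gamma α := by
  simpa using gammaMoment_monomial α 0 c

lemma gammaMoment_C_mul (α c : ℝ) (p : ℝ[X]) :
    gammaMoment α (C c * p) = c * gammaMoment α p := by
  rw [← smul_eq_C_mul, map_smul, smul_eq_mul]

lemma gammaMoment_X_mul (α : ℝ) (p : ℝ[X]) :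
    gammaMoment α (X * p) = gammaMoment (α + 1) p := by
  induction p using Polynomial.induction_on' with
  | add p q hp hq => rw [mul_add, map_add, map_add, hp, hq]
  | monomial k c =>
    rw [X_mul_monomial, gammaMoment_monomial, gammaMoment_monomial, Nat.cast_succ,
      add_right_comm, ← add_assoc]

lemma gammaMoment_rodriguesOperator {α : ℝ} (hα : ∀ k : ℕ, α ≠ -k) (p : ℝ[X]) :
    gammaMoment α (rodriguesOperator α p) = 0 := by
  induction p using Polynomial.induction_on' with
  | add p q hp hq => rw [rodriguesOperator_add, map_add, hp, hq, add_zero]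
  | monomial k c =>
    have hk : α + k ≠ 0 := fun h => hα k (eq_neg_of_add_eq_zero_left h)
    have hX : X * derivative (monomial k c) = monomial k (c * k) := by
      cases k with
      | zero => simp
      | succ k => rw [derivative_monomial_succ, X_mul_monomial, Nat.cast_succ]
    rw [rodriguesOperator, hX, map_sub, map_add, gammaMoment_C_mul, X_mul_monomial]
    simp only [gammaMoment_monomial, Nat.cast_succ, ← add_assoc, Gamma_add_one hk]
    ring

lemma gammaMoment_rodriguesOperator_mul {α : ℝ} (hα : ∀ k : ℕ, α ≠ -k) (p q : ℝ[X]) :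
    gammaMoment α (rodriguesOperator α p * q) = -gammaMoment (α + 1) (p * derivative q) := by
  have h := gammaMoment_rodriguesOperator hα (p * q)
  rw [rodriguesOperator_mul, map_add, gammaMoment_X_mul] at h
  exact eq_neg_of_add_eq_zero_left h

lemma gammaMoment_scaledLaguerre_mul {α : ℝ} (hα : ∀ k : ℕ, α ≠ -k) (n : ℕ) (p : ℝ[X]) :
    gammaMoment α (scaledLaguerre n (α - 1) * p) =
      (-1) ^ n * gammaMoment (α + n) (derivative^[n] p) := by
  induction n generalizing α p with
  | zero => simp [scaledLaguerre]
  | succ n ih =>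
    have hα' : ∀ k : ℕ, α + 1 ≠ -k := fun k h => hα (k + 1) (by push_cast; linarith)
    have ih' := ih hα' (derivative p)
    rw [add_sub_cancel_right] at ih'
    rw [scaledLaguerre, sub_add_cancel, gammaMoment_rodriguesOperator_mul hα, ih',
      ← Function.iterate_succ_apply, pow_succ, Nat.cast_succ, add_assoc, add_comm 1 (n : ℝ)]
    ring

lemma gammaMoment_scaledLaguerre_mul_of_natDegree_le {α : ℝ} (hα : ∀ k : ℕ, α ≠ -k) {n : ℕ}
    {p : ℝ[X]} (hp : p.natDegree ≤ n) :
    gammaMoment α (scaledLaguerre n (α - 1) * p) =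
      (-1) ^ n * (n.factorial * p.coeff n * Gamma (α + n)) := by
  rw [gammaMoment_scaledLaguerre_mul hα, iterate_derivative_eq_C_of_natDegree_le hp, gammaMoment_C]

lemma gammaMoment_scaledLaguerre_succ_sq {α : ℝ} (hα : ∀ k : ℕ, α ≠ -k) (n : ℕ) :
    gammaMoment α (scaledLaguerre (n + 1) α ^ 2) =
      ((n : ℝ) + 1) ^ 2 * gammaMoment α (scaledLaguerre n α ^ 2) +
        (n + 1).factorial * Gamma (α + (n + 1 : ℕ)) := by
  set P := scaledLaguerre n α
  set P' := scaledLaguerre (n + 1) α with hP'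
  set Q := scaledLaguerre (n + 1) (α - 1)
  have hrec : P' = C ((n : ℝ) + 1) * P + Q := by
    simpa only [sub_add_cancel] using scaledLaguerre_succ_add_one n (α - 1)
  have hsq : P' ^ 2 = C (((n : ℝ) + 1) ^ 2) * P ^ 2 + Q * (C ((n : ℝ) + 1) * P + P') := by
    rw [hrec, C_pow]
    ring
  have hCP : (C ((n : ℝ) + 1) * P).natDegree ≤ n :=
    (natDegree_C_mul_le _ _).trans (natDegree_scaledLaguerre_le n α)
  have hdeg : (C ((n : ℝ) + 1) * P + P').natDegree ≤ n + 1 :=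
    natDegree_add_le_of_degree_le (hCP.trans n.le_succ) (natDegree_scaledLaguerre_le (n + 1) α)
  have hcoeff : (C ((n : ℝ) + 1) * P + P').coeff (n + 1) = (-1) ^ (n + 1) := by
    rw [coeff_add, coeff_eq_zero_of_natDegree_lt (hCP.trans_lt n.lt_succ_self), zero_add, hP',
      coeff_scaledLaguerre_self]
  have hsign : (-1 : ℝ) ^ (n + 1) * (-1) ^ (n + 1) = 1 :=
    pow_mul_pow_eq_one (n + 1) (by norm_num)
  rw [hsq, map_add, gammaMoment_C_mul,
    gammaMoment_scaledLaguerre_mul_of_natDegree_le hα hdeg, hcoeff]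
  linear_combination (n + 1).factorial * Gamma (α + (n + 1 : ℕ)) * hsign

lemma gammaMoment_scaledLaguerre_sq {α : ℝ} (hα : ∀ k : ℕ, α ≠ -k) (n : ℕ) :
    gammaMoment α (scaledLaguerre n α ^ 2) =
      (n.factorial : ℝ) ^ 2 *
        ∑ i ∈ Finset.range (n + 1), Gamma ((i : ℝ) + α) / Gamma ((i : ℝ) + 1) := by
  induction n with
  | zero => simpa [scaledLaguerre] using gammaMoment_C α 1
  | succ n ih =>
    rw [gammaMoment_scaledLaguerre_succ_sq hα, ih, Finset.sum_range_succ _ (n + 1),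
      Gamma_nat_eq_factorial (n + 1), add_comm α, Nat.factorial_succ]
    push_cast
    field_simp

lemma eqOn_weight_mul_pow (α : ℝ) (k : ℕ) :
    Set.EqOn (fun x => exp (-x) * x ^ (α + k - 1)) (fun x => x ^ (α - 1) * exp (-x) * x ^ k)
      (Set.Ioi 0) := by
  intro x hx
  simp only [add_sub_right_comm α, rpow_add_natCast (Set.mem_Ioi.1 hx).ne']
  ring

lemma integrableOn_weight_mul_pow {α : ℝ} (hα : 0 < α) (k : ℕ) :
    IntegrableOn (fun x => x ^ (α - 1) * exp (-x) * x ^ k) (Set.Ioi 0) :=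
  (GammaIntegral_convergent (by positivity)).congr_fun (eqOn_weight_mul_pow α k) measurableSet_Ioi

lemma integral_weight_mul_pow {α : ℝ} (hα : 0 < α) (k : ℕ) :
    ∫ x in Set.Ioi (0 : ℝ), x ^ (α - 1) * exp (-x) * x ^ k = Gamma (α + k) := by
  rw [Gamma_eq_integral (by positivity)]
  exact (setIntegral_congr_fun measurableSet_Ioi (eqOn_weight_mul_pow α k)).symm

lemma integral_weight_mul_eval {α : ℝ} (hα : 0 < α) (p : ℝ[X]) :
    ∫ x in Set.Ioi (0 : ℝ), x ^ (α - 1) * exp (-x) * p.eval x = gammaMoment α p := by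
  calc ∫ x in Set.Ioi (0 : ℝ), x ^ (α - 1) * exp (-x) * p.eval x
      = ∫ x in Set.Ioi (0 : ℝ), ∑ k ∈ p.support,
          p.coeff k * (x ^ (α - 1) * exp (-x) * x ^ k) := by
        simp only [eval_eq_sum, Polynomial.sum, Finset.mul_sum, mul_left_comm]
    _ = ∑ k ∈ p.support, p.coeff k * Gamma (α + k) := by
        rw [integral_finsetSum _ fun k _ => (integrableOn_weight_mul_pow hα k).const_mul _]
        simp only [integral_const_mul, integral_weight_mul_pow hα]
    _ = gammaMoment α p := rfl

lemma integral_weight_mul_laguerre_sq {α : ℝ} (hα : 0 < α) (n : ℕ) :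
    ∫ x in Set.Ioi (0 : ℝ), x ^ (α - 1) * exp (-x) * laguerre α n x ^ 2 =
      ∑ i ∈ Finset.range (n + 1), Gamma ((i : ℝ) + α) / Gamma ((i : ℝ) + 1) := by
  have hα' : ∀ k : ℕ, α ≠ -k := fun k => ((neg_nonpos.2 k.cast_nonneg).trans_lt hα).ne'
  calc ∫ x in Set.Ioi (0 : ℝ), x ^ (α - 1) * exp (-x) * laguerre α n x ^ 2
      = ∫ x in Set.Ioi (0 : ℝ), x ^ (α - 1) * exp (-x) * (scaledLaguerre n α ^ 2).eval x /
          (n.factorial : ℝ) ^ 2 := by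
        refine setIntegral_congr_fun measurableSet_Ioi fun x hx => ?_
        simp only [laguerre_eq_eval_scaledLaguerre α n hx, eval_pow, div_pow, mul_div_assoc]
    _ = gammaMoment α (scaledLaguerre n α ^ 2) / (n.factorial : ℝ) ^ 2 := by
        rw [integral_div, integral_weight_mul_eval hα]
    _ = ∑ i ∈ Finset.range (n + 1), Gamma ((i : ℝ) + α) / Gamma ((i : ℝ) + 1) := by
        rw [gammaMoment_scaledLaguerre_sq hα', mul_div_cancel_left₀ _ (by positivity)]

lemma monotone_Gamma_nat_add_div_Gamma_nat_add {a b : ℝ} (hb : 0 < b) (hba : b ≤ a) :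
    Monotone fun i : ℕ => Gamma (i + a) / Gamma (i + b) := by
  have ha : 0 < a := hb.trans_le hba
  refine monotone_nat_of_le_succ fun i => ?_
  have hia : 0 < i + a := by positivity
  have hib : 0 < i + b := by positivity
  calc Gamma (i + a) / Gamma (i + b)
      ≤ (i + a) / (i + b) * (Gamma (i + a) / Gamma (i + b)) :=
        le_mul_of_one_le_left (div_pos (Gamma_pos_of_pos hia) (Gamma_pos_of_pos hib)).le
          ((one_le_div hib).2 (by gcongr))
    _ = Gamma ((i + 1 : ℕ) + a) / Gamma ((i + 1 : ℕ) + b) := by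
        rw [Nat.cast_succ, add_right_comm, add_right_comm _ 1 b, Gamma_add_one hia.ne',
          Gamma_add_one hib.ne', mul_div_mul_comm]

/-- For `α > 0` and `n : ℕ`,
`∫₀^∞ x^{α−1} e^{−x} L_n^{(α)}(x)² dx = Σ_{i=0}^{n} Γ(i+α)/Γ(i+1)`;
in particular, for `α ≥ 1` the integral is at most `(n+1)·Γ(n+α)/Γ(n+1)`. -/
theorem laguerre_square_integral (α : ℝ) (hα : 0 < α) (n : ℕ) :
    (∫ x in Set.Ioi (0 : ℝ), x ^ (α - 1) * Real.exp (-x) * (laguerre α n x) ^ 2)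
      = ∑ i ∈ Finset.range (n + 1), Real.Gamma ((i : ℝ) + α) / Real.Gamma ((i : ℝ) + 1) ∧
    (1 ≤ α →
      (∫ x in Set.Ioi (0 : ℝ), x ^ (α - 1) * Real.exp (-x) * (laguerre α n x) ^ 2)
        ≤ ((n : ℝ) + 1) * Real.Gamma ((n : ℝ) + α) / Real.Gamma ((n : ℝ) + 1)) := by
  refine ⟨integral_weight_mul_laguerre_sq hα n, fun h1 => ?_⟩
  have hmono := monotone_Gamma_nat_add_div_Gamma_nat_add one_pos h1
  calc ∫ x in Set.Ioi (0 : ℝ), x ^ (α - 1) * Real.exp (-x) * (laguerre α n x) ^ 2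
      = ∑ i ∈ Finset.range (n + 1), Gamma ((i : ℝ) + α) / Gamma ((i : ℝ) + 1) :=
        integral_weight_mul_laguerre_sq hα n
    _ ≤ (n + 1) • (Gamma ((n : ℝ) + α) / Gamma ((n : ℝ) + 1)) := by
        simpa only [Finset.card_range] using Finset.sum_le_card_nsmul (Finset.range (n + 1)) _ _
          fun i hi => hmono (Finset.mem_range_succ_iff.1 hi)
    _ = ((n : ℝ) + 1) * Gamma ((n : ℝ) + α) / Gamma ((n : ℝ) + 1) := by
        rw [nsmul_eq_mul, Nat.cast_succ, mul_div_assoc]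
end

section
/- Let p be a prime and h an integer with p ∤ h. Let S = { (a,b;c,d) ∈ SL₂(ℤ) : p ∤ a, p ∤ b, p ∤ c, p ∤ d }, a set stable under left multiplication by Γ₂(p,p). The map S → (ℤ/pℤ)², (a,b;c,d) ↦ (−h·a·d mod p, −h·a·c mod p), is constant on Γ₂(p,p)-orbits and induces a bijection from the set of Γ₂(p,p)-orbits of S onto { (r,s) ∈ (ℤ/pℤ)² : p ∤ r·(r+h)·s }. -/
/-- The set `S` of `SL₂(ℤ)` matrices, none of whose entries is divisible by `p`. -/
def Sset (p : ℕ) : Set (Matrix (Fin 2) (Fin 2) ℤ) :=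
  {g | g.det = 1 ∧ ¬ (p : ℤ) ∣ g 0 0 ∧ ¬ (p : ℤ) ∣ g 0 1 ∧
        ¬ (p : ℤ) ∣ g 1 0 ∧ ¬ (p : ℤ) ∣ g 1 1}

/-- The map `(a,b;c,d) ↦ (−h·a·d mod p, −h·a·c mod p)`. -/
def orbitMap (p : ℕ) (h : ℤ) (g : Matrix (Fin 2) (Fin 2) ℤ) : ZMod p × ZMod p :=
  (((-h * g 0 0 * g 1 1 : ℤ) : ZMod p), ((-h * g 0 0 * g 1 0 : ℤ) : ZMod p))

/-!
Modulo `p` the group `Γ₂(p,p)` becomes the diagonal torus of `SL₂`, with elements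
`diag(t, t⁻¹)`, and `ad`, `ac` are invariant under its left action. If two matrices of determinant
one have the same `ad` and `ac`, then they also have the same `bc = ad - 1`, and these three
products force the two rows of one matrix to be proportional to those of the other, so that
`g₂ * g₁⁻¹` is diagonal modulo `p`. With `r = -h*a*d` and `s = -h*a*c` one has
`r * (r + h) * s = -h³ * (ad) * (bc) * (ac)`, which is nonzero exactly when all four entries are,
so `S` is the full preimage in `SL₂(ℤ)` of the target set. The matrices `(1,b;c,1+bc)` lift every
pair with `s ≠ 0`.
-/

section TorusInvariant

variable {R : Type*} [CommRing R]

/-- The invariants `(ad, ac)` of a matrix `(a,b;c,d)` under left multiplication by the diagonal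
torus of `SL₂(R)`. The map `orbitMap p h` is `-h` times their reduction modulo `p`. -/
def torusInvariant (A : Matrix (Fin 2) (Fin 2) R) : R × R :=
  (A 0 0 * A 1 1, A 0 0 * A 1 0)

theorem torusInvariant_mul_of_isDiag {D : Matrix (Fin 2) (Fin 2) R} (hD : D.IsDiag)
    (hdet : D.det = 1) (A : Matrix (Fin 2) (Fin 2) R) :
    torusInvariant (D * A) = torusInvariant A := by
  obtain ⟨t, rfl⟩ : ∃ t, D = Matrix.diagonal t := ⟨D.diag, hD.diagonal_diag.symm⟩
  have ht : t 0 * t 1 = 1 := by simpa using hdet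
  simp only [torusInvariant, Matrix.diagonal_mul, Prod.mk.injEq]
  constructor
  · linear_combination A 0 0 * A 1 1 * ht
  · linear_combination A 0 0 * A 1 0 * ht

theorem mul_apply_ne_zero_of_isDiag {m ι : Type*} [Fintype m] [DecidableEq m] {D : Matrix m m R}
    (hD : D.IsDiag) (hdet : IsUnit D.det) {A : Matrix m ι R} {i : m} {j : ι} (hA : A i j ≠ 0) :
    (D * A) i j ≠ 0 := by
  obtain ⟨t, rfl⟩ : ∃ t, D = Matrix.diagonal t := ⟨D.diag, hD.diagonal_diag.symm⟩
  have ht : IsUnit (t i) := by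
    rw [Matrix.det_diagonal] at hdet
    exact isUnit_of_dvd_unit (Finset.dvd_prod_of_mem t (Finset.mem_univ i)) hdet
  rwa [Matrix.diagonal_mul, ne_eq, ht.mul_right_eq_zero]

theorem isDiag_mul_adjugate_of_torusInvariant_eq [NoZeroDivisors R]
    {A B : Matrix (Fin 2) (Fin 2) R} (hdet : A.det = B.det)
    (hAB : torusInvariant A = torusInvariant B) (hB₀ : B 0 0 ≠ 0) (hB₁ : B 1 0 ≠ 0) :
    (B * A.adjugate).IsDiag := by
  obtain ⟨had, hac⟩ : A 0 0 * A 1 1 = B 0 0 * B 1 1 ∧ A 0 0 * A 1 0 = B 0 0 * B 1 0 := by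
    simpa only [torusInvariant, Prod.mk.injEq] using hAB
  have hbc : A 0 1 * A 1 0 = B 0 1 * B 1 0 := by
    rw [Matrix.det_fin_two, Matrix.det_fin_two] at hdet
    linear_combination had - hdet
  have hA : A 1 0 ≠ 0 := right_ne_zero_of_mul (hac ▸ mul_ne_zero hB₀ hB₁)
  have upper_row : A 0 0 * B 0 1 = B 0 0 * A 0 1 := by
    refine mul_left_cancel₀ (mul_ne_zero hA hB₁) ?_
    linear_combination B 0 1 * B 1 0 * hac - B 0 0 * B 1 0 * hbc
  have lower_row : B 1 0 * A 1 1 = B 1 1 * A 1 0 := by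
    refine mul_left_cancel₀ hB₀ ?_
    linear_combination A 1 0 * had - A 1 1 * hac
  suffices -(B 0 0 * A 0 1) + B 0 1 * A 0 0 = 0 ∧ B 1 0 * A 1 1 + -(B 1 1 * A 1 0) = 0 by
    simpa [Matrix.IsDiag, Pairwise, Fin.forall_fin_two, Matrix.mul_apply, Matrix.adjugate_fin_two]
  constructor
  · linear_combination upper_row
  · linear_combination lower_row

theorem forall_apply_ne_zero_iff_torusInvariant [NoZeroDivisors R] {A : Matrix (Fin 2) (Fin 2) R}
    (hdet : A.det = 1) :
    (∀ i j, A i j ≠ 0) ↔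
      (torusInvariant A).1 * ((torusInvariant A).1 - 1) * (torusInvariant A).2 ≠ 0 := by
  have hbc : A 0 0 * A 1 1 - 1 = A 0 1 * A 1 0 := by
    rw [Matrix.det_fin_two] at hdet
    linear_combination hdet
  simp only [torusInvariant, hbc, Fin.forall_fin_two, ne_eq, mul_eq_zero]
  tauto

theorem exists_det_eq_one_and_torusInvariant_mapMatrix_eq {S : Type*} [CommRing S] {f : S →+* R}
    (hf : Function.Surjective f) (x : R) {y : R} (hy : IsUnit y) :
    ∃ g : Matrix (Fin 2) (Fin 2) S, g.det = 1 ∧ torusInvariant (f.mapMatrix g) = (x, y) := by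
  obtain ⟨u, rfl⟩ := hy
  obtain ⟨b, hb⟩ := hf ((x - 1) * ↑u⁻¹)
  obtain ⟨c, hc⟩ := hf u
  refine ⟨!![1, b; c, 1 + b * c], by simp, ?_⟩
  simp [torusInvariant, hb, hc]

end TorusInvariant

section Reduction

/-- Entrywise reduction of integer matrices modulo `n`, under which `Γ₂(n,n)` is the preimage of the
diagonal torus. It is a ring homomorphism so that products and adjugates transfer by `map_mul` and
`RingHom.map_adjugate`. -/
abbrev reduction (n : ℕ) : Matrix (Fin 2) (Fin 2) ℤ →+* Matrix (Fin 2) (Fin 2) (ZMod n) :=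
  (Int.castRingHom (ZMod n)).mapMatrix

variable {n p : ℕ} {g γ g₁ g₂ : Matrix (Fin 2) (Fin 2) ℤ}

theorem det_reduction_eq_one (hg : g.det = 1) : (reduction n g).det = 1 := by
  rw [← RingHom.map_det, hg, map_one]

theorem inGamma2_iff_isDiag_reduction :
    InGamma2 n n γ ↔ γ.det = 1 ∧ (reduction n γ).IsDiag := by
  simp [InGamma2, Matrix.IsDiag, Pairwise, Fin.forall_fin_two, ZMod.intCast_zmod_eq_zero_iff_dvd]

theorem mem_Sset_iff_reduction_ne_zero :
    g ∈ Sset n ↔ g.det = 1 ∧ ∀ i j, reduction n g i j ≠ 0 := by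
  simp [Sset, Fin.forall_fin_two, ZMod.intCast_zmod_eq_zero_iff_dvd, and_assoc]

theorem orbitMap_eq_smul_torusInvariant (n : ℕ) (h : ℤ) (g : Matrix (Fin 2) (Fin 2) ℤ) :
    orbitMap n h g = (-h : ZMod n) • torusInvariant (reduction n g) := by
  simp [orbitMap, torusInvariant, mul_assoc]

theorem InGamma2.mul_mem_Sset (hγ : InGamma2 n n γ) (hg : g ∈ Sset n) : γ * g ∈ Sset n := by
  obtain ⟨hγdet, hdiag⟩ := inGamma2_iff_isDiag_reduction.1 hγ
  obtain ⟨hgdet, hne⟩ := mem_Sset_iff_reduction_ne_zero.1 hg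
  refine mem_Sset_iff_reduction_ne_zero.2
    ⟨by rw [Matrix.det_mul, hγdet, hgdet, mul_one], fun i j => ?_⟩
  rw [map_mul]
  exact mul_apply_ne_zero_of_isDiag hdiag (det_reduction_eq_one hγdet ▸ isUnit_one) (hne i j)

theorem InGamma2.orbitMap_mul (hγ : InGamma2 n n γ) (h : ℤ) (g : Matrix (Fin 2) (Fin 2) ℤ) :
    orbitMap n h (γ * g) = orbitMap n h g := by
  obtain ⟨hdet, hdiag⟩ := inGamma2_iff_isDiag_reduction.1 hγ
  rw [orbitMap_eq_smul_torusInvariant, orbitMap_eq_smul_torusInvariant, map_mul,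
    torusInvariant_mul_of_isDiag hdiag (det_reduction_eq_one hdet)]

theorem exists_inGamma2_eq_mul_of_isDiag (hg₁ : g₁.det = 1) (hg₂ : g₂.det = 1)
    (hdiag : (reduction n g₂ * (reduction n g₁).adjugate).IsDiag) :
    ∃ γ, InGamma2 n n γ ∧ g₂ = γ * g₁ := by
  refine ⟨g₂ * g₁.adjugate, inGamma2_iff_isDiag_reduction.2 ⟨?_, ?_⟩, ?_⟩
  · rw [Matrix.det_mul, Matrix.det_adjugate, hg₁, hg₂, one_pow, one_mul]
  · rwa [map_mul, RingHom.map_adjugate]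
  · rw [mul_assoc, Matrix.adjugate_mul, hg₁, one_smul, mul_one]

variable [Fact p.Prime] {h : ℤ}

theorem exists_inGamma2_eq_mul_of_orbitMap_eq (hh : (h : ZMod p) ≠ 0) (hdet₁ : g₁.det = 1)
    (hg₂ : g₂ ∈ Sset p) (heq : orbitMap p h g₁ = orbitMap p h g₂) :
    ∃ γ, InGamma2 p p γ ∧ g₂ = γ * g₁ := by
  obtain ⟨hdet₂, hne₂⟩ := mem_Sset_iff_reduction_ne_zero.1 hg₂
  have hinv : torusInvariant (reduction p g₁) = torusInvariant (reduction p g₂) := by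
    rw [orbitMap_eq_smul_torusInvariant, orbitMap_eq_smul_torusInvariant] at heq
    exact smul_right_injective _ (neg_ne_zero.2 hh) heq
  have hdet : (reduction p g₁).det = (reduction p g₂).det :=
    (det_reduction_eq_one hdet₁).trans (det_reduction_eq_one hdet₂).symm
  exact exists_inGamma2_eq_mul_of_isDiag hdet₁ hdet₂ <|
    isDiag_mul_adjugate_of_torusInvariant_eq hdet hinv (hne₂ 0 0) (hne₂ 1 0)

theorem mem_Sset_iff_orbitMap_ne_zero (hh : (h : ZMod p) ≠ 0) (hg : g.det = 1) :
    g ∈ Sset p ↔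
      (orbitMap p h g).1 * ((orbitMap p h g).1 + h) * (orbitMap p h g).2 ≠ 0 := by
  rw [mem_Sset_iff_reduction_ne_zero,
    forall_apply_ne_zero_iff_torusInvariant (det_reduction_eq_one hg),
    orbitMap_eq_smul_torusInvariant]
  obtain ⟨x, y⟩ := torusInvariant (reduction p g)
  have hscale : (-h * x : ZMod p) * (-h * x + h) * (-h * y) = -h ^ 3 * (x * (x - 1) * y) := by
    ring
  rw [Prod.smul_mk, smul_eq_mul, smul_eq_mul, hscale, and_iff_right hg, ne_eq, ne_eq,
    mul_eq_zero_iff_left (neg_ne_zero.2 (pow_ne_zero 3 hh))]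

theorem exists_det_eq_one_and_orbitMap_eq (hh : (h : ZMod p) ≠ 0) (r : ZMod p) {s : ZMod p}
    (hs : s ≠ 0) : ∃ g : Matrix (Fin 2) (Fin 2) ℤ, g.det = 1 ∧ orbitMap p h g = (r, s) := by
  have hh' : (-h : ZMod p) ≠ 0 := neg_ne_zero.2 hh
  obtain ⟨g, hdet, hg⟩ := exists_det_eq_one_and_torusInvariant_mapMatrix_eq
    (f := Int.castRingHom (ZMod p)) ZMod.intCast_surjective (r / -h) (div_ne_zero hs hh').isUnit
  refine ⟨g, hdet, ?_⟩
  rw [orbitMap_eq_smul_torusInvariant, hg, Prod.smul_mk, smul_eq_mul, smul_eq_mul,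
    mul_div_cancel₀ _ hh', mul_div_cancel₀ _ hh']

theorem orbitMap_image_Sset (hh : (h : ZMod p) ≠ 0) :
    orbitMap p h '' Sset p = {rs : ZMod p × ZMod p | rs.1 * (rs.1 + h) * rs.2 ≠ 0} := by
  apply Set.Subset.antisymm
  · rintro _ ⟨g, hg, rfl⟩
    exact (mem_Sset_iff_orbitMap_ne_zero hh hg.1).1 hg
  · rintro ⟨r, s⟩ hrs
    obtain ⟨g, hdet, hg⟩ := exists_det_eq_one_and_orbitMap_eq hh r (right_ne_zero_of_mul hrs)
    exact ⟨g, (mem_Sset_iff_orbitMap_ne_zero hh hdet).2 (hg ▸ hrs), hg⟩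

end Reduction

/-- Let `p` be a prime and `h` an integer with `p ∤ h`. The set `S` of
`SL₂(ℤ)` matrices with no entry divisible by `p` is stable under left multiplication by
`Γ₂(p,p)`; the map `(a,b;c,d) ↦ (−h·a·d, −h·a·c) (mod p)` is constant on `Γ₂(p,p)`-orbits and
induces a bijection from the orbit set onto `{(r,s) : p ∤ r(r+h)s}`. -/
theorem orbit_parametrization_mod_p (p : ℕ) (hp : p.Prime) (h : ℤ) (hph : ¬ (p : ℤ) ∣ h) :
    -- `S` is stable under left multiplication by `Γ₂(p,p)`
    (∀ γ, InGamma2 p p γ → ∀ g ∈ Sset p, γ * g ∈ Sset p) ∧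
    -- the map is constant on orbits
    (∀ γ, InGamma2 p p γ → ∀ g ∈ Sset p, orbitMap p h (γ * g) = orbitMap p h g) ∧
    -- it separates orbits: two elements of `S` have the same image iff they lie in the
    -- same `Γ₂(p,p)`-orbit
    (∀ g₁ ∈ Sset p, ∀ g₂ ∈ Sset p,
      (orbitMap p h g₁ = orbitMap p h g₂ ↔ ∃ γ, InGamma2 p p γ ∧ g₂ = γ * g₁)) ∧
    -- its image is `{(r,s) : p ∤ r(r+h)s}`
    orbitMap p h '' Sset p = {rs : ZMod p × ZMod p | rs.1 * (rs.1 + (h : ZMod p)) * rs.2 ≠ 0} := by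
  have : Fact p.Prime := ⟨hp⟩
  have hh : (h : ZMod p) ≠ 0 := mt (ZMod.intCast_zmod_eq_zero_iff_dvd h p).1 hph
  refine ⟨fun γ hγ g hg => hγ.mul_mem_Sset hg, fun γ hγ g _ => hγ.orbitMap_mul h g,
    fun g₁ hg₁ g₂ hg₂ => ⟨exists_inGamma2_eq_mul_of_orbitMap_eq hh hg₁.1 hg₂, ?_⟩,
    orbitMap_image_Sset hh⟩
  rintro ⟨γ, hγ, rfl⟩
  exact (hγ.orbitMap_mul h g₁).symm
end
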